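/- Let d ≥ 1, let α = (α_1,…,α_d) be a multi-index with α_j > −1/2 for each j, and let 1 ≤ λ < β. Let k be the smallest integer greater than λ and n the smallest integer greater than β, and set c_λ^k = ∫_0^∞ u^{−λ−1}(e^{−u}−1)^k du (finite). Define the Bessel Laguerre fractional derivative 𝒟_λ^α f(x) = (1/c_λ^k) ∫_0^∞ s^{−λ−1} Σ_{j=0}^k binom(k,j) (−1)^j e^{−(k−j)s} P_{(k−j)s}^α f(x) ds, with the convention P_0^α f = f. Then there exists C > 0, depending only on α, d, β, λ, such that for every bounded measurable f on (0,∞)^d satisfying sup_x |∂^n_t P_t^α f(x)| ≤ A t^{β−n} for all t > 0, one has: sup_x |𝒟_λ^α f(x)| ≤ C (∥f∥_∞ + A), and sup_x |∂^n_t P_t^α(𝒟_λ^α f)(x)| ≤ C (∥f∥_∞ + A) t^{β−λ−n} for all 0 < t < 1. In particular 𝒟_λ^α maps Lip_β(μ_α) boundedly into Lip_{β−λ}(μ_α). -/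

import Mathlib

open MeasureTheory Real Set

noncomputable def besselI (ν z : ℝ) : ℝ :=
  ∑' m : ℕ, (z / 2) ^ (2 * (m : ℝ) + ν) / (Nat.factorial m * Real.Gamma ((m : ℝ) + ν + 1))

/-- The positive orthant `(0,∞)^d`. -/
def posOrthant (d : ℕ) : Set (Fin d → ℝ) := Set.univ.pi fun _ => Set.Ioi 0

/-- The Poisson–Laguerre kernel `p_t^α(x,y)`. -/
noncomputable def plKernel (d : ℕ) (α : Fin d → ℝ) (t : ℝ) (x y : Fin d → ℝ) : ℝ :=
  (1 / (2 * Real.sqrt π)) *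
    ∫ r in Set.Ioo (0 : ℝ) 1,
      (t * Real.exp (t ^ 2 / (4 * Real.log r)) /
          ((1 - r) ^ d * (-Real.log r) ^ ((3 : ℝ) / 2))) *
        (∏ j, (y j / x j) ^ (α j / 2) *
            Real.exp (-((r * x j + y j) / (1 - r)) - α j * Real.log r / 2) *
            besselI (α j) (2 * Real.sqrt (r * x j * y j) / (1 - r))) / r

/-- The Poisson–Laguerre semigroup `P_t^α f`, with the convention `P_0^α f = f`. -/
noncomputable def plP (d : ℕ) (α : Fin d → ℝ) (t : ℝ)
    (f : (Fin d → ℝ) → ℝ) (x : Fin d → ℝ) : ℝ :=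
  if t = 0 then f x else ∫ y in posOrthant d, plKernel d α t x y * f y

/-- The Bessel Laguerre fractional derivative `𝒟_λ^α f` of order `λ`, defined via the
`k`-fold difference `(e^{-s}P_s^α - I)^k`. -/
noncomputable def besselLaguerreFracDerivK (d : ℕ) (α : Fin d → ℝ) (lam : ℝ) (k : ℕ)
    (f : (Fin d → ℝ) → ℝ) (x : Fin d → ℝ) : ℝ :=
  (1 / ∫ u in Set.Ioi (0 : ℝ), u ^ (-lam - 1) * (Real.exp (-u) - 1) ^ k) *
    ∫ s in Set.Ioi (0 : ℝ), s ^ (-lam - 1) *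
      ∑ j ∈ Finset.range (k + 1),
        (k.choose j : ℝ) * (-1) ^ j * Real.exp (-(((k - j : ℕ) : ℝ) * s)) *
          plP d α (((k - j : ℕ) : ℝ) * s) f x

section

open Filter Topology
open scoped ContDiff

/-- Smoothness on the open half-line `(0,∞)`. -/
def SmoothOnPos (u : ℝ → ℝ) : Prop := ∀ t, 0 < t → ContDiffAt ℝ ∞ u t

lemma SmoothOnPos.deriv {u : ℝ → ℝ} (hu : SmoothOnPos u) : SmoothOnPos (deriv u) :=
  fun t ht => (hu t ht).derivWithin (by simp)

lemma SmoothOnPos.iteratedDeriv {u : ℝ → ℝ} (hu : SmoothOnPos u) (i : ℕ) :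
    SmoothOnPos (iteratedDeriv i u) := by
  induction i with
  | zero => simpa using hu
  | succ i ih => rw [iteratedDeriv_succ]; exact ih.deriv

lemma SmoothOnPos.hasDerivAt {u : ℝ → ℝ} (hu : SmoothOnPos u) {t : ℝ} (ht : 0 < t) :
    HasDerivAt u (_root_.deriv u t) t :=
  ((hu t ht).differentiableAt (by simp)).hasDerivAt

lemma SmoothOnPos.hasDerivAt_iteratedDeriv {u : ℝ → ℝ} (hu : SmoothOnPos u) (i : ℕ) {t : ℝ}
    (ht : 0 < t) : HasDerivAt (_root_.iteratedDeriv i u) (_root_.iteratedDeriv (i + 1) u t) t := by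
  rw [iteratedDeriv_succ]; exact (hu.iteratedDeriv i).hasDerivAt ht

lemma SmoothOnPos.contDiffAt {u : ℝ → ℝ} (hu : SmoothOnPos u) (n : ℕ) {t : ℝ} (ht : 0 < t) :
    ContDiffAt ℝ n u t := (hu t ht).of_le (by exact_mod_cast le_top)

/-- Mean value inequality with a variable majorant of the derivative. -/
lemma abs_sub_le_of_abs_deriv_le {w w' G G' : ℝ → ℝ} {a b : ℝ} (hab : a ≤ b)
    (hw : ∀ r ∈ Icc a b, HasDerivAt w (w' r) r) (hG : ∀ r ∈ Icc a b, HasDerivAt G (G' r) r)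
    (hle : ∀ r ∈ Icc a b, |w' r| ≤ G' r) : |w b - w a| ≤ G b - G a := by
  have := image_norm_le_of_norm_deriv_right_le_deriv_boundary' (f := fun r => w r - w a)
    (f' := w') (B := fun r => G r - G a) (B' := G') (a := a) (b := b)
    (fun r hr => ((hw r hr).continuousAt.sub continuousAt_const).continuousWithinAt)
    (fun r hr => ((hw r (Ico_subset_Icc_self hr)).sub_const _).hasDerivWithinAt)
    (by simp)
    (fun r hr => ((hG r hr).continuousAt.sub continuousAt_const).continuousWithinAt)
    (fun r hr => ((hG r (Ico_subset_Icc_self hr)).sub_const _).hasDerivWithinAt)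
    (fun r hr => hle r (Ico_subset_Icc_self hr)) (right_mem_Icc.2 hab)
  simpa using this

lemma hasDerivAt_rpow_div {e r : ℝ} (he : e + 1 ≠ 0) (hr : 0 < r) (B : ℝ) :
    HasDerivAt (fun r : ℝ => B * (r ^ (e + 1) / (e + 1))) (B * r ^ e) r := by
  have h := ((Real.hasDerivAt_rpow_const (p := e + 1) (Or.inl hr.ne')).div_const (e + 1)).const_mul B
  rwa [add_sub_cancel_right, mul_div_cancel_left₀ _ he] at h

lemma SmoothOnPos.fwdDiff {u : ℝ → ℝ} (hu : SmoothOnPos u) {s : ℝ} (hs : 0 ≤ s) :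
    SmoothOnPos (fwdDiff s u) := by
  intro t ht
  have h1 : ContDiffAt ℝ ∞ (fun r => u (r + s)) t := by
    have := hu (t + s) (by positivity)
    exact this.comp t (contDiffAt_id.add contDiffAt_const)
  exact h1.sub (hu t ht)

lemma SmoothOnPos.iteratedDeriv_fwdDiff {u : ℝ → ℝ} (hu : SmoothOnPos u) {s : ℝ} (hs : 0 ≤ s)
    (i : ℕ) {t : ℝ} (ht : 0 < t) :
    _root_.iteratedDeriv i (_root_.fwdDiff s u) t =
      _root_.iteratedDeriv i u (t + s) - _root_.iteratedDeriv i u t := by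
  have h1 : ContDiffAt ℝ i (fun r => u (r + s)) t := by
    have := hu.contDiffAt i (t := t + s) (by positivity)
    exact this.comp t (contDiffAt_id.add contDiffAt_const)
  have : _root_.fwdDiff s u = (fun r => u (r + s)) - u := rfl
  rw [this, iteratedDeriv_sub h1 (hu.contDiffAt i ht), iteratedDeriv_comp_add_const]

lemma abs_fwdDiff_iter_le {k : ℕ} {u : ℝ → ℝ} (hu : SmoothOnPos u) {s t₀ B : ℝ} (hs : 0 ≤ s)
    (ht₀ : 0 < t₀) (hB : ∀ r, t₀ ≤ r → |iteratedDeriv k u r| ≤ B) {t : ℝ} (ht : t₀ ≤ t) :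
    |(fwdDiff s)^[k] u t| ≤ B * s ^ k := by
  induction k generalizing u B with
  | zero => simpa using hB t ht
  | succ k ih =>
    rw [Function.iterate_succ_apply]
    have := ih (hu.fwdDiff hs) (B := B * s) (fun r hr => ?_)
    · calc _ ≤ B * s * s ^ k := this
        _ = _ := by ring
    have hr0 : 0 < r := ht₀.trans_le hr
    rw [hu.iteratedDeriv_fwdDiff hs k hr0]
    have := abs_sub_le_of_abs_deriv_le (G := fun x => B * x) (G' := fun _ => B)
      (le_add_of_nonneg_right hs : r ≤ r + s)
      (fun x hx => hu.hasDerivAt_iteratedDeriv k (hr0.trans_le hx.1))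
      (fun x _ => by simpa using (hasDerivAt_id x).const_mul B)
      (fun x hx => hB x (hr.trans hx.1))
    linarith

lemma abs_fwdDiff_iter_succ_le_rpow {k : ℕ} {u : ℝ → ℝ} (hu : SmoothOnPos u) {s θ B : ℝ}
    (hs : 0 < s) (hθ : -1 < θ) (hθ0 : θ ≤ 0)
    (hB : ∀ r, 0 < r → |iteratedDeriv (k + 1) u r| ≤ B * r ^ θ) {t : ℝ} (ht : 0 < t) :
    |(fwdDiff s)^[k + 1] u t| ≤ B / (θ + 1) * s ^ ((k : ℝ) + 1 + θ) := by
  rw [Function.iterate_succ_apply]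
  have hB0 : 0 ≤ B := by
    have := (abs_nonneg _).trans (hB 1 one_pos)
    simpa using this
  have hθ1 : 0 < θ + 1 := by linarith
  have := abs_fwdDiff_iter_le (hu.fwdDiff hs.le) (B := B / (θ + 1) * s ^ (θ + 1)) hs.le ht
    (k := k) (fun r hr => ?_) le_rfl
  · refine this.trans_eq ?_
    rw [mul_assoc, ← Real.rpow_natCast, ← Real.rpow_add hs]
    congr 2; ring
  have hr0 : 0 < r := ht.trans_le hr
  rw [hu.iteratedDeriv_fwdDiff hs.le k hr0]
  have := abs_sub_le_of_abs_deriv_le (le_add_of_nonneg_right hs.le : r ≤ r + s)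
      (fun x hx => hu.hasDerivAt_iteratedDeriv k (hr0.trans_le hx.1))
      (fun x hx => hasDerivAt_rpow_div hθ1.ne' (hr0.trans_le hx.1) B)
      (fun x hx => hB x (hr0.trans_le hx.1))
  refine this.trans ?_
  have h2 := Real.rpow_add_le_add_rpow hr0.le hs.le hθ1.le (by linarith)
  have : B / (θ + 1) * s ^ (θ + 1) - (B * ((r + s) ^ (θ + 1) / (θ + 1)) -
      B * (r ^ (θ + 1) / (θ + 1))) = B / (θ + 1) *
      (r ^ (θ + 1) + s ^ (θ + 1) - (r + s) ^ (θ + 1)) := by ring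
  have : 0 ≤ B / (θ + 1) *
      (r ^ (θ + 1) + s ^ (θ + 1) - (r + s) ^ (θ + 1)) := by
    apply mul_nonneg (by positivity); linarith
  linarith

/-- The `k`-th forward difference as an alternating sum, indexed backwards. -/
lemma fwdDiff_iter_eq_alternating_sum (v : ℝ → ℝ) (k : ℕ) (s t : ℝ) :
    (fwdDiff s)^[k] v t = ∑ j ∈ Finset.range (k + 1),
      (k.choose j : ℝ) * (-1) ^ j * v (t + ((k - j : ℕ) : ℝ) * s) := by
  rw [fwdDiff_iter_eq_sum_shift, ← Finset.sum_range_reflect]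
  refine Finset.sum_congr rfl fun j hj => ?_
  have hj' : j ≤ k := Nat.lt_succ_iff.1 (Finset.mem_range.1 hj)
  have e : k + 1 - 1 - j = k - j := by omega
  rw [e, Nat.choose_symm hj', Nat.sub_sub_self hj']
  simp only [nsmul_eq_mul, zsmul_eq_mul]
  push_cast
  ring

lemma iteratedDeriv_exp_neg_mul_bound {k : ℕ} {u : ℝ → ℝ} (hu : SmoothOnPos u) {t B : ℝ}
    (ht : 0 < t) (hB : ∀ i ≤ k, |iteratedDeriv i u t| ≤ B) :
    |iteratedDeriv k (fun r => Real.exp (-r) * u r) t| ≤ 2 ^ k * B * Real.exp (-t) := by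
  induction k generalizing u B with
  | zero =>
    have := hB 0 le_rfl
    simp only [iteratedDeriv_zero, abs_mul, abs_of_pos (Real.exp_pos _)] at this ⊢
    nlinarith [Real.exp_pos (-t)]
  | succ k ih =>
    have hd : SmoothOnPos (deriv u - u) := fun r hr => (hu.deriv r hr).sub (hu r hr)
    rw [iteratedDeriv_succ']
    have he : _root_.deriv (fun r => Real.exp (-r) * u r) =ᶠ[𝓝 t]
        fun r => Real.exp (-r) * (deriv u - u) r := by
      filter_upwards [lt_mem_nhds ht] with r hr
      have h1 : HasDerivAt (fun r : ℝ => Real.exp (-r)) (-Real.exp (-r)) r := by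
        simpa using (hasDerivAt_neg r).exp
      rw [(h1.fun_mul (hu.hasDerivAt hr)).deriv]
      simp only [Pi.sub_apply]; ring
    rw [he.iteratedDeriv_eq]
    have := ih hd (B := 2 * B) (fun i hi => ?_)
    · calc _ ≤ _ := this
        _ = _ := by ring
    rw [iteratedDeriv_sub (hu.deriv.contDiffAt i ht) (hu.contDiffAt i ht),
      ← iteratedDeriv_succ']
    have h1 := hB (i + 1) (by omega)
    have h2 := hB i (by omega)
    have := abs_sub (iteratedDeriv (i + 1) u t) (iteratedDeriv i u t)
    linarith

lemma SmoothOnPos.exp_neg_mul {u : ℝ → ℝ} (hu : SmoothOnPos u) :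
    SmoothOnPos (fun r => Real.exp (-r) * u r) := fun t ht =>
  (Real.contDiff_exp.comp contDiff_neg).contDiffAt.mul (hu t ht)

lemma abs_le_rpow_of_abs_deriv_le_rpow {w w' : ℝ → ℝ} {B e e' : ℝ}
    (hw : ∀ r, 0 < r → HasDerivAt w (w' r) r) (hB : ∀ r, 0 < r → r ≤ 1 → |w' r| ≤ B * r ^ e)
    (he : e + 1 ≠ 0) (he' : e' ≤ 0) (hee' : e' ≤ e + 1) {t : ℝ} (ht : 0 < t) (ht1 : t ≤ 1) :
    |w t| ≤ (|w 1| + B / |e + 1|) * t ^ e' := by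
  have hB0 : 0 ≤ B := by
    have := (abs_nonneg _).trans (hB 1 one_pos le_rfl)
    simpa using this
  have h := abs_sub_le_of_abs_deriv_le ht1 (fun x hx => hw x (ht.trans_le hx.1))
    (fun x hx => hasDerivAt_rpow_div he (ht.trans_le hx.1) B)
    (fun x hx => hB x (ht.trans_le hx.1) hx.2)
  have h1 : 1 ≤ t ^ e' := Real.one_le_rpow_of_pos_of_le_one_of_nonpos ht ht1 he'
  have h2 : t ^ (e + 1) ≤ t ^ e' := Real.rpow_le_rpow_of_exponent_ge ht ht1 hee'
  have h3 : B * (1 ^ (e + 1) / (e + 1)) - B * (t ^ (e + 1) / (e + 1)) ≤ B / |e + 1| * t ^ e' := by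
    rw [Real.one_rpow]
    have hp : 0 < t ^ (e + 1) := Real.rpow_pos_of_pos ht _
    have key : B * (1 / (e + 1)) - B * (t ^ (e + 1) / (e + 1)) =
      B / |e + 1| * ((1 - t ^ (e + 1)) * (|e + 1| / (e + 1))) := by
      have : |e + 1| ≠ 0 := abs_ne_zero.2 he
      field_simp
    rw [key]
    refine mul_le_mul_of_nonneg_left ?_ (by positivity)
    rcases lt_or_gt_of_ne he with h | h
    · rw [abs_of_neg h, neg_div, div_self he]; linarith
    · rw [abs_of_pos h, div_self he]; linarith
  have h4 : |w t| ≤ |w 1| + |w 1 - w t| := by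
    have := abs_sub_abs_le_abs_sub (w t) (w 1)
    rw [abs_sub_comm] at this; linarith
  have h5 : |w 1| ≤ |w 1| * t ^ e' := le_mul_of_one_le_right (abs_nonneg _) h1
  calc |w t| ≤ |w 1| * t ^ e' + B / |e + 1| * t ^ e' := by linarith
    _ = _ := by ring

/-- The real-variable hypotheses satisfied by `u = P_· f (x)` when `f` is bounded by `M` and is
Lipschitz of order `β` with constant `A`. -/
structure LipschitzOrbit (c : ℕ → ℝ) (β : ℝ) (n : ℕ) (u : ℝ → ℝ) (M A : ℝ) : Prop where
  nonneg_bound : 0 ≤ M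
  nonneg_const : 0 ≤ A
  smooth : SmoothOnPos u
  deriv_bound : ∀ i t, 0 < t → |iteratedDeriv i u t| ≤ c i * M * t ^ (-(i : ℝ))
  lipschitz_bound : ∀ t, 0 < t → |iteratedDeriv n u t| ≤ A * t ^ (β - n)

lemma LipschitzOrbit.exists_iteratedDeriv_le {c : ℕ → ℝ} (hc : ∀ i, 0 ≤ c i) {β γ : ℝ} {n k : ℕ}
    (hkn : k ≤ n) (hγk : γ < k) (hkγ : (k : ℝ) - 1 < γ) (hγβ : γ ≤ β) :
    ∀ m ≤ n, ∃ C ≥ 0, ∀ u M A, LipschitzOrbit c β n u M A → ∀ t, 0 < t → t ≤ 1 →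
      |iteratedDeriv m u t| ≤ C * (M + A) * t ^ (min (γ - m) (γ - k)) := by
  intro m hm
  induction hm using Nat.decreasingInduction with
  | self =>
    refine ⟨1, zero_le_one, fun u M A h t ht ht1 => (h.lipschitz_bound t ht).trans ?_⟩
    have hn : (k : ℝ) ≤ n := by exact_mod_cast hkn
    have h1 : t ^ (β - n) ≤ t ^ (min (γ - n) (γ - k)) :=
      Real.rpow_le_rpow_of_exponent_ge ht ht1 ((min_le_left _ _).trans (by linarith))
    have := h.nonneg_bound
    have := h.nonneg_const
    gcongr
    linarith
  | of_succ m hm ih =>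
    obtain ⟨C, hC0, hC⟩ := ih
    set e := min (γ - ((m + 1 : ℕ) : ℝ)) (γ - k) with he
    have hne : e + 1 ≠ 0 := by
      rw [he]
      push_cast
      rcases le_or_gt k m with h | h
      · have : (k : ℝ) ≤ m := by exact_mod_cast h
        rw [min_eq_left (by linarith)]
        intro h'; linarith
      · have : (m : ℝ) + 1 ≤ k := by exact_mod_cast h
        rw [min_eq_right (by linarith)]
        intro h'; linarith
    have hle : min (γ - (m : ℝ)) (γ - k) ≤ e + 1 := by
      rw [he]
      push_cast
      rcases le_total (γ - ((m : ℝ) + 1)) (γ - k) with h | h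
      · rw [min_eq_left h]; exact (min_le_left _ _).trans (by linarith)
      · rw [min_eq_right h]; exact (min_le_right _ _).trans (by linarith)
    have hle0 : min (γ - (m : ℝ)) (γ - k) ≤ 0 := (min_le_right _ _).trans (by linarith)
    refine ⟨c m + C / |e + 1|, add_nonneg (hc m) (by positivity), fun u M A h t ht ht1 => ?_⟩
    have h0 := abs_le_rpow_of_abs_deriv_le_rpow (fun r hr => h.smooth.hasDerivAt_iteratedDeriv m hr)
      (fun r hr hr1 => hC u M A h r hr hr1) hne hle0 hle ht ht1
    refine h0.trans ?_
    have h1 := h.deriv_bound m 1 one_pos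
    rw [Real.one_rpow, mul_one] at h1
    have hM := h.nonneg_bound
    have hA := h.nonneg_const
    gcongr
    have : c m * M ≤ c m * (M + A) := mul_le_mul_of_nonneg_left (by linarith) (hc m)
    have e2 : C * (M + A) / |e + 1| = C / |e + 1| * (M + A) := by ring
    rw [e2]; linarith

lemma LipschitzOrbit.exists_uniform_iteratedDeriv_le {c : ℕ → ℝ} (hc : ∀ i, 0 ≤ c i) {β γ : ℝ}
    {n k : ℕ} (hkn : k ≤ n) (hγk : γ < k) (hkγ : (k : ℝ) - 1 < γ) (hγβ : γ ≤ β) :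
    ∃ C ≥ 0, ∀ u M A, LipschitzOrbit c β n u M A → ∀ m ≤ k, ∀ t, 0 < t → t ≤ 1 →
      |iteratedDeriv m u t| ≤ C * (M + A) * t ^ (γ - k) := by
  have H : ∀ m, ∃ C ≥ 0, m ≤ k → ∀ u M A, LipschitzOrbit c β n u M A → ∀ t, 0 < t → t ≤ 1 →
      |iteratedDeriv m u t| ≤ C * (M + A) * t ^ (γ - k) := by
    intro m
    by_cases hm : m ≤ k
    · obtain ⟨C, hC, h⟩ := LipschitzOrbit.exists_iteratedDeriv_le hc hkn hγk hkγ hγβ m (hm.trans hkn)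
      refine ⟨C, hC, fun _ => ?_⟩
      have : (m : ℝ) ≤ k := by exact_mod_cast hm
      rwa [min_eq_right (by linarith)] at h
    · exact ⟨0, le_rfl, fun h => absurd h hm⟩
  choose C hC0 hC using H
  refine ⟨∑ m ∈ Finset.range (k + 1), C m, Finset.sum_nonneg fun m _ => hC0 m,
    fun u M A h m hm t ht ht1 => (hC m hm u M A h t ht ht1).trans ?_⟩
  have hM := h.nonneg_bound
  have hA := h.nonneg_const
  gcongr
  exact Finset.single_le_sum (f := C) (fun i _ => hC0 i) (Finset.mem_range.2 (by omega))

lemma LipschitzOrbit.exists_iteratedDeriv_exp_neg_mul_le {c : ℕ → ℝ} (hc : ∀ i, 0 ≤ c i) {β γ : ℝ}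
    {n k : ℕ} (hkn : k ≤ n) (hγk : γ < k) (hkγ : (k : ℝ) - 1 < γ) (hγβ : γ ≤ β) :
    ∃ C ≥ 0, ∀ u M A, LipschitzOrbit c β n u M A → ∀ t, 0 < t →
      |iteratedDeriv k (fun r => Real.exp (-r) * u r) t| ≤ C * (M + A) * t ^ (γ - k) := by
  obtain ⟨C, hC0, hC⟩ := LipschitzOrbit.exists_uniform_iteratedDeriv_le hc hkn hγk hkγ hγβ
  set S := ∑ m ∈ Finset.range (k + 1), c m with hS
  have hS0 : 0 ≤ S := Finset.sum_nonneg fun m _ => hc m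
  refine ⟨2 ^ k * (C + S), by positivity, fun u M A h t ht => ?_⟩
  have hM := h.nonneg_bound
  have hA := h.nonneg_const
  rcases le_or_gt t 1 with ht1 | ht1
  · refine (iteratedDeriv_exp_neg_mul_bound h.smooth ht
      (fun i hi => hC u M A h i hi t ht ht1)).trans ?_
    have h1 : Real.exp (-t) ≤ 1 := Real.exp_le_one_iff.2 (by linarith)
    calc 2 ^ k * (C * (M + A) * t ^ (γ - k)) * Real.exp (-t)
        ≤ 2 ^ k * (C * (M + A) * t ^ (γ - k)) * 1 := by gcongr
      _ ≤ 2 ^ k * ((C + S) * (M + A) * t ^ (γ - k)) * 1 := by gcongr; linarith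
      _ = _ := by ring
  · refine (iteratedDeriv_exp_neg_mul_bound h.smooth ht (B := S * (M + A))
      (fun i hi => (h.deriv_bound i t ht).trans ?_)).trans ?_
    · have h1 : t ^ (-(i : ℝ)) ≤ 1 := Real.rpow_le_one_of_one_le_of_nonpos ht1.le (by simp)
      have h2 : c i ≤ S := Finset.single_le_sum (f := c) (fun i _ => hc i)
        (Finset.mem_range.2 (by omega))
      have := hc i
      calc c i * M * t ^ (-(i : ℝ)) ≤ c i * M * 1 := by gcongr
        _ ≤ S * (M + A) * 1 := by gcongr; linarith
        _ = _ := by ring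
    · have h1 : Real.exp (-t) ≤ t ^ (γ - k) := by
        calc Real.exp (-t) = (Real.exp t)⁻¹ := Real.exp_neg t
          _ ≤ t⁻¹ := by
            gcongr
            linarith [Real.add_one_le_exp t]
          _ = t ^ (-1 : ℝ) := (Real.rpow_neg_one t).symm
          _ ≤ _ := Real.rpow_le_rpow_of_exponent_le ht1.le (by linarith)
      calc 2 ^ k * (S * (M + A)) * Real.exp (-t) ≤ 2 ^ k * (S * (M + A)) * t ^ (γ - k) := by gcongr
        _ ≤ 2 ^ k * ((C + S) * (M + A)) * t ^ (γ - k) := by gcongr; linarith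
        _ = _ := by ring

/-- The `k`-th difference `(e^{-s}P_s - I)^k` along an orbit `u`. -/
noncomputable def orbitDiff (k : ℕ) (u : ℝ → ℝ) (s : ℝ) : ℝ :=
  ∑ j ∈ Finset.range (k + 1),
    (k.choose j : ℝ) * (-1) ^ j * Real.exp (-(((k - j : ℕ) : ℝ) * s)) * u (((k - j : ℕ) : ℝ) * s)

lemma orbitDiff_shift (k : ℕ) (u : ℝ → ℝ) (s t : ℝ) :
    orbitDiff k (fun r => u (t + r)) s =
      Real.exp t * (fwdDiff s)^[k] (fun r => Real.exp (-r) * u r) t := by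
  rw [fwdDiff_iter_eq_alternating_sum, orbitDiff, Finset.mul_sum]
  refine Finset.sum_congr rfl fun j _ => ?_
  have : Real.exp (-(((k - j : ℕ) : ℝ) * s)) =
      Real.exp t * Real.exp (-(t + ((k - j : ℕ) : ℝ) * s)) := by
    rw [← Real.exp_add]; congr 1; ring
  rw [this]; ring

lemma abs_orbitDiff_le {k : ℕ} {u : ℝ → ℝ} {s B : ℝ} (hs : 0 ≤ s)
    (hB : ∀ j : ℕ, |u (j * s)| ≤ B) : |orbitDiff k u s| ≤ 2 ^ k * B := by
  have hB0 := (abs_nonneg _).trans (hB 0)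
  calc |orbitDiff k u s| ≤ ∑ j ∈ Finset.range (k + 1), (k.choose j : ℝ) * B := by
        refine (Finset.abs_sum_le_sum_abs _ _).trans (Finset.sum_le_sum fun j _ => ?_)
        rw [abs_mul, abs_mul, abs_mul, abs_pow, abs_neg, abs_one, one_pow, mul_one, Nat.abs_cast,
          abs_of_pos (Real.exp_pos _), mul_assoc]
        have h1 : Real.exp (-(((k - j : ℕ) : ℝ) * s)) ≤ 1 := Real.exp_le_one_iff.2
          (by have : 0 ≤ ((k - j : ℕ) : ℝ) * s := by positivity
              linarith)
        calc _ ≤ (k.choose j : ℝ) * (1 * B) := by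
              gcongr
              exact hB _
          _ = _ := by ring
    _ = _ := by
      rw [← Finset.sum_mul]
      congr 1
      exact_mod_cast Nat.sum_range_choose k

lemma SmoothOnPos.exists_tendsto {u : ℝ → ℝ} (hu : SmoothOnPos u) {θ B : ℝ} (hθ : -1 < θ)
    (hB : ∀ t, 0 < t → t ≤ 1 → |_root_.deriv u t| ≤ B * t ^ θ) :
    ∃ L, Tendsto u (𝓝[>] 0) (𝓝 L) := by
  have hθ1 : 0 < θ + 1 := by linarith
  set G : ℝ → ℝ := fun r => B * (r ^ (θ + 1) / (θ + 1)) with hG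
  have hGt : Tendsto G (𝓝[>] 0) (𝓝 (G 0)) := by
    have : Continuous G := by
      have := Real.continuous_rpow_const hθ1.le
      fun_prop
    exact (this.tendsto 0).mono_left nhdsWithin_le_nhds
  have key : ∀ a b, 0 < a → a ≤ 1 → 0 < b → b ≤ 1 → dist (u a) (u b) ≤ dist (G a) (G b) := by
    have aux : ∀ a b, 0 < a → a ≤ b → b ≤ 1 → dist (u a) (u b) ≤ dist (G a) (G b) := by
      intro a b ha hab hb
      have := abs_sub_le_of_abs_deriv_le hab (fun x hx => hu.hasDerivAt (ha.trans_le hx.1))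
        (fun x hx => hasDerivAt_rpow_div hθ1.ne' (ha.trans_le hx.1) B)
        (fun x hx => hB x (ha.trans_le hx.1) (hx.2.trans hb))
      rw [dist_comm, dist_comm (G a), Real.dist_eq, Real.dist_eq]
      exact this.trans (le_abs_self _)
    intro a b ha ha1 hb hb1
    rcases le_total a b with h | h
    · exact aux a b ha h hb1
    · rw [dist_comm, dist_comm (G a)]; exact aux b a hb h ha1
  have hc : Cauchy (map u (𝓝[>] (0 : ℝ))) := by
    rw [Metric.cauchy_iff]
    refine ⟨inferInstance, fun ε hε => ?_⟩
    have h1 : ∀ᶠ r in 𝓝[>] (0 : ℝ), dist (G r) (G 0) < ε / 2 ∧ 0 < r ∧ r ≤ 1 :=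
      (hGt.eventually (Metric.ball_mem_nhds _ (by positivity))).and
        (Ioc_mem_nhdsGT one_pos)
    refine ⟨u '' {r | dist (G r) (G 0) < ε / 2 ∧ 0 < r ∧ r ≤ 1}, image_mem_map h1, ?_⟩
    rintro _ ⟨a, ⟨ha, ha0, ha1⟩, rfl⟩ _ ⟨b, ⟨hb, hb0, hb1⟩, rfl⟩
    have h2 := key a b ha0 ha1 hb0 hb1
    have h3 := dist_triangle_right (G a) (G b) (G 0)
    linarith
  obtain ⟨L, hL⟩ := CompleteSpace.complete hc
  exact ⟨L, hL⟩

lemma LipschitzOrbit.exists_orbitDiff_le {c : ℕ → ℝ} (hc : ∀ i, 0 ≤ c i) {β γ : ℝ}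
    {n k : ℕ} (hk : 1 ≤ k) (hkn : k ≤ n) (hγk : γ < k) (hkγ : (k : ℝ) - 1 < γ) (hγβ : γ ≤ β) :
    ∃ C ≥ 0, ∀ u M A, LipschitzOrbit c β n u M A → ∃ L, Tendsto u (𝓝[>] 0) (𝓝 L) ∧
      ∀ s, 0 < s → |orbitDiff k u s + (-1) ^ k * (L - u 0)| ≤ C * (M + A) * s ^ γ := by
  obtain ⟨C₁, -, hC₁⟩ := LipschitzOrbit.exists_uniform_iteratedDeriv_le hc hkn hγk hkγ hγβ
  obtain ⟨C, hC0, hC⟩ := LipschitzOrbit.exists_iteratedDeriv_exp_neg_mul_le hc hkn hγk hkγ hγβ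
  have hθ1 : 0 < γ - k + 1 := by linarith
  refine ⟨C / (γ - k + 1), by positivity, fun u M A h => ?_⟩
  obtain ⟨L, hL⟩ := h.smooth.exists_tendsto (θ := γ - k) (by linarith)
    (fun t ht ht1 => by simpa using hC₁ u M A h 1 hk t ht ht1)
  refine ⟨L, hL, fun s hs => ?_⟩
  have hlim : Tendsto (fun t => (fwdDiff s)^[k] (fun r => Real.exp (-r) * u r) t) (𝓝[>] 0)
      (𝓝 (orbitDiff k u s + (-1) ^ k * (L - u 0))) := by
    have e : orbitDiff k u s + (-1) ^ k * (L - u 0) = ∑ j ∈ Finset.range (k + 1),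
        (k.choose j : ℝ) * (-1) ^ j * (Real.exp (-(((k - j : ℕ) : ℝ) * s)) *
          u (((k - j : ℕ) : ℝ) * s) + if j = k then L - u 0 else 0) := by
      simp only [mul_add, Finset.sum_add_distrib, orbitDiff, mul_ite, mul_zero,
        Finset.sum_ite_eq', Finset.mem_range]
      rw [if_pos (by omega)]
      simp [mul_assoc]
    simp only [fwdDiff_iter_eq_alternating_sum]
    rw [e]
    refine tendsto_finsetSum _ fun j hj => ?_
    refine Tendsto.const_mul _ ?_
    have hj' : j ≤ k := Nat.lt_succ_iff.1 (Finset.mem_range.1 hj)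
    by_cases hjk : j = k
    · subst hjk
      have h1 : Tendsto (fun t : ℝ => Real.exp (-t)) (𝓝[>] 0) (𝓝 1) := by
        have : Continuous fun t : ℝ => Real.exp (-t) := by fun_prop
        simpa using (this.tendsto 0).mono_left nhdsWithin_le_nhds
      simpa using h1.mul hL
    · have hpos : 0 < ((k - j : ℕ) : ℝ) * s :=
        mul_pos (by exact_mod_cast (by omega : 0 < k - j)) hs
      rw [if_neg hjk, add_zero]
      have h1 : ContinuousAt (fun r => Real.exp (-r) * u r) (((k - j : ℕ) : ℝ) * s) :=
        (h.smooth.exp_neg_mul.hasDerivAt hpos).continuousAt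
      have h2 : Tendsto (fun t : ℝ => t + ((k - j : ℕ) : ℝ) * s) (𝓝[>] 0)
          (𝓝 (((k - j : ℕ) : ℝ) * s)) := by
        have : Continuous fun t : ℝ => t + ((k - j : ℕ) : ℝ) * s := by fun_prop
        simpa using (this.tendsto 0).mono_left nhdsWithin_le_nhds
      exact h1.tendsto.comp h2
  refine le_of_tendsto hlim.abs ?_
  filter_upwards [self_mem_nhdsWithin] with t ht
  obtain ⟨k, rfl⟩ : ∃ k', k = k' + 1 := ⟨k - 1, by omega⟩
  have := abs_fwdDiff_iter_succ_le_rpow h.smooth.exp_neg_mul hs (θ := γ - ((k + 1 : ℕ) : ℝ))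
    (by push_cast at *; linarith) (by linarith) (fun r hr => hC u M A h r hr) ht
  refine this.trans_eq ?_
  have e1 : (k : ℝ) + 1 + (γ - ((k + 1 : ℕ) : ℝ)) = γ := by push_cast; ring
  rw [e1]; ring

lemma abs_orbitDiff_iteratedDeriv_le {u : ℝ → ℝ} (hu : SmoothOnPos u) {n k : ℕ} {A K σ : ℝ}
    (hA : 0 ≤ A) (hK : 0 ≤ K) (hσ : σ ≤ 0)
    (h : ∀ i ≤ k, ∀ r, 0 < r → |iteratedDeriv (n + i) u r| ≤ K * A * r ^ (σ - i))
    {s t : ℝ} (hs : 0 < s) (ht : 0 < t) (ht1 : t ≤ 1) :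
    |orbitDiff k (fun r => iteratedDeriv n u (t + r)) s| ≤
      2 ^ k * (K * A * t ^ (σ - k)) * s ^ k := by
  have hun := hu.iteratedDeriv n
  rw [orbitDiff_shift, abs_mul, abs_of_pos (Real.exp_pos _)]
  have := abs_fwdDiff_iter_le hun.exp_neg_mul hs.le ht (k := k)
    (B := 2 ^ k * (K * A * t ^ (σ - k)) * Real.exp (-t)) (fun r hr => ?_) le_rfl
  · calc _ ≤ Real.exp t * (2 ^ k * (K * A * t ^ (σ - k)) * Real.exp (-t) * s ^ k) := by gcongr
      _ = (Real.exp t * Real.exp (-t)) * (2 ^ k * (K * A * t ^ (σ - k)) * s ^ k) := by ring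
      _ = _ := by rw [← Real.exp_add]; simp
  have hr0 := ht.trans_le hr
  refine (iteratedDeriv_exp_neg_mul_bound hun hr0 (B := K * A * t ^ (σ - k))
    (fun i hi => ?_)).trans ?_
  · have e : iteratedDeriv i (iteratedDeriv n u) = iteratedDeriv (n + i) u := by
      simp only [iteratedDeriv_eq_iterate]
      rw [add_comm, Function.iterate_add_apply]
    rw [e]
    refine (h i hi r hr0).trans ?_
    have hik : (i : ℝ) ≤ k := by exact_mod_cast hi
    have h1 : r ^ (σ - i) ≤ t ^ (σ - i) := Real.rpow_le_rpow_of_nonpos ht hr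
      (by have : (0 : ℝ) ≤ i := by positivity
          linarith)
    have h2 : t ^ (σ - i) ≤ t ^ (σ - k) := Real.rpow_le_rpow_of_exponent_ge ht ht1 (by linarith)
    gcongr
    exact h1.trans h2
  · gcongr

/-- The kernel `t^a τ^{-b} e^{-t²/(4τ)}`; the family is stable under differentiation in `t`. -/
noncomputable def invGaussKernel (a b t τ : ℝ) : ℝ := t ^ a * (τ ^ (-b) * exp (-(t ^ 2 / (4 * τ))))

lemma invGaussKernel_nonneg {a b t τ : ℝ} (ht : 0 < t) (hτ : 0 < τ) : 0 ≤ invGaussKernel a b t τ := by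
  unfold invGaussKernel; positivity

lemma measurable_invGaussKernel_uncurry (a b : ℝ) :
    Measurable (Function.uncurry (invGaussKernel a b)) := by
  unfold invGaussKernel Function.uncurry; fun_prop

lemma measurable_invGaussKernel (a b t : ℝ) : Measurable (invGaussKernel a b t) := by
  unfold invGaussKernel; fun_prop

lemma rpow_neg_one_substitution {b t x : ℝ} (hx : x ∈ Ioi (0 : ℝ)) :
    (|(-1 : ℝ)| * x ^ ((-1 : ℝ) - 1)) • ((x ^ (-1 : ℝ)) ^ (b - 1 - 1) *
      exp (-(t ^ 2 / 4 * x ^ (-1 : ℝ)))) = x ^ (-b) * exp (-(t ^ 2 / (4 * x))) := by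
  have hx : 0 < x := hx
  rw [abs_neg, abs_one, one_mul, smul_eq_mul, ← mul_assoc, ← rpow_mul hx.le, ← rpow_add hx,
    rpow_neg_one x]
  congr 2
  · ring
  · congr 1; field_simp

lemma integrableOn_invGaussKernel (a : ℝ) {b t : ℝ} (hb : 1 < b) (ht : 0 < t) :
    IntegrableOn (invGaussKernel a b t) (Ioi 0) := by
  refine Integrable.const_mul (c := t ^ a) ?_
  have h := integrableOn_rpow_mul_exp_neg_mul_rpow (p := 1) (s := b - 1 - 1) (b := t ^ 2 / 4)
    (by linarith) one_pos (by positivity)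
  simp only [rpow_one, neg_mul] at h
  rw [← integrableOn_Ioi_comp_rpow_iff _ (p := -1) (by norm_num)] at h
  exact h.congr_fun (fun x hx => rpow_neg_one_substitution hx) measurableSet_Ioi

lemma integral_invGaussKernel (a : ℝ) {b t : ℝ} (hb : 1 < b) (ht : 0 < t) :
    ∫ τ in Ioi 0, invGaussKernel a b t τ = 4 ^ (b - 1) * Gamma (b - 1) * t ^ (a - 2 * b + 2) := by
  unfold invGaussKernel
  rw [integral_const_mul]
  have h := Real.integral_rpow_mul_exp_neg_mul_Ioi (a := b - 1) (r := t ^ 2 / 4) (by linarith)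
    (by positivity)
  rw [← integral_comp_rpow_Ioi _ (p := -1) (by norm_num)] at h
  rw [setIntegral_congr_fun measurableSet_Ioi
    (fun x (hx : x ∈ Ioi 0) => rpow_neg_one_substitution (b := b) (t := t) hx)] at h
  rw [h, one_div_div, div_rpow (by norm_num) (by positivity), ← rpow_natCast, ← rpow_mul ht.le,
    show a - 2 * b + 2 = a - ((2 : ℕ) : ℝ) * (b - 1) by push_cast; ring, rpow_sub ht]
  ring

lemma hasDerivAt_invGaussKernel (a b : ℝ) {t τ : ℝ} (ht : 0 < t) (hτ : 0 < τ) :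
    HasDerivAt (fun t => invGaussKernel a b t τ)
      (a * invGaussKernel (a - 1) b t τ - 1 / 2 * invGaussKernel (a + 1) (b + 1) t τ) t := by
  unfold invGaussKernel
  have h1 := Real.hasDerivAt_rpow_const (p := a) (Or.inl ht.ne')
  have h2 : HasDerivAt (fun t : ℝ => τ ^ (-b) * exp (-(t ^ 2 / (4 * τ))))
      (τ ^ (-b) * (exp (-(t ^ 2 / (4 * τ))) * (-(2 * t / (4 * τ))))) t := by
    have := ((hasDerivAt_pow 2 t).div_const (4 * τ)).neg.exp.const_mul (τ ^ (-b))
    simpa using this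
  refine (h1.fun_mul h2).congr_deriv ?_
  rw [rpow_add ht, rpow_one, neg_add, rpow_add hτ, rpow_neg_one]
  field_simp
  ring

lemma rpow_le_rpow_add_rpow {a x y t : ℝ} (hx : 0 < x) (hxt : x ≤ t) (hty : t ≤ y) :
    t ^ a ≤ x ^ a + y ^ a := by
  have ht := hx.trans_le hxt
  rcases le_total 0 a with h | h
  · have := rpow_le_rpow ht.le hty h
    have := rpow_nonneg hx.le a
    linarith
  · have := rpow_le_rpow_of_nonpos hx hxt h
    have := rpow_nonneg (ht.le.trans hty) a
    linarith

lemma invGaussKernel_le {a b t t₀ τ : ℝ} (ht₀ : 0 < t₀) (h1 : t₀ ≤ t) (h2 : t ≤ 4 * t₀)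
    (hτ : 0 < τ) :
    invGaussKernel a b t τ ≤ (t₀ ^ a + (4 * t₀) ^ a) * invGaussKernel 0 b t₀ τ := by
  unfold invGaussKernel
  rw [rpow_zero, one_mul]
  have := rpow_le_rpow_add_rpow (a := a) ht₀ h1 h2
  gcongr

/-- Integration of a bounded function against `invGaussKernel`. -/
noncomputable def invGaussTransform (a b : ℝ) (h : ℝ → ℝ) (t : ℝ) : ℝ :=
  ∫ τ in Ioi 0, invGaussKernel a b t τ * h τ

lemma integrableOn_mul_of_abs_le {k h : ℝ → ℝ} {M : ℝ} (hk : IntegrableOn k (Ioi 0))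
    (hh : Measurable h) (hM : ∀ τ, 0 < τ → |h τ| ≤ M) :
    IntegrableOn (fun τ => k τ * h τ) (Ioi 0) := by
  refine Integrable.mul_bdd (c := M) hk hh.aestronglyMeasurable ?_
  exact (ae_restrict_iff' measurableSet_Ioi).2 (ae_of_all _ fun τ hτ => hM τ hτ)

lemma hasDerivAt_invGaussTransform (a : ℝ) {b M : ℝ} (hb : 1 < b) {h : ℝ → ℝ} (hh : Measurable h)
    (hM : ∀ τ, 0 < τ → |h τ| ≤ M) {t : ℝ} (ht : 0 < t) :
    HasDerivAt (invGaussTransform a b h) (a * invGaussTransform (a - 1) b h t -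
      1 / 2 * invGaussTransform (a + 1) (b + 1) h t) t := by
  have i1 := integrableOn_mul_of_abs_le (integrableOn_invGaussKernel (a - 1) hb ht) hh hM
  have i2 := integrableOn_mul_of_abs_le (integrableOn_invGaussKernel (a + 1)
    (show 1 < b + 1 by linarith) ht) hh hM
  have i3 := integrableOn_mul_of_abs_le (integrableOn_invGaussKernel a hb ht) hh hM
  have ht2 : 0 < t / 2 := by positivity
  set bound : ℝ → ℝ := fun τ => (|a| * (((t/2) ^ (a - 1) + (4 * (t/2)) ^ (a - 1)) *
      invGaussKernel 0 b (t/2) τ) + 1 / 2 * (((t/2) ^ (a + 1) + (4 * (t/2)) ^ (a + 1)) *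
      invGaussKernel 0 (b + 1) (t/2) τ)) * M with hbound
  have key := hasDerivAt_integral_of_dominated_loc_of_deriv_le (μ := volume.restrict (Ioi 0))
    (F := fun t τ => invGaussKernel a b t τ * h τ)
    (F' := fun t τ => (a * invGaussKernel (a - 1) b t τ -
      1 / 2 * invGaussKernel (a + 1) (b + 1) t τ) * h τ) (x₀ := t) (bound := bound)
    (s := Ioo (t / 2) (4 * (t / 2))) (Ioo_mem_nhds (by linarith) (by linarith))
    (Eventually.of_forall fun t =>
      ((measurable_invGaussKernel a b t).mul hh).aestronglyMeasurable) i3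
    (((((measurable_invGaussKernel _ _ t).const_mul a).sub
      ((measurable_invGaussKernel _ _ t).const_mul _)).mul hh).aestronglyMeasurable) ?_ ?_ ?_
  · refine key.2.congr_deriv ?_
    unfold invGaussTransform
    rw [← integral_const_mul, ← integral_const_mul, ← integral_sub (i1.const_mul a) (i2.const_mul _)]
    congr 1; ext τ; ring
  · refine (ae_restrict_iff' measurableSet_Ioi).2 (ae_of_all _ fun τ (hτ : 0 < τ) x hx => ?_)
    have hx0 : 0 < x := ht2.trans hx.1
    have e1 := invGaussKernel_le (a := a - 1) (b := b) ht2 hx.1.le hx.2.le hτ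
    have e2 := invGaussKernel_le (a := a + 1) (b := b + 1) ht2 hx.1.le hx.2.le hτ
    have p1 := invGaussKernel_nonneg (a := a - 1) (b := b) hx0 hτ
    have p2 := invGaussKernel_nonneg (a := a + 1) (b := b + 1) hx0 hτ
    rw [norm_mul, Real.norm_eq_abs, Real.norm_eq_abs]
    refine mul_le_mul ?_ (hM τ hτ) (abs_nonneg _) ?_
    · refine (abs_sub _ _).trans ?_
      rw [abs_mul, abs_mul, abs_of_nonneg p1, abs_of_nonneg p2, abs_of_pos (by norm_num : (0:ℝ) < 1/2)]
      gcongr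
    · have := invGaussKernel_nonneg (a := 0) (b := b) ht2 hτ
      have := invGaussKernel_nonneg (a := 0) (b := b + 1) ht2 hτ
      positivity
  · exact ((((integrableOn_invGaussKernel 0 hb ht2).const_mul _).const_mul _).add
      (((integrableOn_invGaussKernel 0 (show 1 < b + 1 by linarith) ht2).const_mul _).const_mul
        _)).mul_const _
  · refine (ae_restrict_iff' measurableSet_Ioi).2 (ae_of_all _ fun τ (hτ : 0 < τ) x hx => ?_)
    exact (hasDerivAt_invGaussKernel a b (ht2.trans hx.1) hτ).mul_const _

lemma contDiffOn_invGaussTransform (N : ℕ) (a : ℝ) {b M : ℝ} (hb : 1 < b) {h : ℝ → ℝ}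
    (hh : Measurable h) (hM : ∀ τ, 0 < τ → |h τ| ≤ M) :
    ContDiffOn ℝ N (invGaussTransform a b h) (Ioi 0) := by
  induction N generalizing a b with
  | zero =>
    rw [Nat.cast_zero, contDiffOn_zero]
    exact fun t ht => (hasDerivAt_invGaussTransform a hb hh hM ht).continuousAt.continuousWithinAt
  | succ N ih =>
    rw [Nat.cast_succ, contDiffOn_succ_iff_deriv_of_isOpen isOpen_Ioi]
    refine ⟨fun t ht => (hasDerivAt_invGaussTransform a hb hh
      hM ht).differentiableAt.differentiableWithinAt, by simp, ?_⟩
    refine ContDiffOn.congr ?_ fun t ht => (hasDerivAt_invGaussTransform a hb hh hM ht).deriv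
    exact (contDiffOn_const.mul (ih (a - 1) hb)).sub
      (contDiffOn_const.mul (ih (a + 1) (show 1 < b + 1 by linarith)))

lemma smoothOnPos_invGaussTransform (a : ℝ) {b M : ℝ} (hb : 1 < b) {h : ℝ → ℝ}
    (hh : Measurable h) (hM : ∀ τ, 0 < τ → |h τ| ≤ M) :
    SmoothOnPos (invGaussTransform a b h) := fun _ ht =>
  (contDiffOn_infty.2 fun N => contDiffOn_invGaussTransform N a hb hh hM).contDiffAt
    (isOpen_Ioi.mem_nhds ht)

lemma exists_kernel_iteratedDeriv_invGaussTransform (i : ℕ) (a : ℝ) {b : ℝ} (hb : 1 < b) :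
    ∃ (K : ℝ → ℝ → ℝ) (C : ℝ), 0 ≤ C ∧
      (∀ t, 0 < t → IntegrableOn (K t) (Ioi 0) ∧
        ∫ τ in Ioi 0, |K t τ| ≤ C * t ^ (a - 2 * b + 2 - i)) ∧
      ∀ (h : ℝ → ℝ) (M : ℝ), Measurable h → (∀ τ, 0 < τ → |h τ| ≤ M) → ∀ t, 0 < t →
        iteratedDeriv i (invGaussTransform a b h) t = ∫ τ in Ioi 0, K t τ * h τ := by
  induction i generalizing a b with
  | zero =>
    refine ⟨invGaussKernel a b, 4 ^ (b - 1) * Gamma (b - 1), ?_, fun t ht =>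
      ⟨integrableOn_invGaussKernel a hb ht, ?_⟩, fun h M _ _ t _ => by
        rw [iteratedDeriv_zero, invGaussTransform]⟩
    · have := Gamma_pos_of_pos (show 0 < b - 1 by linarith)
      positivity
    · rw [setIntegral_congr_fun measurableSet_Ioi (fun τ (hτ : τ ∈ Ioi 0) =>
        abs_of_nonneg (invGaussKernel_nonneg (a := a) (b := b) ht hτ)),
        integral_invGaussKernel a hb ht]
      simp
  | succ i ih =>
    have hb1 : 1 < b + 1 := by linarith
    obtain ⟨K₁, C₁, hC₁, hK₁, hr₁⟩ := ih (a - 1) hb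
    obtain ⟨K₂, C₂, hC₂, hK₂, hr₂⟩ := ih (a + 1) hb1
    refine ⟨fun t τ => a * K₁ t τ - 1 / 2 * K₂ t τ, |a| * C₁ + 1 / 2 * C₂, by positivity,
      fun t ht => ⟨((hK₁ t ht).1.const_mul a).sub ((hK₂ t ht).1.const_mul _), ?_⟩, ?_⟩
    · calc ∫ τ in Ioi 0, |a * K₁ t τ - 1 / 2 * K₂ t τ|
          ≤ ∫ τ in Ioi 0, (|a| * |K₁ t τ| + 1 / 2 * |K₂ t τ|) := by
            refine integral_mono (((hK₁ t ht).1.const_mul a).sub ((hK₂ t ht).1.const_mul _)).abs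
              (((hK₁ t ht).1.abs.const_mul _).add ((hK₂ t ht).1.abs.const_mul _)) fun τ => ?_
            refine (abs_sub _ _).trans ?_
            rw [abs_mul, abs_mul, abs_of_pos (by norm_num : (0:ℝ) < 1/2)]
        _ = |a| * (∫ τ in Ioi 0, |K₁ t τ|) + 1 / 2 * ∫ τ in Ioi 0, |K₂ t τ| := by
            rw [integral_add ((hK₁ t ht).1.abs.const_mul _) ((hK₂ t ht).1.abs.const_mul _),
              integral_const_mul, integral_const_mul]
        _ ≤ |a| * (C₁ * t ^ (a - 1 - 2 * b + 2 - i)) +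
            1 / 2 * (C₂ * t ^ (a + 1 - 2 * (b + 1) + 2 - i)) := by
            gcongr
            exacts [(hK₁ t ht).2, (hK₂ t ht).2]
        _ = _ := by
            rw [show a - 1 - 2 * b + 2 - i = a - 2 * b + 2 - ((i + 1 : ℕ) : ℝ) by push_cast; ring,
              show a + 1 - 2 * (b + 1) + 2 - i = a - 2 * b + 2 - ((i + 1 : ℕ) : ℝ) by
                push_cast; ring]
            ring
    · intro h M hh hM t ht
      have e : deriv (invGaussTransform a b h) =ᶠ[𝓝 t] fun t =>
          a * invGaussTransform (a - 1) b h t - 1 / 2 * invGaussTransform (a + 1) (b + 1) h t := by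
        filter_upwards [isOpen_Ioi.mem_nhds ht] with r hr
        exact (hasDerivAt_invGaussTransform a hb hh hM hr).deriv
      have s1 := (smoothOnPos_invGaussTransform (a - 1) hb hh hM).contDiffAt i ht
      have s2 := (smoothOnPos_invGaussTransform (a + 1) hb1 hh hM).contDiffAt i ht
      rw [iteratedDeriv_succ', e.iteratedDeriv_eq, iteratedDeriv_fun_sub (contDiffAt_const.mul s1)
        (contDiffAt_const.mul s2), iteratedDeriv_const_mul_field, iteratedDeriv_const_mul_field,
        hr₁ h M hh hM t ht, hr₂ h M hh hM t ht, ← integral_const_mul, ← integral_const_mul,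
        ← integral_sub]
      · congr 1; ext τ; ring
      · exact (integrableOn_mul_of_abs_le (hK₁ t ht).1 hh hM).const_mul a
      · exact (integrableOn_mul_of_abs_le (hK₂ t ht).1 hh hM).const_mul _

/-- The density of the one-sided `1/2`-stable subordinator at time `t`. -/
noncomputable def stableDensity (t τ : ℝ) : ℝ := 1 / (2 * √π) * invGaussKernel 1 (3 / 2) t τ

lemma stableDensity_nonneg {t τ : ℝ} (ht : 0 < t) (hτ : 0 < τ) : 0 ≤ stableDensity t τ := by
  have := invGaussKernel_nonneg (a := 1) (b := 3 / 2) ht hτ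
  unfold stableDensity; positivity

lemma measurable_stableDensity_uncurry : Measurable (Function.uncurry stableDensity) :=
  (measurable_invGaussKernel_uncurry 1 (3 / 2)).const_mul _

lemma measurable_stableDensity (t : ℝ) : Measurable (stableDensity t) :=
  (measurable_invGaussKernel 1 (3 / 2) t).const_mul _

lemma integrableOn_stableDensity {t : ℝ} (ht : 0 < t) : IntegrableOn (stableDensity t) (Ioi 0) :=
  (integrableOn_invGaussKernel 1 (by norm_num) ht).const_mul _

lemma integral_stableDensity {t : ℝ} (ht : 0 < t) : ∫ τ in Ioi 0, stableDensity t τ = 1 := by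
  unfold stableDensity
  rw [integral_const_mul, integral_invGaussKernel 1 (by norm_num) ht,
    show (3 / 2 : ℝ) - 1 = 1 / 2 by norm_num, Gamma_one_half_eq, ← sqrt_eq_rpow,
    show (4 : ℝ) = 2 ^ 2 by norm_num, sqrt_sq (by norm_num),
    show (1 : ℝ) - 2 * (3 / 2) + 2 = 0 by norm_num, rpow_zero]
  have : √π ≠ 0 := by positivity
  field_simp

lemma integral_Ioi_zero_of_hasDerivAt_of_tendsto {g g' : ℝ → ℝ} {l₀ l : ℝ}
    (hg : ∀ x ∈ Ioi (0 : ℝ), HasDerivAt g (g' x) x) (hg' : ∀ x ∈ Ioi (0 : ℝ), 0 ≤ g' x)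
    (h₀ : Tendsto g (𝓝[>] 0) (𝓝 l₀)) (hl : Tendsto g atTop (𝓝 l)) :
    ∫ x in Ioi 0, g' x = l - l₀ := by
  have hev : ∀ x ∈ Ioi (0 : ℝ), Function.update g 0 l₀ =ᶠ[𝓝 x] g := fun x hx => by
    filter_upwards [isOpen_Ioi.mem_nhds hx] with y hy
    exact Function.update_of_ne (ne_of_gt hy) _ _
  have := integral_Ioi_of_hasDerivAt_of_nonneg (g := Function.update g 0 l₀) (g' := g') (a := 0)
    (l := l) ?_ (fun x hx => (hg x hx).congr_of_eventuallyEq (hev x hx)) hg' ?_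
  · simpa using this
  · rw [continuousWithinAt_update_same]
    convert h₀ using 2
    ext x; simp [lt_iff_le_and_ne, eq_comm]
  · refine hl.congr' ?_
    filter_upwards [eventually_gt_atTop 0] with y hy
    exact (Function.update_of_ne hy.ne' _ _).symm

/-- An unnormalised error function. -/
noncomputable def gaussPrimitive (z : ℝ) : ℝ := ∫ x in (0 : ℝ)..z, exp (-x ^ 2)

lemma hasDerivAt_gaussPrimitive (z : ℝ) : HasDerivAt gaussPrimitive (exp (-z ^ 2)) z := by
  have hc : Continuous fun x : ℝ => exp (-x ^ 2) := by fun_prop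
  exact intervalIntegral.integral_hasDerivAt_right (hc.intervalIntegrable _ _)
    (hc.stronglyMeasurableAtFilter _ _) hc.continuousAt

lemma tendsto_gaussPrimitive_atTop : Tendsto gaussPrimitive atTop (𝓝 (√π / 2)) := by
  have h1 := integral_gaussian_Ioi 1
  have h2 := (integrable_exp_neg_mul_sq one_pos).integrableOn (s := Ioi 0)
  simp only [neg_mul, one_mul, div_one] at h1 h2
  rw [← h1]
  exact intervalIntegral_tendsto_integral_Ioi 0 h2 tendsto_id

lemma gaussPrimitive_neg (z : ℝ) : gaussPrimitive (-z) = -gaussPrimitive z := by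
  unfold gaussPrimitive
  have := intervalIntegral.integral_comp_neg (a := 0) (b := z) fun x : ℝ => exp (-x ^ 2)
  simp only [neg_sq, neg_zero] at this
  rw [this, intervalIntegral.integral_symm]

lemma tendsto_gaussPrimitive_atBot : Tendsto gaussPrimitive atBot (𝓝 (-(√π / 2))) := by
  have := (tendsto_gaussPrimitive_atTop.comp tendsto_neg_atBot_atTop).neg
  refine this.congr fun z => ?_
  simp [gaussPrimitive_neg]

lemma integral_stableDensity_mul_exp {t q : ℝ} (ht : 0 < t) (hq : 0 ≤ q) :
    ∫ τ in Ioi 0, stableDensity t τ * exp (-(q ^ 2 * τ)) = exp (-(t * q)) := by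
  rcases hq.eq_or_lt with rfl | hq
  · simpa using integral_stableDensity ht
  set Am : ℝ → ℝ := fun τ => t / 2 * τ ^ (-(1 / 2) : ℝ) - q * τ ^ (1 / 2 : ℝ) with hAm
  set Ap : ℝ → ℝ := fun τ => t / 2 * τ ^ (-(1 / 2) : ℝ) + q * τ ^ (1 / 2 : ℝ) with hAp
  set G : ℝ → ℝ := fun τ => -(1 / √π) * (exp (-(t * q)) * gaussPrimitive (Am τ) +
    exp (t * q) * gaussPrimitive (Ap τ)) with hG
  have hπ : 0 < √π := by positivity
  have e0 : Tendsto (fun τ : ℝ => τ ^ (1 / 2 : ℝ)) (𝓝[>] 0) (𝓝 0) := by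
    have := (continuousAt_rpow_const 0 (1 / 2 : ℝ) (Or.inr (by norm_num))).tendsto
    rw [zero_rpow (by norm_num)] at this
    exact this.mono_left nhdsWithin_le_nhds
  have e1 : Tendsto (fun τ : ℝ => τ ^ (-(1 / 2) : ℝ)) (𝓝[>] 0) atTop :=
    tendsto_rpow_neg_nhdsGT_zero (by norm_num)
  have e2 : Tendsto (fun τ : ℝ => τ ^ (1 / 2 : ℝ)) atTop atTop := tendsto_rpow_atTop (by norm_num)
  have e3 : Tendsto (fun τ : ℝ => τ ^ (-(1 / 2) : ℝ)) atTop (𝓝 0) :=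
    tendsto_rpow_neg_atTop (by norm_num)
  have m0 : Tendsto Am (𝓝[>] 0) atTop := by
    simp only [hAm, sub_eq_add_neg]
    exact (e1.const_mul_atTop (by positivity)).atTop_add (e0.const_mul q).neg
  have p0 : Tendsto Ap (𝓝[>] 0) atTop :=
    (e1.const_mul_atTop (by positivity)).atTop_add (e0.const_mul q)
  have p1 : Tendsto Ap atTop atTop := (e3.const_mul _).add_atTop (e2.const_mul_atTop hq)
  have m1 : Tendsto Am atTop atBot := by
    simp only [hAm, sub_eq_add_neg]
    exact (e3.const_mul _).add_atBot (tendsto_neg_atTop_atBot.comp (e2.const_mul_atTop hq))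
  have hl₀ := (((tendsto_gaussPrimitive_atTop.comp m0).const_mul (exp (-(t * q)))).add
    ((tendsto_gaussPrimitive_atTop.comp p0).const_mul (exp (t * q)))).const_mul (-(1 / √π))
  have hl := (((tendsto_gaussPrimitive_atBot.comp m1).const_mul (exp (-(t * q)))).add
    ((tendsto_gaussPrimitive_atTop.comp p1).const_mul (exp (t * q)))).const_mul (-(1 / √π))
  rw [integral_Ioi_zero_of_hasDerivAt_of_tendsto (g := G) ?_ ?_ hl₀ hl]
  · field_simp; ring
  · intro τ (hτ : 0 < τ)
    have r1 : τ ^ (-(1 / 2) : ℝ) * τ ^ (1 / 2 : ℝ) = 1 := by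
      rw [← rpow_add hτ]; simp
    have r2 : τ ^ (1 / 2 : ℝ) * τ ^ (1 / 2 : ℝ) = τ := by
      rw [← rpow_add hτ]; norm_num
    have r3 : τ ^ (-(1 / 2) : ℝ) * τ ^ (-(1 / 2) : ℝ) = τ⁻¹ := by
      rw [← rpow_add hτ, ← rpow_neg_one]; norm_num
    have d1 := ((Real.hasDerivAt_rpow_const (p := -(1 / 2)) (Or.inl hτ.ne')).const_mul (t / 2))
    have d2 := ((Real.hasDerivAt_rpow_const (p := 1 / 2) (Or.inl hτ.ne')).const_mul q)
    have dm := ((hasDerivAt_gaussPrimitive _).comp τ (d1.fun_sub d2)).const_mul (exp (-(t * q)))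
    have dp := ((hasDerivAt_gaussPrimitive _).comp τ (d1.fun_add d2)).const_mul (exp (t * q))
    refine ((dm.fun_add dp).const_mul (-(1 / √π))).congr_deriv ?_
    have x1 : exp (-(t * q)) * exp (-(t / 2 * τ ^ (-(1 / 2) : ℝ) - q * τ ^ (1 / 2 : ℝ)) ^ 2) =
        exp (-(t ^ 2 / (4 * τ))) * exp (-(q ^ 2 * τ)) := by
      rw [← exp_add, ← exp_add]; congr 1
      linear_combination (-(t ^ 2 / 4)) * r3 - q ^ 2 * r2 + t * q * r1
    have x2 : exp (t * q) * exp (-(t / 2 * τ ^ (-(1 / 2) : ℝ) + q * τ ^ (1 / 2 : ℝ)) ^ 2) =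
        exp (-(t ^ 2 / (4 * τ))) * exp (-(q ^ 2 * τ)) := by
      rw [← exp_add, ← exp_add]; congr 1
      linear_combination (-(t ^ 2 / 4)) * r3 - q ^ 2 * r2 - t * q * r1
    rw [← mul_assoc (exp (-(t * q))), ← mul_assoc (exp (t * q)), x1, x2, stableDensity,
      invGaussKernel, rpow_one, show (-(1 / 2) : ℝ) - 1 = -(3 / 2) by norm_num]
    field_simp
    ring
  · intro τ hτ
    exact mul_nonneg (stableDensity_nonneg ht hτ) (exp_pos _).le

lemma stableDensity_scaling {t v : ℝ} (ht : 0 < t) (hv : 0 < v) :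
    t ^ 2 * stableDensity t (t ^ 2 * v) = stableDensity 1 v := by
  unfold stableDensity invGaussKernel
  rw [mul_rpow (by positivity) hv.le, ← rpow_natCast, ← rpow_mul ht.le, rpow_one, one_rpow]
  have h1 : t ^ (((2 : ℕ) : ℝ) * -(3 / 2)) = (t ^ 3)⁻¹ := by
    rw [← rpow_natCast, ← rpow_neg ht.le]; congr 1; push_cast; norm_num
  rw [h1, rpow_natCast]
  have h2 : t ^ 2 / (4 * (t ^ 2 * v)) = 1 ^ 2 / (4 * v) := by field_simp
  rw [h2]
  field_simp

lemma integral_stableDensity_mul_eq {t : ℝ} (ht : 0 < t) (h : ℝ → ℝ) :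
    ∫ τ in Ioi 0, stableDensity t τ * h τ = ∫ v in Ioi 0, stableDensity 1 v * h (t ^ 2 * v) := by
  have := integral_comp_mul_left_Ioi (fun τ => stableDensity t τ * h τ) 0
    (show 0 < t ^ 2 by positivity)
  rw [mul_zero, smul_eq_mul] at this
  rw [eq_inv_mul_iff_mul_eq₀ (by positivity), ← integral_const_mul] at this
  rw [← this]
  refine setIntegral_congr_fun measurableSet_Ioi fun v hv => ?_
  rw [← mul_assoc, stableDensity_scaling ht hv]

lemma tendsto_integral_stableDensity_mul {h : ℝ → ℝ} {M L : ℝ} (hh : Measurable h)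
    (hM : ∀ τ, 0 < τ → |h τ| ≤ M) (hL : Tendsto h (𝓝[>] 0) (𝓝 L)) :
    Tendsto (fun t => ∫ τ in Ioi 0, stableDensity t τ * h τ) (𝓝[>] 0) (𝓝 L) := by
  have key : Tendsto (fun t : ℝ => ∫ v in Ioi 0, stableDensity 1 v * h (t ^ 2 * v)) (𝓝[>] 0)
      (𝓝 (∫ v in Ioi 0, stableDensity 1 v * L)) := by
    refine tendsto_integral_filter_of_dominated_convergence (fun v => stableDensity 1 v * M)
      ?_ ?_ ((integrableOn_stableDensity one_pos).mul_const M) ?_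
    · refine Eventually.of_forall fun t => Measurable.aestronglyMeasurable ?_
      exact (measurable_stableDensity 1).mul (hh.comp (measurable_const_mul _))
    · filter_upwards [self_mem_nhdsWithin] with t (ht : 0 < t)
      refine (ae_restrict_iff' measurableSet_Ioi).2 (ae_of_all _ fun v (hv : 0 < v) => ?_)
      have := stableDensity_nonneg one_pos hv
      rw [norm_mul, Real.norm_of_nonneg this]
      exact mul_le_mul_of_nonneg_left (hM _ (by positivity)) this
    · refine (ae_restrict_iff' measurableSet_Ioi).2 (ae_of_all _ fun v (hv : 0 < v) => ?_)
      refine Tendsto.const_mul _ (hL.comp ?_)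
      refine tendsto_nhdsWithin_iff.2 ⟨?_, ?_⟩
      · have : Continuous fun t : ℝ => t ^ 2 * v := by fun_prop
        have := this.tendsto 0
        simp only [ne_eq, OfNat.ofNat_ne_zero, not_false_eq_true, zero_pow, zero_mul] at this
        exact this.mono_left nhdsWithin_le_nhds
      · filter_upwards [self_mem_nhdsWithin] with t (ht : 0 < t)
        exact mul_pos (by positivity) hv
  rw [integral_mul_const, integral_stableDensity one_pos, one_mul] at key
  refine key.congr' ?_
  filter_upwards [self_mem_nhdsWithin] with t (ht : 0 < t)
  exact (integral_stableDensity_mul_eq ht h).symm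

lemma exists_kernel_iteratedDeriv_stable (i : ℕ) :
    ∃ (K : ℝ → ℝ → ℝ) (C : ℝ), 0 ≤ C ∧
      (∀ t, 0 < t → IntegrableOn (K t) (Ioi 0) ∧
        ∫ τ in Ioi 0, |K t τ| ≤ C * t ^ (-(i : ℝ))) ∧
      ∀ (h : ℝ → ℝ) (M : ℝ), Measurable h → (∀ τ, 0 < τ → |h τ| ≤ M) → ∀ t, 0 < t →
        iteratedDeriv i (fun t => ∫ τ in Ioi 0, stableDensity t τ * h τ) t =
          ∫ τ in Ioi 0, K t τ * h τ := by
  obtain ⟨K, C, hC, hK, hr⟩ := exists_kernel_iteratedDeriv_invGaussTransform i 1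
    (show (1 : ℝ) < 3 / 2 by norm_num)
  refine ⟨fun t τ => 1 / (2 * √π) * K t τ, 1 / (2 * √π) * C, by positivity,
    fun t ht => ⟨(hK t ht).1.const_mul _, ?_⟩, fun h M hh hM t ht => ?_⟩
  · simp_rw [abs_mul, integral_const_mul]
    rw [abs_of_nonneg (by positivity : (0 : ℝ) ≤ 1 / (2 * √π)), mul_assoc]
    have := (hK t ht).2
    rw [show (1 : ℝ) - 2 * (3 / 2) + 2 - i = -i by ring] at this
    gcongr
  · simp_rw [stableDensity, mul_assoc, integral_const_mul]
    rw [iteratedDeriv_const_mul_field, ← hr h M hh hM t ht]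
    rfl

lemma smoothOnPos_integral_stableDensity {h : ℝ → ℝ} {M : ℝ} (hh : Measurable h)
    (hM : ∀ τ, 0 < τ → |h τ| ≤ M) :
    SmoothOnPos fun t => ∫ τ in Ioi 0, stableDensity t τ * h τ := by
  simp_rw [stableDensity, mul_assoc, integral_const_mul]
  exact fun t ht => contDiffAt_const.mul
    (smoothOnPos_invGaussTransform 1 (show (1 : ℝ) < 3 / 2 by norm_num) hh hM t ht)

/-- The exponential `x ↦ e^{-p·x}` as a bounded continuous function on the closed orthant. -/
noncomputable def laplaceExp {d : ℕ} (p : Fin d → ℕ) :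
    BoundedContinuousFunction (Fin d → NNReal) ℝ :=
  BoundedContinuousFunction.ofNormedAddCommGroup (fun x => exp (-∑ j, (p j : ℝ) * (x j : ℝ)))
    (by fun_prop) 1 fun x => by
      rw [Real.norm_of_nonneg (exp_pos _).le, exp_le_one_iff, neg_nonpos]
      exact Finset.sum_nonneg fun j _ => by positivity

lemma laplaceExp_apply {d : ℕ} (p : Fin d → ℕ) (x : Fin d → NNReal) :
    laplaceExp p x = exp (-∑ j, (p j : ℝ) * (x j : ℝ)) := rfl

/-- The multiplicative family of exponentials `e^{-p·x}`. -/
noncomputable def laplaceExpHom (d : ℕ) :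
    Multiplicative (Fin d → ℕ) →* BoundedContinuousFunction (Fin d → NNReal) ℝ where
  toFun p := laplaceExp p.toAdd
  map_one' := by ext x; simp [laplaceExp_apply]
  map_mul' p q := by
    ext x
    simp [laplaceExp_apply, ← exp_add, add_mul, Finset.sum_add_distrib, add_comm]

/-- The algebra spanned by the exponentials `e^{-p·x}`. -/
noncomputable def laplaceAlgebra (d : ℕ) :
    StarSubalgebra ℝ (BoundedContinuousFunction (Fin d → NNReal) ℝ) :=
  { Algebra.adjoin ℝ (MonoidHom.mrange (laplaceExpHom d) :
      Set (BoundedContinuousFunction (Fin d → NNReal) ℝ)) with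
    star_mem' := fun {a} ha => by
      have : star a = a := by ext x; simp
      rwa [this] }

lemma measure_eq_of_laplaceExp_integral_eq {d : ℕ} {μ ν : Measure (Fin d → NNReal)}
    [IsFiniteMeasure μ] [IsFiniteMeasure ν]
    (h : ∀ p : Fin d → ℕ, ∫ x, laplaceExp p x ∂μ = ∫ x, laplaceExp p x ∂ν) : μ = ν := by
  refine ext_of_forall_mem_subalgebra_integral_eq_of_polish (𝕜 := ℝ) (A := laplaceAlgebra d) ?_ ?_
  · intro x y hxy
    obtain ⟨j, hj⟩ := Function.ne_iff.1 hxy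
    refine ⟨_, ⟨_, ⟨laplaceExp (Pi.single j 1), ?_, rfl⟩, rfl⟩, ?_⟩
    · exact Algebra.subset_adjoin ⟨Multiplicative.ofAdd (Pi.single j 1), rfl⟩
    · have key : ∀ z : Fin d → NNReal, laplaceExp (Pi.single j 1) z = exp (-(z j : ℝ)) := by
        intro z
        rw [laplaceExp_apply]
        congr 2
        rw [Finset.sum_eq_single j] <;> simp +contextual
      intro he
      have he : laplaceExp (Pi.single j 1) x = laplaceExp (Pi.single j 1) y := he
      rw [key, key, exp_eq_exp, neg_inj, NNReal.coe_inj] at he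
      exact hj he
  · intro g hg
    have hg' : g ∈ Submodule.span ℝ (MonoidHom.mrange (laplaceExpHom d) :
        Set (BoundedContinuousFunction (Fin d → NNReal) ℝ)) := by
      have : g ∈ Subalgebra.toSubmodule (Algebra.adjoin ℝ (MonoidHom.mrange (laplaceExpHom d) :
        Set (BoundedContinuousFunction (Fin d → NNReal) ℝ))) := hg
      rwa [Algebra.adjoin_eq_span, Submonoid.closure_eq] at this
    clear hg
    induction hg' using Submodule.span_induction with
    | mem g hg => obtain ⟨p, rfl⟩ := hg; exact h p.toAdd
    | zero => simp
    | add a b _ _ ha hb =>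
      simp only [BoundedContinuousFunction.coe_add, Pi.add_apply]
      rw [integral_add (a.integrable _) (b.integrable _),
        integral_add (a.integrable _) (b.integrable _), ha, hb]
    | smul c a _ ha =>
      simp only [BoundedContinuousFunction.coe_smul]
      rw [integral_smul, integral_smul, ha]

/-- Finite measures on the orthant are determined by their Laplace transform at integer points. -/
lemma measure_eq_of_laplace_eq {d : ℕ} {μ ν : Measure (Fin d → ℝ)}
    [IsFiniteMeasure μ] [IsFiniteMeasure ν] (hμ : ∀ᵐ x ∂μ, x ∈ posOrthant d)
    (hν : ∀ᵐ x ∂ν, x ∈ posOrthant d)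
    (h : ∀ p : Fin d → ℕ, ∫ x, exp (-∑ j, (p j : ℝ) * x j) ∂μ =
      ∫ x, exp (-∑ j, (p j : ℝ) * x j) ∂ν) : μ = ν := by
  set T : (Fin d → ℝ) → Fin d → NNReal := fun x j => (x j).toNNReal with hT
  set S : (Fin d → NNReal) → Fin d → ℝ := fun x j => x j with hS
  have mT : Measurable T := by fun_prop
  have mS : Measurable S := by fun_prop
  have hST : ∀ x ∈ posOrthant d, S (T x) = x := fun x hx => by
    ext j
    exact Real.coe_toNNReal _ (le_of_lt (hx j (mem_univ j)))
  have back : ∀ ρ : Measure (Fin d → ℝ), (∀ᵐ x ∂ρ, x ∈ posOrthant d) →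
      (ρ.map T).map S = ρ := fun ρ hρ => by
    rw [Measure.map_map mS mT]
    conv_rhs => rw [← Measure.map_id (μ := ρ)]
    exact Measure.map_congr (hρ.mono fun x hx => hST x hx)
  have tr : ∀ ρ : Measure (Fin d → ℝ), (∀ᵐ x ∂ρ, x ∈ posOrthant d) → ∀ p : Fin d → ℕ,
      ∫ x, laplaceExp p x ∂(ρ.map T) = ∫ x, exp (-∑ j, (p j : ℝ) * x j) ∂ρ := fun ρ hρ p => by
    rw [integral_map mT.aemeasurable (laplaceExp p).continuous.aestronglyMeasurable]
    refine integral_congr_ae (hρ.mono fun x hx => ?_)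
    simp only [laplaceExp_apply]
    congr 2
    exact Finset.sum_congr rfl fun j _ => by rw [Real.coe_toNNReal _ (le_of_lt (hx j (mem_univ j)))]
  rw [← back μ hμ, ← back ν hν]
  congr 1
  exact measure_eq_of_laplaceExp_integral_eq fun p => by rw [tr μ hμ, tr ν hν, h]

lemma measure_eq_of_laplace_eq_real {μ ν : Measure ℝ} [IsFiniteMeasure μ] [IsFiniteMeasure ν]
    (hμ : ∀ᵐ x ∂μ, 0 < x) (hν : ∀ᵐ x ∂ν, 0 < x)
    (h : ∀ p : ℕ, ∫ x, exp (-((p : ℝ) * x)) ∂μ = ∫ x, exp (-((p : ℝ) * x)) ∂ν) : μ = ν := by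
  set e := (MeasurableEquiv.funUnique (Fin 1) ℝ).symm with he
  have hpos : ∀ x, 0 < x → e x ∈ posOrthant 1 := fun x hx j _ => hx
  have tr : ∀ ρ : Measure ℝ, ∀ p : Fin 1 → ℕ, ∫ x, exp (-∑ j, (p j : ℝ) * x j) ∂(ρ.map e) =
      ∫ x, exp (-((p 0 : ℝ) * x)) ∂ρ := fun ρ p => by
    rw [integral_map_equiv]
    refine integral_congr_ae (ae_of_all _ fun x => ?_)
    simp only [Finset.univ_unique, Finset.sum_singleton]
    rfl
  have key : μ.map e = ν.map e := by
    have := e.measurable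
    refine measure_eq_of_laplace_eq ?_ ?_ fun p => by rw [tr, tr, h]
    · exact (ae_map_iff e.measurable.aemeasurable (MeasurableSet.univ_pi fun _ =>
        measurableSet_Ioi)).2 (hμ.mono hpos)
    · exact (ae_map_iff e.measurable.aemeasurable (MeasurableSet.univ_pi fun _ =>
        measurableSet_Ioi)).2 (hν.mono hpos)
  exact e.map_measurableEquiv_injective key

/-- The one-sided `1/2`-stable law at time `t`. -/
noncomputable def stableMeasure (t : ℝ) : Measure ℝ :=
  (volume.restrict (Ioi 0)).withDensity fun τ => ENNReal.ofReal (stableDensity t τ)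

lemma integral_stableMeasure {t : ℝ} (ht : 0 < t) (h : ℝ → ℝ) :
    ∫ τ, h τ ∂stableMeasure t = ∫ τ in Ioi 0, stableDensity t τ * h τ := by
  rw [stableMeasure, integral_withDensity_eq_integral_toReal_smul
    (measurable_stableDensity t).ennreal_ofReal (ae_of_all _ fun _ => ENNReal.ofReal_lt_top)]
  refine setIntegral_congr_fun measurableSet_Ioi fun τ hτ => ?_
  simp only [smul_eq_mul]
  rw [ENNReal.toReal_ofReal (stableDensity_nonneg ht hτ)]

lemma isProbabilityMeasure_stableMeasure {t : ℝ} (ht : 0 < t) :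
    IsProbabilityMeasure (stableMeasure t) := by
  refine ⟨?_⟩
  rw [stableMeasure, withDensity_apply _ MeasurableSet.univ, Measure.restrict_univ,
    ← ofReal_integral_eq_lintegral_ofReal (integrableOn_stableDensity ht), integral_stableDensity ht,
    ENNReal.ofReal_one]
  exact (ae_restrict_iff' measurableSet_Ioi).2 (ae_of_all _ fun τ hτ => stableDensity_nonneg ht hτ)

lemma ae_stableMeasure_pos (t : ℝ) : ∀ᵐ τ ∂stableMeasure t, 0 < τ :=
  (withDensity_absolutelyContinuous _ _).ae_le (ae_restrict_mem measurableSet_Ioi)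

lemma stableMeasure_conv {s t : ℝ} (hs : 0 < s) (ht : 0 < t) :
    (stableMeasure s).conv (stableMeasure t) = stableMeasure (s + t) := by
  have := isProbabilityMeasure_stableMeasure hs
  have := isProbabilityMeasure_stableMeasure ht
  have := isProbabilityMeasure_stableMeasure (add_pos hs ht)
  have hpos : ∀ᵐ x ∂(stableMeasure s).conv (stableMeasure t), 0 < x := by
    rw [Measure.conv, ae_map_iff measurable_add.aemeasurable measurableSet_Ioi]
    filter_upwards [Measure.quasiMeasurePreserving_fst.ae (ae_stableMeasure_pos s),
      Measure.quasiMeasurePreserving_snd.ae (ae_stableMeasure_pos t)] with x h1 h2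
    exact add_pos h1 h2
  refine measure_eq_of_laplace_eq_real hpos (ae_stableMeasure_pos _) fun p => ?_
  have L : ∀ r, 0 < r → ∫ x, exp (-((p : ℝ) * x)) ∂stableMeasure r = exp (-(r * √p)) := by
    intro r hr
    rw [integral_stableMeasure hr, ← integral_stableDensity_mul_exp hr (sqrt_nonneg _),
      sq_sqrt (Nat.cast_nonneg p)]
  rw [integral_conv, L _ (add_pos hs ht)]
  · simp_rw [mul_add, neg_add, exp_add, integral_const_mul, integral_mul_const]
    rw [L _ hs, L _ ht, ← exp_add]
    congr 1; ring
  · refine Integrable.of_bound (C := 1) (by fun_prop) (hpos.mono fun x hx => ?_)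
    rw [Real.norm_of_nonneg (exp_pos _).le, exp_le_one_iff, neg_nonpos]
    positivity

lemma integral_stableDensity_convolution {s t M : ℝ} (hs : 0 < s) (ht : 0 < t) {h : ℝ → ℝ}
    (hh : Measurable h) (hM : ∀ τ, 0 < τ → |h τ| ≤ M) :
    ∫ σ in Ioi 0, stableDensity s σ * ∫ τ in Ioi 0, stableDensity t τ * h (σ + τ) =
      ∫ τ in Ioi 0, stableDensity (s + t) τ * h τ := by
  have := isProbabilityMeasure_stableMeasure hs
  have := isProbabilityMeasure_stableMeasure ht
  have := isProbabilityMeasure_stableMeasure (add_pos hs ht)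
  rw [← integral_stableMeasure (add_pos hs ht), ← stableMeasure_conv hs ht, integral_conv,
    integral_stableMeasure hs]
  · simp_rw [integral_stableMeasure ht]
  · rw [stableMeasure_conv hs ht]
    exact Integrable.of_bound (C := M) hh.aestronglyMeasurable
      ((ae_stableMeasure_pos _).mono fun x hx => hM x hx)

/-- The `m`-th term in the expansion of the one-dimensional Laguerre heat kernel as a Poisson
mixture of gamma densities. -/
noncomputable def laguerreHeatTerm (a r x y : ℝ) (m : ℕ) : ℝ :=
  exp (-(r * x / (1 - r))) * ((r * x / (1 - r)) ^ m / m.factorial) *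
    ((1 - r) ^ (-((m : ℝ) + a + 1)) / Gamma ((m : ℝ) + a + 1)) *
    (y ^ ((m : ℝ) + a) * exp (-(y / (1 - r))))

/-- The one-dimensional Laguerre heat kernel at time `-log r`, as a density on `(0,∞)`. -/
noncomputable def laguerreHeat (a r x y : ℝ) : ENNReal :=
  ∑' m : ℕ, ENNReal.ofReal (laguerreHeatTerm a r x y m)

lemma measurable_laguerreHeat (a : ℝ) :
    Measurable fun q : ℝ × ℝ × ℝ => laguerreHeat a q.1 q.2.1 q.2.2 := by
  refine Measurable.tsum fun m => Measurable.ennreal_ofReal ?_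
  unfold laguerreHeatTerm
  fun_prop

lemma laguerreHeatTerm_nonneg {a r x y : ℝ} (ha : -1 < a) (hr0 : 0 < r) (hr1 : r < 1) (hx : 0 < x)
    (hy : 0 < y) (m : ℕ) : 0 ≤ laguerreHeatTerm a r x y m := by
  have h1 : 0 < 1 - r := by linarith
  have h2 : 0 < Gamma ((m : ℝ) + a + 1) := Gamma_pos_of_pos (by
    have : (0 : ℝ) ≤ m := Nat.cast_nonneg m
    linarith)
  unfold laguerreHeatTerm
  positivity

lemma exists_le_Gamma_natCast_add {a : ℝ} (ha : -1 < a) :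
    ∃ c > 0, ∀ m : ℕ, c ≤ Gamma ((m : ℝ) + a + 1) := by
  refine ⟨min (Gamma (a + 1)) (Gamma (a + 2)), lt_min (Gamma_pos_of_pos (by linarith))
    (Gamma_pos_of_pos (by linarith)), fun m => ?_⟩
  induction m with
  | zero => simp
  | succ m ih =>
    rcases Nat.eq_zero_or_pos m with rfl | hm
    · refine (min_le_right _ _).trans (le_of_eq ?_)
      congr 1; push_cast; ring
    · have hm : (1 : ℝ) ≤ m := by exact_mod_cast hm
      rw [show ((m + 1 : ℕ) : ℝ) + a + 1 = ((m : ℝ) + a + 1) + 1 by push_cast; ring,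
        Gamma_add_one (s := (m : ℝ) + a + 1) (by linarith)]
      have := Gamma_pos_of_pos (show 0 < (m : ℝ) + a + 1 by linarith)
      nlinarith

lemma summable_pow_div_factorial_mul_Gamma {a : ℝ} (ha : -1 < a) (ρ : ℝ) (hρ : 0 ≤ ρ) :
    Summable fun m : ℕ => ρ ^ m / (m.factorial * Gamma ((m : ℝ) + a + 1)) := by
  obtain ⟨c, hc, h⟩ := exists_le_Gamma_natCast_add ha
  refine Summable.of_nonneg_of_le (fun m => ?_) (fun m => ?_)
    ((Real.summable_pow_div_factorial ρ).mul_left c⁻¹)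
  · have := hc.trans_le (h m)
    positivity
  · have := h m
    rw [inv_mul_eq_div, div_div]
    gcongr

lemma laguerreHeatTerm_eq_besselI_term {a r x y : ℝ} (hr0 : 0 < r) (hr1 : r < 1)
    (hx : 0 < x) (hy : 0 < y) (m : ℕ) :
    (1 - r)⁻¹ * ((y / x) ^ (a / 2) * exp (-((r * x + y) / (1 - r)) - a * log r / 2)) *
      ((2 * √(r * x * y) / (1 - r) / 2) ^ (2 * (m : ℝ) + a) /
        (Nat.factorial m * Gamma ((m : ℝ) + a + 1))) = laguerreHeatTerm a r x y m := by
  have h1 : 0 < 1 - r := by linarith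
  have e1 : (2 * √(r * x * y) / (1 - r) / 2) ^ (2 * (m : ℝ) + a) =
      r ^ m * x ^ m * y ^ m * (r ^ (a / 2) * x ^ (a / 2) * y ^ (a / 2)) *
        ((1 - r) ^ (-(m : ℝ)) * (1 - r) ^ (-((m : ℝ) + a))) := by
    rw [show 2 * √(r * x * y) / (1 - r) / 2 = (r * x * y) ^ (1 / 2 : ℝ) * (1 - r) ^ (-1 : ℝ) by
      rw [sqrt_eq_rpow, rpow_neg_one]; ring, mul_rpow (by positivity) (by positivity),
      ← rpow_mul (by positivity), ← rpow_mul h1.le, ← rpow_add h1,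
      show 1 / 2 * (2 * (m : ℝ) + a) = m + a / 2 by ring, rpow_add (by positivity), rpow_natCast,
      mul_rpow (by positivity) hy.le, mul_rpow hr0.le hx.le]
    rw [show -1 * (2 * (m : ℝ) + a) = -(m : ℝ) + -((m : ℝ) + a) by ring]
    ring
  have e2 : exp (-((r * x + y) / (1 - r)) - a * log r / 2) =
      exp (-(r * x / (1 - r))) * exp (-(y / (1 - r))) * (r ^ (a / 2))⁻¹ := by
    rw [← rpow_neg hr0.le, rpow_def_of_pos hr0, ← exp_add, ← exp_add]
    congr 1; ring
  have e3 : (1 - r) ^ (-((m : ℝ) + a + 1)) = (1 - r) ^ (-((m : ℝ) + a)) * (1 - r)⁻¹ := by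
    rw [← rpow_neg_one, ← rpow_add h1]; congr 1; ring
  have e4 : y ^ ((m : ℝ) + a) = y ^ m * (y ^ (a / 2) * y ^ (a / 2)) := by
    rw [← rpow_add hy, ← rpow_natCast, ← rpow_add hy]; congr 1; ring
  have e5 : (1 - r) ^ (-(m : ℝ)) = ((1 - r) ^ m)⁻¹ := by rw [rpow_neg h1.le, rpow_natCast]
  rw [laguerreHeatTerm, e1, e2, e3, e4, e5, div_rpow hy.le hx.le, div_pow, mul_pow]
  have p1 : r ^ (a / 2) ≠ 0 := by positivity
  have p2 : x ^ (a / 2) ≠ 0 := by positivity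
  have p3 : (1 - r) ≠ 0 := h1.ne'
  generalize Gamma ((m : ℝ) + a + 1) = g
  rw [div_eq_mul_inv _ ((m.factorial : ℝ) * g), mul_inv, div_eq_mul_inv _ g]
  field_simp

lemma laguerreHeat_eq_ofReal {a r x y : ℝ} (ha : -1 < a) (hr0 : 0 < r) (hr1 : r < 1)
    (hx : 0 < x) (hy : 0 < y) :
    laguerreHeat a r x y = ENNReal.ofReal ((1 - r)⁻¹ * ((y / x) ^ (a / 2) *
      exp (-((r * x + y) / (1 - r)) - a * log r / 2) *
        besselI a (2 * √(r * x * y) / (1 - r)))) := by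
  have h1 : 0 < 1 - r := by linarith
  rw [besselI, ← mul_assoc (1 - r)⁻¹, ← tsum_mul_left, tsum_congr fun m =>
    laguerreHeatTerm_eq_besselI_term hr0 hr1 hx hy m, ENNReal.ofReal_tsum_of_nonneg
      (laguerreHeatTerm_nonneg ha hr0 hr1 hx hy), laguerreHeat]
  have := (summable_pow_div_factorial_mul_Gamma ha (r * x / (1 - r) * (1 - r) ^ (-1 : ℝ) * y)
    (by positivity)).mul_left (exp (-(r * x / (1 - r))) * (1 - r) ^ (-(a + 1)) * y ^ a *
      exp (-(y / (1 - r))))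
  refine this.congr fun m => ?_
  have e3 : (1 - r) ^ (-((m : ℝ) + a + 1)) = ((1 - r) ^ (-1 : ℝ)) ^ m * (1 - r) ^ (-(a + 1)) := by
    rw [← rpow_natCast, ← rpow_mul h1.le, ← rpow_add h1]; congr 1; ring
  have e4 : y ^ ((m : ℝ) + a) = y ^ m * y ^ a := by rw [rpow_add hy, rpow_natCast]
  rw [laguerreHeatTerm, e3, e4, mul_pow, mul_pow]
  generalize Gamma ((m : ℝ) + a + 1) = g
  rw [div_eq_mul_inv _ ((m.factorial : ℝ) * g), mul_inv, div_eq_mul_inv _ g]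
  ring

lemma lintegral_laguerreHeat_mul_exp {a r x p : ℝ} (ha : -1 < a) (hr0 : 0 < r) (hr1 : r < 1)
    (hx : 0 < x) (hp : 0 ≤ p) :
    ∫⁻ y in Ioi 0, laguerreHeat a r x y * ENNReal.ofReal (exp (-(p * y))) =
      ENNReal.ofReal ((1 + p * (1 - r)) ^ (-(a + 1)) *
        exp (-(r * p / (1 + p * (1 - r)) * x))) := by
  have h1 : 0 < 1 - r := by linarith
  set c := 1 + p * (1 - r) with hc
  have hc0 : 0 < c := by positivity
  set θ := r * x / (1 - r) with hθ
  have hterm : ∀ m : ℕ, ∫⁻ y in Ioi 0, ENNReal.ofReal (laguerreHeatTerm a r x y m) *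
      ENNReal.ofReal (exp (-(p * y))) =
      ENNReal.ofReal (exp (-θ) * c ^ (-(a + 1)) * ((θ / c) ^ m / m.factorial)) := by
    intro m
    have hs : 0 < (m : ℝ) + a + 1 := by
      have : (0 : ℝ) ≤ m := Nat.cast_nonneg m
      linarith
    have hc' : 0 < c / (1 - r) := by positivity
    have hintg := Real.integral_rpow_mul_exp_neg_mul_Ioi hs hc'
    have hI := integrableOn_rpow_mul_exp_neg_mul_rpow (p := 1) (s := (m : ℝ) + a + 1 - 1)
      (b := c / (1 - r)) (by linarith) one_pos hc'
    simp only [rpow_one, neg_mul] at hI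
    have hcongr : ∀ y ∈ Ioi (0 : ℝ), ENNReal.ofReal (laguerreHeatTerm a r x y m) *
        ENNReal.ofReal (exp (-(p * y))) = ENNReal.ofReal (exp (-θ) * (θ ^ m / m.factorial) *
          ((1 - r) ^ (-((m : ℝ) + a + 1)) / Gamma ((m : ℝ) + a + 1)) *
          (y ^ ((m : ℝ) + a + 1 - 1) * exp (-(c / (1 - r) * y)))) := by
      intro y hy
      rw [← ENNReal.ofReal_mul (laguerreHeatTerm_nonneg ha hr0 hr1 hx hy m), laguerreHeatTerm,
        show -(c / (1 - r) * y) = -(y / (1 - r)) + -(p * y) by rw [hc]; field_simp; ring, exp_add,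
        add_sub_cancel_right]
      congr 1; ring
    have hg := Gamma_pos_of_pos hs
    rw [setLIntegral_congr_fun measurableSet_Ioi hcongr, ← ofReal_integral_eq_lintegral_ofReal
      (hI.const_mul _), integral_const_mul, hintg]
    · congr 1
      have e1 : (1 / (c / (1 - r))) ^ ((m : ℝ) + a + 1) =
          (1 - r) ^ ((m : ℝ) + a + 1) * (c ^ (-(a + 1)) * (c ^ m)⁻¹) := by
        rw [one_div_div, div_rpow h1.le hc0.le, add_assoc, rpow_add hc0, rpow_neg hc0.le,
          rpow_natCast]
        field_simp
      rw [e1, rpow_neg h1.le, div_pow θ c]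
      field_simp
    · refine (ae_restrict_iff' measurableSet_Ioi).2 (ae_of_all _ fun y (hy : 0 < y) => ?_)
      simp only [Pi.zero_apply]
      positivity
  unfold laguerreHeat
  simp_rw [← ENNReal.tsum_mul_right]
  rw [lintegral_tsum, tsum_congr hterm, ← ENNReal.ofReal_tsum_of_nonneg, tsum_mul_left]
  · congr 1
    have := (NormedSpace.expSeries_div_hasSum_exp (θ / c)).tsum_eq
    rw [this, ← Real.exp_eq_exp_ℝ, mul_right_comm, ← exp_add, mul_comm]
    congr 2
    rw [hθ]
    field_simp
    rw [hc]; ring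
  · intro m; positivity
  · exact (Real.summable_pow_div_factorial _).mul_left _
  · intro m
    refine Measurable.aemeasurable ?_
    unfold laguerreHeatTerm
    fun_prop

lemma lintegral_pi_prod {d : ℕ} (μ : Fin d → Measure ℝ) [∀ i, SigmaFinite (μ i)]
    {f : Fin d → ℝ → ENNReal} (hf : ∀ i, Measurable (f i)) :
    ∫⁻ x, ∏ i, f i (x i) ∂(Measure.pi μ) = ∏ i, ∫⁻ x, f i x ∂(μ i) := by
  induction d with
  | zero => simp
  | succ n ih =>
    have hm : Measurable fun x : Fin (n + 1) → ℝ => ∏ i, f i (x i) :=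
      Finset.measurable_prod _ fun i _ => (hf i).comp (measurable_pi_apply i)
    rw [← ((measurePreserving_piFinSuccAbove μ 0).symm).lintegral_comp hm, Fin.prod_univ_succ,
      ← ih _ fun i => hf i.succ, ← lintegral_prod_mul (hf 0).aemeasurable
      (Finset.measurable_prod _ fun i _ =>
        (hf i.succ).comp (measurable_pi_apply i)).aemeasurable]
    refine lintegral_congr fun x => ?_
    rw [Fin.prod_univ_succ]
    simp [MeasurableEquiv.piFinSuccAbove_symm_apply]

lemma measurableSet_posOrthant (d : ℕ) : MeasurableSet (posOrthant d) :=
  MeasurableSet.univ_pi fun _ => measurableSet_Ioi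

/-- The density of the `d`-dimensional Laguerre heat kernel. -/
noncomputable def laguerreHeatDensity {d : ℕ} (α : Fin d → ℝ) (τ : ℝ) (x y : Fin d → ℝ) :
    NNReal := ∏ j, (laguerreHeat (α j) (exp (-τ)) (x j) (y j)).toNNReal

lemma measurable_laguerreHeatDensity {d : ℕ} (α : Fin d → ℝ) :
    Measurable fun q : (ℝ × (Fin d → ℝ)) × (Fin d → ℝ) =>
      laguerreHeatDensity α q.1.1 q.1.2 q.2 := by
  refine Finset.measurable_prod _ fun j _ => ?_
  exact ((measurable_laguerreHeat (α j)).comp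
    (f := fun q : (ℝ × (Fin d → ℝ)) × (Fin d → ℝ) =>
      (exp (-q.1.1), q.1.2 j, q.2 j)) (by fun_prop)).ennreal_toNNReal

lemma coe_laguerreHeatDensity {d : ℕ} {α : Fin d → ℝ} (hα : ∀ j, -1 < α j) {τ : ℝ}
    (hτ : 0 < τ) {x y : Fin d → ℝ} (hx : x ∈ posOrthant d) (hy : y ∈ posOrthant d) :
    (laguerreHeatDensity α τ x y : ENNReal) =
      ∏ j, laguerreHeat (α j) (exp (-τ)) (x j) (y j) := by
  rw [laguerreHeatDensity, ENNReal.ofNNReal_finsetProd]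
  refine Finset.prod_congr rfl fun j _ => ENNReal.coe_toNNReal ?_
  rw [laguerreHeat_eq_ofReal (hα j) (exp_pos _) (exp_lt_one_iff.2 (by linarith))
    (hx j (mem_univ j)) (hy j (mem_univ j))]
  exact ENNReal.ofReal_ne_top

/-- The Laguerre heat semigroup as a kernel in the time and space variables. -/
noncomputable def laguerreHeatKernel {d : ℕ} (α : Fin d → ℝ) :
    ProbabilityTheory.Kernel (ℝ × (Fin d → ℝ)) (Fin d → ℝ) :=
  (ProbabilityTheory.Kernel.const _ (volume.restrict (posOrthant d))).withDensity
    fun q y => (laguerreHeatDensity α q.1 q.2 y : ENNReal)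

instance {d : ℕ} (α : Fin d → ℝ) : ProbabilityTheory.IsSFiniteKernel (laguerreHeatKernel α) := by
  unfold laguerreHeatKernel; infer_instance

lemma laguerreHeatKernel_apply {d : ℕ} (α : Fin d → ℝ) (q : ℝ × (Fin d → ℝ)) :
    laguerreHeatKernel α q =
      (volume.restrict (posOrthant d)).withDensity
        fun y => (laguerreHeatDensity α q.1 q.2 y : ENNReal) := by
  rw [laguerreHeatKernel, ProbabilityTheory.Kernel.withDensity_apply _
    (measurable_laguerreHeatDensity α).coe_nnreal_ennreal, ProbabilityTheory.Kernel.const_apply]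

lemma lintegral_laguerreHeatKernel {d : ℕ} (α : Fin d → ℝ) (q : ℝ × (Fin d → ℝ))
    {g : (Fin d → ℝ) → ENNReal} (hg : Measurable g) :
    ∫⁻ y, g y ∂laguerreHeatKernel α q =
      ∫⁻ y in posOrthant d, laguerreHeatDensity α q.1 q.2 y * g y := by
  rw [laguerreHeatKernel, ProbabilityTheory.Kernel.lintegral_withDensity _
    (measurable_laguerreHeatDensity α).coe_nnreal_ennreal _ hg, ProbabilityTheory.Kernel.const_apply]

lemma ae_laguerreHeatKernel_mem {d : ℕ} (α : Fin d → ℝ) (q : ℝ × (Fin d → ℝ)) :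
    ∀ᵐ y ∂laguerreHeatKernel α q, y ∈ posOrthant d := by
  rw [laguerreHeatKernel_apply]
  exact (withDensity_absolutelyContinuous _ _).ae_le (ae_restrict_mem (measurableSet_posOrthant d))

lemma volume_restrict_posOrthant (d : ℕ) : (volume : Measure (Fin d → ℝ)).restrict (posOrthant d) =
    Measure.pi fun _ => (volume : Measure ℝ).restrict (Ioi 0) := by
  rw [posOrthant, volume_pi, Measure.restrict_pi_pi]

lemma lintegral_laguerreHeatKernel_exp {d : ℕ} {α : Fin d → ℝ} (hα : ∀ j, -1 < α j) {τ : ℝ}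
    (hτ : 0 < τ) {x : Fin d → ℝ} (hx : x ∈ posOrthant d) {p : Fin d → ℝ} (hp : ∀ j, 0 ≤ p j) :
    ∫⁻ y, ENNReal.ofReal (exp (-∑ j, p j * y j)) ∂laguerreHeatKernel α (τ, x) =
      ENNReal.ofReal ((∏ j, (1 + p j * (1 - exp (-τ))) ^ (-(α j + 1))) *
        exp (-∑ j, exp (-τ) * p j / (1 + p j * (1 - exp (-τ))) * x j)) := by
  have hr1 : exp (-τ) < 1 := exp_lt_one_iff.2 (by linarith)
  rw [lintegral_laguerreHeatKernel _ _ (by fun_prop), setLIntegral_congr_fun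
    (measurableSet_posOrthant d) fun y hy => by
      rw [coe_laguerreHeatDensity hα hτ hx hy], volume_restrict_posOrthant]
  have e : ∀ (p y : Fin d → ℝ), exp (-∑ j, p j * y j) = ∏ j, exp (-(p j * y j)) := by
    intro p y; rw [← exp_sum, Finset.sum_neg_distrib]
  have m : ∀ j, Measurable fun y => laguerreHeat (α j) (exp (-τ)) (x j) y *
      ENNReal.ofReal (exp (-(p j * y))) := fun j =>
    ((measurable_laguerreHeat (α j)).comp
      (f := fun y : ℝ => (exp (-τ), x j, y)) (by fun_prop)).mul (by fun_prop)
  simp_rw [e, ENNReal.ofReal_prod_of_nonneg (fun j _ => (exp_pos _).le),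
    ← Finset.prod_mul_distrib]
  rw [lintegral_pi_prod _ m, ENNReal.ofReal_prod_of_nonneg]
  · refine Finset.prod_congr rfl fun j _ => ?_
    exact lintegral_laguerreHeat_mul_exp (hα j) (exp_pos _) hr1 (hx j (mem_univ j)) (hp j)
  · intro j _
    have h1 : 0 < 1 - exp (-τ) := by linarith
    have := hp j
    positivity

lemma isProbabilityMeasure_laguerreHeatKernel {d : ℕ} {α : Fin d → ℝ} (hα : ∀ j, -1 < α j) {τ : ℝ}
    (hτ : 0 < τ) {x : Fin d → ℝ} (hx : x ∈ posOrthant d) :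
    IsProbabilityMeasure (laguerreHeatKernel α (τ, x)) := by
  refine ⟨?_⟩
  have := lintegral_laguerreHeatKernel_exp hα hτ hx (p := 0) (by simp)
  simpa using this

/-- The Laguerre heat semigroup at a fixed time. -/
noncomputable def laguerreHeatAt {d : ℕ} (α : Fin d → ℝ) (τ : ℝ) :
    ProbabilityTheory.Kernel (Fin d → ℝ) (Fin d → ℝ) :=
  (laguerreHeatKernel α).comap (Prod.mk τ) measurable_prodMk_left

instance {d : ℕ} (α : Fin d → ℝ) (τ : ℝ) :
    ProbabilityTheory.IsSFiniteKernel (laguerreHeatAt α τ) := by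
  unfold laguerreHeatAt; infer_instance

lemma laguerreHeatAt_apply {d : ℕ} (α : Fin d → ℝ) (τ : ℝ) (x : Fin d → ℝ) :
    laguerreHeatAt α τ x = laguerreHeatKernel α (τ, x) := by
  rw [laguerreHeatAt, ProbabilityTheory.Kernel.comap_apply]

open ProbabilityTheory in
lemma lintegral_laguerreHeatAt_comp_exp {d : ℕ} {α : Fin d → ℝ} (hα : ∀ j, -1 < α j) {σ τ : ℝ}
    (hσ : 0 < σ) (hτ : 0 < τ) {x : Fin d → ℝ} (hx : x ∈ posOrthant d) {p : Fin d → ℝ}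
    (hp : ∀ j, 0 ≤ p j) :
    ∫⁻ y, ENNReal.ofReal (exp (-∑ j, p j * y j)) ∂(laguerreHeatAt α τ ∘ₖ laguerreHeatAt α σ) x =
      ∫⁻ y, ENNReal.ofReal (exp (-∑ j, p j * y j)) ∂laguerreHeatKernel α (σ + τ, x) := by
  have hs : 0 < 1 - exp (-σ) := by have := exp_lt_one_iff.2 (show -σ < 0 by linarith); linarith
  have ht : 0 < 1 - exp (-τ) := by have := exp_lt_one_iff.2 (show -τ < 0 by linarith); linarith
  have hc : ∀ j, 0 < 1 + p j * (1 - exp (-τ)) := fun j => by have := hp j; positivity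
  have hq : ∀ j, 0 ≤ exp (-τ) * p j / (1 + p j * (1 - exp (-τ))) := fun j => by
    have := hp j; have := hc j; positivity
  rw [Kernel.lintegral_comp _ _ _ (by fun_prop), lintegral_laguerreHeatKernel_exp hα
    (add_pos hσ hτ) hx hp, laguerreHeatAt_apply]
  have hae := (ae_laguerreHeatKernel_mem α (σ, x)).mono fun y hy => by
    have h := lintegral_laguerreHeatKernel_exp hα hτ hy hp
    rw [ENNReal.ofReal_mul (Finset.prod_nonneg fun j _ => rpow_nonneg (hc j).le _),
      ← laguerreHeatAt_apply] at h
    exact h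
  rw [lintegral_congr_ae hae, lintegral_const_mul _ (by fun_prop),
    lintegral_laguerreHeatKernel_exp hα hσ hx hq,
    ← ENNReal.ofReal_mul (Finset.prod_nonneg fun j _ => rpow_nonneg (hc j).le _), ← mul_assoc,
    ← Finset.prod_mul_distrib]
  have key : ∀ j, (1 + p j * (1 - exp (-τ))) * (1 + exp (-τ) * p j / (1 + p j * (1 - exp (-τ))) *
      (1 - exp (-σ))) = 1 + p j * (1 - exp (-(σ + τ))) := fun j => by
    have := (hc j).ne'
    rw [neg_add, exp_add]; field_simp; ring
  have hc2 : ∀ j, 0 < 1 + exp (-τ) * p j / (1 + p j * (1 - exp (-τ))) * (1 - exp (-σ)) :=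
    fun j => by have := hq j; positivity
  congr 3
  · funext j
    rw [← mul_rpow (hc j).le (hc2 j).le, key]
  · congr 1
    refine Finset.sum_congr rfl fun j _ => ?_
    rw [← key, neg_add, exp_add]
    have := (hc j).ne'
    have := (hc2 j).ne'
    field_simp

open ProbabilityTheory in
lemma laguerreHeatAt_comp {d : ℕ} {α : Fin d → ℝ} (hα : ∀ j, -1 < α j) {σ τ : ℝ}
    (hσ : 0 < σ) (hτ : 0 < τ) {x : Fin d → ℝ} (hx : x ∈ posOrthant d) :
    (laguerreHeatAt α τ ∘ₖ laguerreHeatAt α σ) x = laguerreHeatKernel α (σ + τ, x) := by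
  have i1 := isProbabilityMeasure_laguerreHeatKernel hα (add_pos hσ hτ) hx
  have i2 : IsProbabilityMeasure ((laguerreHeatAt α τ ∘ₖ laguerreHeatAt α σ) x) := by
    refine ⟨?_⟩
    have := lintegral_laguerreHeatAt_comp_exp hα hσ hτ hx (p := 0) (by simp)
    simpa using this
  refine measure_eq_of_laplace_eq ?_ (ae_laguerreHeatKernel_mem α _) fun p => ?_
  · refine Kernel.ae_comp_of_ae_ae (measurableSet_posOrthant d) ?_
    refine ae_of_all _ fun y => ?_
    rw [laguerreHeatAt_apply]
    exact ae_laguerreHeatKernel_mem α _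
  · rw [integral_eq_lintegral_of_nonneg_ae (ae_of_all _ fun y => (exp_pos _).le)
        (Measurable.aestronglyMeasurable (by fun_prop)),
      integral_eq_lintegral_of_nonneg_ae (ae_of_all _ fun y => (exp_pos _).le)
        (Measurable.aestronglyMeasurable (by fun_prop)),
      lintegral_laguerreHeatAt_comp_exp hα hσ hτ hx fun j => Nat.cast_nonneg (p j)]

/-- The Laguerre heat semigroup acting on functions. -/
noncomputable def laguerreHeatOp {d : ℕ} (α : Fin d → ℝ) (f : (Fin d → ℝ) → ℝ) (τ : ℝ)
    (x : Fin d → ℝ) : ℝ := ∫ y, f y ∂laguerreHeatKernel α (τ, x)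

lemma measurable_laguerreHeatOp {d : ℕ} (α : Fin d → ℝ) {f : (Fin d → ℝ) → ℝ} (hf : Measurable f) :
    Measurable fun q : ℝ × (Fin d → ℝ) => laguerreHeatOp α f q.1 q.2 :=
  (hf.stronglyMeasurable.integral_kernel (κ := laguerreHeatKernel α)).measurable

lemma abs_laguerreHeatOp_le {d : ℕ} {α : Fin d → ℝ} (hα : ∀ j, -1 < α j)
    {f : (Fin d → ℝ) → ℝ} {M : ℝ} (hM : ∀ y ∈ posOrthant d, |f y| ≤ M) {τ : ℝ} (hτ : 0 < τ)
    {x : Fin d → ℝ} (hx : x ∈ posOrthant d) : |laguerreHeatOp α f τ x| ≤ M := by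
  have := isProbabilityMeasure_laguerreHeatKernel hα hτ hx
  have := norm_integral_le_of_norm_le_const (f := f) (C := M) (μ := laguerreHeatKernel α (τ, x))
    ((ae_laguerreHeatKernel_mem α (τ, x)).mono hM)
  simpa [laguerreHeatOp] using this

lemma integrable_laguerreHeatKernel {d : ℕ} {α : Fin d → ℝ} (hα : ∀ j, -1 < α j)
    {f : (Fin d → ℝ) → ℝ} {M : ℝ} (hf : Measurable f) (hM : ∀ y ∈ posOrthant d, |f y| ≤ M) {τ : ℝ}
    (hτ : 0 < τ) {x : Fin d → ℝ} (hx : x ∈ posOrthant d) :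
    Integrable f (laguerreHeatKernel α (τ, x)) := by
  have := isProbabilityMeasure_laguerreHeatKernel hα hτ hx
  exact Integrable.of_bound hf.aestronglyMeasurable M ((ae_laguerreHeatKernel_mem α (τ, x)).mono hM)

lemma laguerreHeatOp_semigroup {d : ℕ} {α : Fin d → ℝ} (hα : ∀ j, -1 < α j)
    {f : (Fin d → ℝ) → ℝ} {M : ℝ} (hf : Measurable f) (hM : ∀ y ∈ posOrthant d, |f y| ≤ M) {σ τ : ℝ}
    (hσ : 0 < σ) (hτ : 0 < τ) {x : Fin d → ℝ} (hx : x ∈ posOrthant d) :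
    laguerreHeatOp α (laguerreHeatOp α f τ) σ x = laguerreHeatOp α f (σ + τ) x := by
  unfold laguerreHeatOp
  rw [← laguerreHeatAt_comp hα hσ hτ hx, ProbabilityTheory.Kernel.integral_comp]
  · simp_rw [laguerreHeatAt_apply]
  · rw [laguerreHeatAt_comp hα hσ hτ hx]
    exact integrable_laguerreHeatKernel hα hf hM (add_pos hσ hτ) hx

lemma besselI_nonneg {ν z : ℝ} (hν : -1 < ν) (hz : 0 ≤ z) : 0 ≤ besselI ν z := by
  refine tsum_nonneg fun m => ?_
  have : 0 < Real.Gamma ((m : ℝ) + ν + 1) :=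
    Real.Gamma_pos_of_pos (by have := Nat.cast_nonneg (α := ℝ) m; linarith)
  positivity

lemma coe_real_laguerreHeatDensity {d : ℕ} {α : Fin d → ℝ} (hα : ∀ j, -1 < α j) {τ : ℝ}
    (hτ : 0 < τ) {x y : Fin d → ℝ} (hx : x ∈ posOrthant d) (hy : y ∈ posOrthant d) :
    (laguerreHeatDensity α τ x y : ℝ) = ((1 - exp (-τ)) ^ d)⁻¹ *
      ∏ j, (y j / x j) ^ (α j / 2) *
        exp (-((exp (-τ) * x j + y j) / (1 - exp (-τ))) - α j * log (exp (-τ)) / 2) *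
        besselI (α j) (2 * √(exp (-τ) * x j * y j) / (1 - exp (-τ))) := by
  have h1 : 0 < 1 - exp (-τ) := by
    have := exp_lt_one_iff.2 (show -τ < 0 by linarith); linarith
  have h2 : ((1 - exp (-τ)) ^ d)⁻¹ = ∏ _j : Fin d, (1 - exp (-τ))⁻¹ := by simp
  rw [h2, ← Finset.prod_mul_distrib, laguerreHeatDensity, NNReal.coe_prod]
  refine Finset.prod_congr rfl fun j _ => ?_
  have hxj : 0 < x j := hx j (mem_univ j)
  have hyj : 0 < y j := hy j (mem_univ j)
  rw [laguerreHeat_eq_ofReal (hα j) (exp_pos _) (by linarith) hxj hyj]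
  have := besselI_nonneg (hα j)
    (show 0 ≤ 2 * √(exp (-τ) * x j * y j) / (1 - exp (-τ)) by positivity)
  exact ENNReal.toReal_ofReal (by positivity)

lemma exp_neg_image_Ioi : (fun τ : ℝ => exp (-τ)) '' Ioi 0 = Ioo 0 1 := by
  ext r
  constructor
  · rintro ⟨τ, hτ, rfl⟩
    exact ⟨exp_pos _, exp_lt_one_iff.2 (neg_lt_zero.2 hτ)⟩
  · rintro ⟨h0, h1⟩
    exact ⟨-log r, neg_pos.2 (log_neg h0 h1), by simp [exp_log h0]⟩

lemma plKernel_eq_integral {d : ℕ} {α : Fin d → ℝ} (hα : ∀ j, -1 < α j) (t : ℝ)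
    {x y : Fin d → ℝ} (hx : x ∈ posOrthant d) (hy : y ∈ posOrthant d) :
    plKernel d α t x y =
      ∫ τ in Ioi 0, stableDensity t τ * (laguerreHeatDensity α τ x y : ℝ) := by
  have hd : ∀ τ ∈ Ioi (0 : ℝ), HasDerivWithinAt (fun τ : ℝ => exp (-τ)) (-exp (-τ)) (Ioi 0) τ :=
    fun τ _ => ((hasDerivAt_neg τ).exp.congr_deriv (by ring)).hasDerivWithinAt
  have hinj : InjOn (fun τ : ℝ => exp (-τ)) (Ioi 0) := fun a _ b _ h => by
    simpa using exp_injective h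
  rw [plKernel, ← exp_neg_image_Ioi, integral_image_eq_integral_abs_deriv_smul measurableSet_Ioi
    hd hinj, ← integral_const_mul]
  refine setIntegral_congr_fun measurableSet_Ioi fun τ hτ => ?_
  have hτ' : 0 < τ := hτ
  have h1 : 0 < 1 - exp (-τ) := by
    have := exp_lt_one_iff.2 (show -τ < 0 by linarith); linarith
  simp only [smul_eq_mul]
  rw [coe_real_laguerreHeatDensity hα hτ' hx hy, abs_neg, abs_of_pos (exp_pos _), stableDensity,
    invGaussKernel, rpow_one, rpow_neg hτ'.le, log_exp, neg_neg,
    show t ^ 2 / (4 * -τ) = -(t ^ 2 / (4 * τ)) by rw [mul_neg, div_neg]]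
  have := (exp_pos (-τ)).ne'
  have := (rpow_pos_of_pos hτ' (3 / 2)).ne'
  have h3 := (pow_pos h1 d).ne'
  field_simp

lemma laguerreHeatOp_eq {d : ℕ} (α : Fin d → ℝ) (f : (Fin d → ℝ) → ℝ) (τ : ℝ) (x : Fin d → ℝ) :
    laguerreHeatOp α f τ x =
      ∫ y in posOrthant d, (laguerreHeatDensity α τ x y : ℝ) * f y := by
  have hm : Measurable fun y => laguerreHeatDensity α τ x y :=
    (measurable_laguerreHeatDensity α).comp (f := fun y => ((τ, x), y)) (by fun_prop)
  rw [laguerreHeatOp, laguerreHeatKernel_apply, integral_withDensity_eq_integral_smul hm]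
  rfl

lemma plP_eq_integral {d : ℕ} {α : Fin d → ℝ} (hα : ∀ j, -1 < α j)
    {f : (Fin d → ℝ) → ℝ} {M : ℝ} (hf : Measurable f) (hM : ∀ y ∈ posOrthant d, |f y| ≤ M)
    {t : ℝ} (ht : 0 < t) {x : Fin d → ℝ} (hx : x ∈ posOrthant d) :
    plP d α t f x = ∫ τ in Ioi 0, stableDensity t τ * laguerreHeatOp α f τ x := by
  have hD : Measurable fun q : (Fin d → ℝ) × ℝ => (laguerreHeatDensity α q.2 x q.1 : ℝ) :=
    ((measurable_laguerreHeatDensity α).comp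
      (f := fun q : (Fin d → ℝ) × ℝ => ((q.2, x), q.1)) (by fun_prop)).coe_nnreal_real
  have hη : Measurable fun q : (Fin d → ℝ) × ℝ => stableDensity t q.2 :=
    (measurable_stableDensity t).comp measurable_snd
  have hF : Measurable (Function.uncurry fun (y : Fin d → ℝ) (τ : ℝ) =>
      stableDensity t τ * (laguerreHeatDensity α τ x y : ℝ) * f y) :=
    (hη.mul hD).mul (hf.comp measurable_fst)
  have hintg : Integrable (Function.uncurry fun (y : Fin d → ℝ) (τ : ℝ) =>
      stableDensity t τ * (laguerreHeatDensity α τ x y : ℝ) * f y)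
      ((volume.restrict (posOrthant d)).prod (volume.restrict (Ioi 0))) := by
    rw [integrable_prod_iff' hF.aestronglyMeasurable]
    constructor
    · refine (ae_restrict_mem measurableSet_Ioi).mono fun τ hτ => ?_
      have hm : Measurable fun y => laguerreHeatDensity α τ x y :=
        (measurable_laguerreHeatDensity α).comp (f := fun y => ((τ, x), y)) (by fun_prop)
      have h := integrable_laguerreHeatKernel hα hf hM hτ hx
      rw [laguerreHeatKernel_apply, integrable_withDensity_iff_integrable_smul hm] at h
      refine (h.const_mul (stableDensity t τ)).congr (ae_of_all _ fun y => ?_)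
      simp only [Function.uncurry, NNReal.smul_def, smul_eq_mul]
      ring
    · have h := integrableOn_mul_of_abs_le (integrableOn_stableDensity ht)
        (h := fun τ => laguerreHeatOp α (fun y => |f y|) τ x) (M := M)
        ((measurable_laguerreHeatOp α hf.abs).comp
          (f := fun τ : ℝ => (τ, x)) (by fun_prop))
        fun τ hτ => abs_laguerreHeatOp_le hα (by simpa using hM) hτ hx
      refine h.congr ((ae_restrict_mem measurableSet_Ioi).mono fun τ hτ => ?_)
      simp only [Function.uncurry, laguerreHeatOp_eq, norm_mul, Real.norm_eq_abs, NNReal.abs_eq,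
        abs_of_nonneg (stableDensity_nonneg ht hτ), ← integral_const_mul, mul_assoc]
  rw [plP, if_neg ht.ne']
  calc ∫ y in posOrthant d, plKernel d α t x y * f y
      = ∫ y in posOrthant d, ∫ τ in Ioi 0,
          stableDensity t τ * (laguerreHeatDensity α τ x y : ℝ) * f y := by
        refine setIntegral_congr_fun (measurableSet_posOrthant d) fun y hy => ?_
        rw [plKernel_eq_integral hα t hx hy, integral_mul_const]
    _ = _ := by
        rw [integral_integral_swap hintg]
        refine setIntegral_congr_fun measurableSet_Ioi fun τ hτ => ?_
        simp only [laguerreHeatOp_eq, ← integral_const_mul, mul_assoc]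

lemma measurable_laguerreHeatOp_time {d : ℕ} (α : Fin d → ℝ) {f : (Fin d → ℝ) → ℝ}
    (hf : Measurable f) (x : Fin d → ℝ) : Measurable fun τ => laguerreHeatOp α f τ x :=
  (measurable_laguerreHeatOp α hf).comp (f := fun τ : ℝ => (τ, x)) (by fun_prop)

lemma plP_zero (d : ℕ) (α : Fin d → ℝ) (f : (Fin d → ℝ) → ℝ) (x : Fin d → ℝ) :
    plP d α 0 f x = f x := if_pos rfl

/-- The Poisson semigroup written through subordination. -/
noncomputable def subordinatedP {d : ℕ} (α : Fin d → ℝ) (f : (Fin d → ℝ) → ℝ) (t : ℝ)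
    (x : Fin d → ℝ) : ℝ :=
  if t = 0 then f x else ∫ τ in Ioi 0, stableDensity t τ * laguerreHeatOp α f τ x

lemma measurable_subordinatedP {d : ℕ} (α : Fin d → ℝ) {f : (Fin d → ℝ) → ℝ} (hf : Measurable f) :
    Measurable fun q : ℝ × (Fin d → ℝ) => subordinatedP α f q.1 q.2 := by
  refine Measurable.ite (measurable_fst (measurableSet_singleton 0)) (hf.comp measurable_snd) ?_
  have : Measurable fun p : (ℝ × (Fin d → ℝ)) × ℝ =>
      stableDensity p.1.1 p.2 * laguerreHeatOp α f p.2 p.1.2 :=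
    (measurable_stableDensity_uncurry.comp
      (f := fun p : (ℝ × (Fin d → ℝ)) × ℝ => (p.1.1, p.2)) (by fun_prop)).mul
    ((measurable_laguerreHeatOp α hf).comp
      (f := fun p : (ℝ × (Fin d → ℝ)) × ℝ => (p.2, p.1.2)) (by fun_prop))
  exact (this.stronglyMeasurable.integral_prod_right' (ν := volume.restrict (Ioi 0))).measurable

lemma plP_eq_subordinatedP {d : ℕ} {α : Fin d → ℝ} (hα : ∀ j, -1 < α j)
    {f : (Fin d → ℝ) → ℝ} {M : ℝ} (hf : Measurable f) (hM : ∀ y ∈ posOrthant d, |f y| ≤ M)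
    {t : ℝ} (ht : 0 ≤ t) {x : Fin d → ℝ} (hx : x ∈ posOrthant d) :
    plP d α t f x = subordinatedP α f t x := by
  rcases ht.eq_or_lt with rfl | ht
  · simp [plP, subordinatedP]
  · rw [plP_eq_integral hα hf hM ht hx, subordinatedP, if_neg ht.ne']

lemma abs_integral_stableDensity_mul_le {h : ℝ → ℝ} {M t : ℝ} (ht : 0 < t)
    (hM : ∀ τ, 0 < τ → |h τ| ≤ M) : |∫ τ in Ioi 0, stableDensity t τ * h τ| ≤ M := by
  have h1 : ‖∫ τ in Ioi 0, stableDensity t τ * h τ‖ ≤ ∫ τ in Ioi 0, stableDensity t τ * M := by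
    refine norm_integral_le_of_norm_le ((integrableOn_stableDensity ht).mul_const M) ?_
    refine (ae_restrict_mem measurableSet_Ioi).mono fun τ hτ => ?_
    rw [norm_mul, Real.norm_eq_abs, abs_of_nonneg (stableDensity_nonneg ht hτ)]
    exact mul_le_mul_of_nonneg_left (hM τ hτ) (stableDensity_nonneg ht hτ)
  rwa [integral_mul_const, integral_stableDensity ht, one_mul] at h1

lemma abs_plP_le {d : ℕ} {α : Fin d → ℝ} (hα : ∀ j, -1 < α j)
    {f : (Fin d → ℝ) → ℝ} {M : ℝ} (hf : Measurable f) (hM : ∀ y ∈ posOrthant d, |f y| ≤ M)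
    {t : ℝ} (ht : 0 ≤ t) {x : Fin d → ℝ} (hx : x ∈ posOrthant d) : |plP d α t f x| ≤ M := by
  rcases ht.eq_or_lt with rfl | ht
  · rw [plP_zero]; exact hM x hx
  · rw [plP_eq_integral hα hf hM ht hx]
    exact abs_integral_stableDensity_mul_le ht fun τ hτ => abs_laguerreHeatOp_le hα hM hτ hx

lemma smoothOnPos_plP {d : ℕ} {α : Fin d → ℝ} (hα : ∀ j, -1 < α j)
    {f : (Fin d → ℝ) → ℝ} {M : ℝ} (hf : Measurable f) (hM : ∀ y ∈ posOrthant d, |f y| ≤ M)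
    {x : Fin d → ℝ} (hx : x ∈ posOrthant d) : SmoothOnPos fun t => plP d α t f x := by
  intro t ht
  refine (smoothOnPos_integral_stableDensity (measurable_laguerreHeatOp_time α hf x)
    (fun τ hτ => abs_laguerreHeatOp_le hα hM hτ hx) t ht).congr_of_eventuallyEq ?_
  filter_upwards [Ioi_mem_nhds ht] with s hs
  exact plP_eq_integral hα hf hM hs hx

lemma plP_congr {d : ℕ} {α : Fin d → ℝ} {f g : (Fin d → ℝ) → ℝ}
    (h : ∀ y ∈ posOrthant d, f y = g y) (t : ℝ) {x : Fin d → ℝ} (hx : x ∈ posOrthant d) :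
    plP d α t f x = plP d α t g x := by
  unfold plP
  rw [h x hx, setIntegral_congr_fun (measurableSet_posOrthant d) fun y hy => by rw [h y hy]]

lemma laguerreHeatOp_integral_stableDensity {d : ℕ} {α : Fin d → ℝ} (hα : ∀ j, -1 < α j)
    {f : (Fin d → ℝ) → ℝ} {M : ℝ} (hf : Measurable f) (hM : ∀ y ∈ posOrthant d, |f y| ≤ M)
    {t σ : ℝ} (ht : 0 < t) (hσ : 0 < σ) {x : Fin d → ℝ} (hx : x ∈ posOrthant d) :
    laguerreHeatOp α (subordinatedP α f t) σ x =
      ∫ τ in Ioi 0, stableDensity t τ * laguerreHeatOp α f (σ + τ) x := by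
  have := isProbabilityMeasure_laguerreHeatKernel hα hσ hx
  have hF : Measurable (Function.uncurry fun (y : Fin d → ℝ) (τ : ℝ) =>
      stableDensity t τ * laguerreHeatOp α f τ y) :=
    ((measurable_stableDensity t).comp measurable_snd).mul
      ((measurable_laguerreHeatOp α hf).comp measurable_swap)
  have hintg : Integrable (Function.uncurry fun (y : Fin d → ℝ) (τ : ℝ) =>
      stableDensity t τ * laguerreHeatOp α f τ y)
      ((laguerreHeatKernel α (σ, x)).prod (volume.restrict (Ioi 0))) := by
    refine Integrable.mono' (g := fun q => stableDensity t q.2 * M)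
      (((integrableOn_stableDensity ht).comp_snd _).mul_const M) hF.aestronglyMeasurable ?_
    have h1 : ∀ᵐ q ∂(laguerreHeatKernel α (σ, x)).prod (volume.restrict (Ioi (0 : ℝ))),
        q.1 ∈ posOrthant d := Measure.quasiMeasurePreserving_fst.ae
          (ae_laguerreHeatKernel_mem α (σ, x))
    have h2 : ∀ᵐ q ∂(laguerreHeatKernel α (σ, x)).prod (volume.restrict (Ioi (0 : ℝ))),
        q.2 ∈ Ioi (0 : ℝ) := Measure.quasiMeasurePreserving_snd.ae
          (ae_restrict_mem measurableSet_Ioi)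
    filter_upwards [h1, h2] with q hq1 hq2
    have := stableDensity_nonneg ht hq2
    rw [Function.uncurry, norm_mul, Real.norm_eq_abs, abs_of_nonneg this]
    exact mul_le_mul_of_nonneg_left (abs_laguerreHeatOp_le hα hM hq2 hq1) this
  rw [laguerreHeatOp]
  simp only [subordinatedP, if_neg ht.ne']
  rw [integral_integral_swap hintg]
  refine setIntegral_congr_fun measurableSet_Ioi fun τ hτ => ?_
  rw [integral_const_mul, ← laguerreHeatOp_semigroup hα hf hM hσ hτ hx, ← laguerreHeatOp]

lemma plP_plP {d : ℕ} {α : Fin d → ℝ} (hα : ∀ j, -1 < α j)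
    {f : (Fin d → ℝ) → ℝ} {M : ℝ} (hf : Measurable f) (hM : ∀ y ∈ posOrthant d, |f y| ≤ M)
    {s t : ℝ} (hs : 0 < s) (ht : 0 ≤ t) {x : Fin d → ℝ} (hx : x ∈ posOrthant d) :
    plP d α s (subordinatedP α f t) x = plP d α (s + t) f x := by
  rcases ht.eq_or_lt with rfl | ht
  · rw [add_zero, show subordinatedP α f 0 = f from funext fun y => if_pos rfl]
  have hQ : Measurable (subordinatedP α f t) :=
    (measurable_subordinatedP α hf).comp measurable_prodMk_left
  have hQM : ∀ y ∈ posOrthant d, |subordinatedP α f t y| ≤ M := fun y hy => by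
    rw [← plP_eq_subordinatedP hα hf hM ht.le hy]; exact abs_plP_le hα hf hM ht.le hy
  rw [plP_eq_integral hα hQ hQM hs hx, plP_eq_integral hα hf hM (add_pos hs ht) hx,
    ← integral_stableDensity_convolution hs ht (measurable_laguerreHeatOp_time α hf x)
      fun τ hτ => abs_laguerreHeatOp_le hα hM hτ hx]
  refine setIntegral_congr_fun measurableSet_Ioi fun σ hσ => ?_
  rw [laguerreHeatOp_integral_stableDensity hα hf hM ht hσ hx]

lemma eventuallyEq_plP {d : ℕ} {α : Fin d → ℝ} (hα : ∀ j, -1 < α j)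
    {f : (Fin d → ℝ) → ℝ} {M : ℝ} (hf : Measurable f) (hM : ∀ y ∈ posOrthant d, |f y| ≤ M)
    {t : ℝ} (ht : 0 < t) {x : Fin d → ℝ} (hx : x ∈ posOrthant d) :
    (fun t => plP d α t f x) =ᶠ[𝓝 t]
      fun t => ∫ τ in Ioi 0, stableDensity t τ * laguerreHeatOp α f τ x := by
  filter_upwards [Ioi_mem_nhds ht] with s hs
  exact plP_eq_integral hα hf hM hs hx

open ProbabilityTheory in
lemma exists_measure_iteratedDeriv_plP {d : ℕ} {α : Fin d → ℝ} (hα : ∀ j, -1 < α j) (i : ℕ) :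
    ∃ C ≥ 0, ∀ t, 0 < t → ∀ x ∈ posOrthant d,
      ∃ (ρ : Measure (ℝ × (Fin d → ℝ))) (w : ℝ × (Fin d → ℝ) → ℝ), IsFiniteMeasure ρ ∧
        ρ.real univ ≤ C * t ^ (-(i : ℝ)) ∧ Measurable w ∧ (∀ q, |w q| ≤ 1) ∧
        (∀ s, MeasurableSet s → (∀ᵐ y ∂volume.restrict (posOrthant d), y ∈ s) →
          ∀ᵐ q ∂ρ, q.2 ∈ s) ∧
        ∀ g M, Measurable g → (∀ y ∈ posOrthant d, |g y| ≤ M) →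
          iteratedDeriv i (fun t => plP d α t g x) t = ∫ q, w q * g q.2 ∂ρ := by
  obtain ⟨K, C, hC, hK, hKi⟩ := exists_kernel_iteratedDeriv_stable i
  refine ⟨C, hC, fun t ht x hx => ?_⟩
  obtain ⟨hKint, hKb⟩ := hK t ht
  set k : ℝ → ℝ := hKint.1.mk (K t) with hk
  have hkm : Measurable k := hKint.1.stronglyMeasurable_mk.measurable
  have hkK : K t =ᵐ[volume.restrict (Ioi 0)] k := hKint.1.ae_eq_mk
  have hkint : Integrable k (volume.restrict (Ioi 0)) := hKint.congr hkK
  set μ : Measure ℝ := (volume.restrict (Ioi 0)).withDensity fun τ => (‖k τ‖₊ : ENNReal) with hμ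
  set κ : Kernel ℝ (Fin d → ℝ) := (laguerreHeatKernel α).comap (fun τ => (τ, x)) (by fun_prop)
  have hκ : ∀ τ, κ τ = laguerreHeatKernel α (τ, x) := fun τ => Kernel.comap_apply _ _ _
  have hμfin : IsFiniteMeasure μ := isFiniteMeasure_withDensity hkint.2.ne
  have hμpos : ∀ᵐ τ ∂μ, 0 < τ :=
    (withDensity_absolutelyContinuous _ _).ae_le (ae_restrict_mem measurableSet_Ioi)
  have hμu : μ univ = ENNReal.ofReal (∫ τ in Ioi 0, |K t τ|) := by
    rw [hμ, withDensity_apply _ MeasurableSet.univ, Measure.restrict_univ,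
      integral_congr_ae (hkK.mono fun τ h => show |K t τ| = ‖k τ‖ by rw [h, Real.norm_eq_abs]),
      ofReal_integral_norm_eq_lintegral_enorm hkint]
    rfl
  have hρu : (μ ⊗ₘ κ) univ = μ univ := by
    rw [Measure.compProd_apply MeasurableSet.univ, lintegral_congr_ae (g := fun _ => 1)]
    · simp
    · filter_upwards [hμpos] with τ hτ
      have := isProbabilityMeasure_laguerreHeatKernel hα hτ hx
      simp [hκ]
  have hfin : IsFiniteMeasure (μ ⊗ₘ κ) := ⟨by rw [hρu]; exact measure_lt_top μ univ⟩
  have hac : ∀ s, MeasurableSet s → (∀ᵐ y ∂volume.restrict (posOrthant d), y ∈ s) →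
      ∀ᵐ q ∂(μ ⊗ₘ κ), q.2 ∈ s := by
    intro s hs h
    refine Measure.ae_compProd_of_ae_ae (measurable_snd hs) (ae_of_all _ fun τ => ?_)
    rw [hκ, laguerreHeatKernel_apply]
    exact (withDensity_absolutelyContinuous _ _).ae_le h
  refine ⟨μ ⊗ₘ κ, fun q => k q.1 / |k q.1|, hfin, ?_, by fun_prop, fun q => ?_, hac, ?_⟩
  · rw [measureReal_def, hρu, hμu, ENNReal.toReal_ofReal (integral_nonneg fun _ => abs_nonneg _)]
    exact hKb
  · rw [abs_div, abs_abs]; exact div_self_le_one _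
  intro g M hg hM
  have hM' := hac _ (measurableSet_posOrthant d) (ae_restrict_mem (measurableSet_posOrthant d))
  rw [(eventuallyEq_plP hα hg hM ht hx).iteratedDeriv_eq,
    hKi _ M (measurable_laguerreHeatOp_time α hg x)
    (fun τ hτ => abs_laguerreHeatOp_le hα hM hτ hx) t ht, Measure.integral_compProd]
  · rw [hμ, integral_withDensity_eq_integral_smul hkm.nnnorm]
    refine integral_congr_ae (hkK.mono fun τ h => ?_)
    simp only [hκ, integral_const_mul, h, NNReal.smul_def, coe_nnnorm, smul_eq_mul,
      Real.norm_eq_abs, laguerreHeatOp]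
    rcases eq_or_ne (k τ) 0 with h0 | h0
    · simp [h0]
    · have := abs_pos.2 h0
      field_simp
  · refine Integrable.of_bound (C := M) (by fun_prop) (hM'.mono fun q hq => ?_)
    rw [norm_mul, Real.norm_eq_abs, Real.norm_eq_abs, abs_div, abs_abs]
    calc _ ≤ 1 * |g q.2| := by gcongr; exact div_self_le_one _
      _ ≤ M := by rw [one_mul]; exact hM _ hq

/-- The Laguerre measure on the positive orthant. -/
noncomputable def laguerreMeasure {d : ℕ} (α : Fin d → ℝ) : Measure (Fin d → ℝ) :=
  (volume.restrict (posOrthant d)).withDensity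
    fun x => ∏ j, ENNReal.ofReal (x j ^ α j * exp (-x j))

lemma measurable_laguerreWeight {d : ℕ} (α : Fin d → ℝ) :
    Measurable fun x : Fin d → ℝ => ∏ j, ENNReal.ofReal (x j ^ α j * exp (-x j)) := by
  fun_prop

lemma isFiniteMeasure_laguerreMeasure {d : ℕ} {α : Fin d → ℝ} (hα : ∀ j, -1 < α j) :
    IsFiniteMeasure (laguerreMeasure α) := by
  refine isFiniteMeasure_withDensity ?_
  rw [volume_restrict_posOrthant,
    lintegral_pi_prod (f := fun j x => ENNReal.ofReal (x ^ α j * exp (-x))) _ (by fun_prop)]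
  refine ENNReal.prod_ne_top fun j _ => ?_
  have h := Real.GammaIntegral_convergent (s := α j + 1) (by linarith [hα j])
  have h' : IntegrableOn (fun x : ℝ => x ^ α j * exp (-x)) (Ioi 0) := by
    simpa [mul_comm] using h
  exact h'.lintegral_lt_top.ne

lemma ae_laguerreMeasure_mem {d : ℕ} (α : Fin d → ℝ) :
    ∀ᵐ x ∂laguerreMeasure α, x ∈ posOrthant d :=
  (withDensity_absolutelyContinuous _ _).ae_le (ae_restrict_mem (measurableSet_posOrthant d))

lemma laguerreHeat_symm {a r x y : ℝ} (ha : -1 < a) (hr0 : 0 < r) (hr1 : r < 1) (hx : 0 < x)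
    (hy : 0 < y) :
    ENNReal.ofReal (x ^ a * exp (-x)) * laguerreHeat a r x y =
      ENNReal.ofReal (y ^ a * exp (-y)) * laguerreHeat a r y x := by
  rw [laguerreHeat_eq_ofReal ha hr0 hr1 hx hy, laguerreHeat_eq_ofReal ha hr0 hr1 hy hx,
    ← ENNReal.ofReal_mul (by positivity), ← ENNReal.ofReal_mul (by positivity)]
  have hsplit : ∀ z : ℝ, 0 < z → z ^ a = z ^ (a / 2) * z ^ (a / 2) := fun z hz => by
    rw [← rpow_add hz]; ring_nf
  have hexp : ∀ x y : ℝ, exp (-((r * x + y) / (1 - r)) - a * log r / 2) * exp (-x) =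
      exp (-((x + y) / (1 - r)) - a * log r / 2) := fun x y => by
    rw [← exp_add]
    congr 1
    have : 1 - r ≠ 0 := by linarith
    field_simp
    ring
  have hxa := (rpow_pos_of_pos hx (a / 2)).ne'
  have hya := (rpow_pos_of_pos hy (a / 2)).ne'
  congr 1
  rw [div_rpow hy.le hx.le, div_rpow hx.le hy.le, hsplit x hx, hsplit y hy]
  calc _ = (1 - r)⁻¹ * x ^ (a / 2) * y ^ (a / 2) *
        (exp (-((r * x + y) / (1 - r)) - a * log r / 2) * exp (-x)) *
        besselI a (2 * √(r * x * y) / (1 - r)) := by field_simp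
    _ = (1 - r)⁻¹ * x ^ (a / 2) * y ^ (a / 2) *
        (exp (-((r * y + x) / (1 - r)) - a * log r / 2) * exp (-y)) *
        besselI a (2 * √(r * y * x) / (1 - r)) := by
      rw [hexp, hexp, add_comm x y, mul_right_comm r x y]
    _ = _ := by field_simp

open ProbabilityTheory in
lemma lintegral_laguerreMeasure_compProd {d : ℕ} {α : Fin d → ℝ} {τ : ℝ}
    {F : (Fin d → ℝ) × (Fin d → ℝ) → ENNReal} (hF : Measurable F)
    [SFinite (laguerreMeasure α)] :
    ∫⁻ q, F q ∂(laguerreMeasure α ⊗ₘ laguerreHeatAt α τ) =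
      ∫⁻ x in posOrthant d, ∫⁻ y in posOrthant d,
        (∏ j, ENNReal.ofReal (x j ^ α j * exp (-x j))) * laguerreHeatDensity α τ x y * F (x, y) := by
  have hD : Measurable fun q : (Fin d → ℝ) × (Fin d → ℝ) =>
      (laguerreHeatDensity α τ q.1 q.2 : ENNReal) :=
    ((measurable_laguerreHeatDensity α).comp
      (f := fun q : (Fin d → ℝ) × (Fin d → ℝ) => ((τ, q.1), q.2))
      (by fun_prop)).coe_nnreal_ennreal
  have hDF : Measurable fun q : (Fin d → ℝ) × (Fin d → ℝ) =>
      (laguerreHeatDensity α τ q.1 q.2 : ENNReal) * F (q.1, q.2) := hD.mul hF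
  have hin : ∀ x, ∫⁻ y, F (x, y) ∂laguerreHeatAt α τ x =
      ∫⁻ y in posOrthant d, laguerreHeatDensity α τ x y * F (x, y) := fun x => by
    rw [laguerreHeatAt_apply, lintegral_laguerreHeatKernel _ (τ, x) (g := fun y => F (x, y))
      (hF.comp measurable_prodMk_left)]
  rw [Measure.lintegral_compProd hF]
  simp_rw [hin]
  rw [laguerreMeasure, lintegral_withDensity_eq_lintegral_mul _ (measurable_laguerreWeight α)]
  · refine lintegral_congr fun x => ?_
    simp only [Pi.mul_apply, mul_assoc]
    exact (lintegral_const_mul _ (hDF.comp measurable_prodMk_left)).symm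
  · exact hDF.lintegral_prod_right'

open ProbabilityTheory in
lemma map_swap_laguerreMeasure_compProd {d : ℕ} {α : Fin d → ℝ} (hα : ∀ j, -1 < α j) {τ : ℝ}
    (hτ : 0 < τ) :
    (laguerreMeasure α ⊗ₘ laguerreHeatAt α τ).map Prod.swap =
      laguerreMeasure α ⊗ₘ laguerreHeatAt α τ := by
  have := isFiniteMeasure_laguerreMeasure hα
  ext s hs
  have hi : Measurable (s.indicator (1 : (Fin d → ℝ) × (Fin d → ℝ) → ENNReal)) :=
    measurable_one.indicator hs
  rw [← lintegral_indicator_one hs, ← lintegral_indicator_one hs,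
    lintegral_map hi measurable_swap, lintegral_laguerreMeasure_compProd hi,
    lintegral_laguerreMeasure_compProd
      (F := fun q => s.indicator 1 q.swap) (hi.comp measurable_swap), lintegral_lintegral_swap]
  · refine setLIntegral_congr_fun (measurableSet_posOrthant d) fun y hy => ?_
    refine setLIntegral_congr_fun (measurableSet_posOrthant d) fun x hx => ?_
    simp only [Prod.swap]
    rw [coe_laguerreHeatDensity hα hτ hx hy, coe_laguerreHeatDensity hα hτ hy hx,
      ← Finset.prod_mul_distrib, ← Finset.prod_mul_distrib]
    congr 1
    exact Finset.prod_congr rfl fun j _ => laguerreHeat_symm (hα j) (exp_pos _)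
      (exp_lt_one_iff.2 (by linarith)) (hx j (mem_univ j)) (hy j (mem_univ j))
  · have hD : Measurable fun q : (Fin d → ℝ) × (Fin d → ℝ) =>
        (laguerreHeatDensity α τ q.1 q.2 : ENNReal) :=
      ((measurable_laguerreHeatDensity α).comp
        (f := fun q : (Fin d → ℝ) × (Fin d → ℝ) => ((τ, q.1), q.2))
        (by fun_prop)).coe_nnreal_ennreal
    exact ((((measurable_laguerreWeight α).comp measurable_fst).mul hD).mul
      (hi.comp measurable_swap)).aemeasurable

open ProbabilityTheory in
lemma integral_laguerreHeatOp_symm {d : ℕ} {α : Fin d → ℝ} (hα : ∀ j, -1 < α j)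
    {f φ : (Fin d → ℝ) → ℝ} {M N : ℝ} (hf : Measurable f) (hM : ∀ y ∈ posOrthant d, |f y| ≤ M)
    (hφ : Measurable φ) (hN : ∀ y ∈ posOrthant d, |φ y| ≤ N) {τ : ℝ} (hτ : 0 < τ) :
    ∫ x, φ x * laguerreHeatOp α f τ x ∂laguerreMeasure α =
      ∫ x, f x * laguerreHeatOp α φ τ x ∂laguerreMeasure α := by
  have := isFiniteMeasure_laguerreMeasure hα
  set μ := laguerreMeasure α ⊗ₘ laguerreHeatAt α τ with hμ
  have hfin : IsFiniteMeasure μ := by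
    refine ⟨?_⟩
    rw [hμ, Measure.compProd_apply MeasurableSet.univ, lintegral_congr_ae (g := fun _ => 1)]
    · simp
    · filter_upwards [ae_laguerreMeasure_mem α] with x hx
      have := isProbabilityMeasure_laguerreHeatKernel hα hτ hx
      simp [laguerreHeatAt_apply]
  have hsupp : ∀ᵐ q ∂μ, q.1 ∈ posOrthant d ∧ q.2 ∈ posOrthant d := by
    refine Measure.ae_compProd_of_ae_ae
      ((measurable_fst (measurableSet_posOrthant d)).inter
        (measurable_snd (measurableSet_posOrthant d))) ?_
    filter_upwards [ae_laguerreMeasure_mem α] with x hx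
    rw [laguerreHeatAt_apply]
    filter_upwards [ae_laguerreHeatKernel_mem α (τ, x)] with y hy using ⟨hx, hy⟩
  have hI : ∀ (f φ : (Fin d → ℝ) → ℝ) (M N : ℝ), Measurable f →
      (∀ y ∈ posOrthant d, |f y| ≤ M) → Measurable φ → (∀ y ∈ posOrthant d, |φ y| ≤ N) →
      ∫ x, φ x * laguerreHeatOp α f τ x ∂laguerreMeasure α = ∫ q, φ q.1 * f q.2 ∂μ := by
    intro f φ M N hf hM hφ hN
    rw [hμ, Measure.integral_compProd]
    · simp only [integral_const_mul, laguerreHeatAt_apply, laguerreHeatOp]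
    · refine Integrable.of_bound (C := N * M) (by fun_prop) (hsupp.mono fun q hq => ?_)
      rw [norm_mul]
      exact mul_le_mul (hN _ hq.1) (hM _ hq.2) (abs_nonneg _) ((abs_nonneg _).trans (hN _ hq.1))
  rw [hI f φ M N hf hM hφ hN, hI φ f N M hφ hN hf hM]
  conv_lhs => rw [hμ, ← map_swap_laguerreMeasure_compProd hα hτ]
  rw [integral_map measurable_swap.aemeasurable (by fun_prop)]
  exact integral_congr_ae (ae_of_all _ fun q => mul_comm _ _)

lemma integral_mul_plP {d : ℕ} {α : Fin d → ℝ} (hα : ∀ j, -1 < α j)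
    {f φ : (Fin d → ℝ) → ℝ} {M N : ℝ} (hf : Measurable f) (hM : ∀ y ∈ posOrthant d, |f y| ≤ M)
    (hφ : Measurable φ) (hN : ∀ y ∈ posOrthant d, |φ y| ≤ N) {t : ℝ} (ht : 0 < t) :
    ∫ x, φ x * plP d α t f x ∂laguerreMeasure α =
      ∫ τ in Ioi 0, stableDensity t τ * ∫ x, φ x * laguerreHeatOp α f τ x ∂laguerreMeasure α := by
  have := isFiniteMeasure_laguerreMeasure hα
  have hF : Measurable (Function.uncurry fun (x : Fin d → ℝ) (τ : ℝ) =>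
      φ x * (stableDensity t τ * laguerreHeatOp α f τ x)) :=
    (hφ.comp measurable_fst).mul (((measurable_stableDensity t).comp measurable_snd).mul
      ((measurable_laguerreHeatOp α hf).comp measurable_swap))
  have hintg : Integrable (Function.uncurry fun (x : Fin d → ℝ) (τ : ℝ) =>
      φ x * (stableDensity t τ * laguerreHeatOp α f τ x))
      ((laguerreMeasure α).prod (volume.restrict (Ioi 0))) := by
    refine Integrable.mono' (g := fun q => N * (stableDensity t q.2 * M))
      ((((integrableOn_stableDensity ht).comp_snd _).mul_const M).const_mul N)
      hF.aestronglyMeasurable ?_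
    have h1 : ∀ᵐ q ∂(laguerreMeasure α).prod (volume.restrict (Ioi (0 : ℝ))),
        q.1 ∈ posOrthant d := Measure.quasiMeasurePreserving_fst.ae (ae_laguerreMeasure_mem α)
    have h2 : ∀ᵐ q ∂(laguerreMeasure α).prod (volume.restrict (Ioi (0 : ℝ))),
        q.2 ∈ Ioi (0 : ℝ) := Measure.quasiMeasurePreserving_snd.ae
          (ae_restrict_mem measurableSet_Ioi)
    filter_upwards [h1, h2] with q hq1 hq2
    have h3 := stableDensity_nonneg ht hq2
    rw [Function.uncurry, norm_mul, norm_mul, Real.norm_eq_abs (stableDensity t q.2),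
      abs_of_nonneg h3]
    have h4 : ‖laguerreHeatOp α f q.2 q.1‖ ≤ M := abs_laguerreHeatOp_le hα hM hq2 hq1
    exact mul_le_mul (hN _ hq1) (mul_le_mul_of_nonneg_left h4 h3) (by positivity)
      ((abs_nonneg _).trans (hN _ hq1))
  calc _ = ∫ x, (∫ τ in Ioi 0, φ x * (stableDensity t τ * laguerreHeatOp α f τ x))
        ∂laguerreMeasure α := by
        refine integral_congr_ae ((ae_laguerreMeasure_mem α).mono fun x hx => ?_)
        simp only
        rw [plP_eq_integral hα hf hM ht hx, integral_const_mul]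
    _ = _ := by
        rw [integral_integral_swap hintg]
        refine setIntegral_congr_fun measurableSet_Ioi fun τ hτ => ?_
        rw [← integral_const_mul]
        exact integral_congr_ae (ae_of_all _ fun x => by ring)

lemma integral_mul_plP_symm {d : ℕ} {α : Fin d → ℝ} (hα : ∀ j, -1 < α j)
    {f φ : (Fin d → ℝ) → ℝ} {M N : ℝ} (hf : Measurable f) (hM : ∀ y ∈ posOrthant d, |f y| ≤ M)
    (hφ : Measurable φ) (hN : ∀ y ∈ posOrthant d, |φ y| ≤ N) {t : ℝ} (ht : 0 < t) :
    ∫ x, φ x * plP d α t f x ∂laguerreMeasure α =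
      ∫ x, f x * plP d α t φ x ∂laguerreMeasure α := by
  rw [integral_mul_plP hα hf hM hφ hN ht, integral_mul_plP hα hφ hN hf hM ht]
  refine setIntegral_congr_fun measurableSet_Ioi fun τ hτ => ?_
  rw [integral_laguerreHeatOp_symm hα hf hM hφ hN hτ]

lemma tendsto_plP_exp {d : ℕ} {α : Fin d → ℝ} (hα : ∀ j, -1 < α j) {p : Fin d → ℝ}
    (hp : ∀ j, 0 ≤ p j) (hN : ∀ y ∈ posOrthant d, |exp (-∑ j, p j * y j)| ≤ 1)
    {x : Fin d → ℝ} (hx : x ∈ posOrthant d) :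
    Tendsto (fun t => plP d α t (fun y => exp (-∑ j, p j * y j)) x) (𝓝[>] 0)
      (𝓝 (exp (-∑ j, p j * x j))) := by
  have hm : Measurable fun y : Fin d → ℝ => exp (-∑ j, p j * y j) := by fun_prop
  set F : ℝ → ℝ := fun τ => (∏ j, (1 + p j * (1 - exp (-τ))) ^ (-(α j + 1))) *
        exp (-∑ j, exp (-τ) * p j / (1 + p j * (1 - exp (-τ))) * x j) with hFdef
  have hF0 : F 0 = exp (-∑ j, p j * x j) := by simp [hFdef]
  have hFc : ContinuousAt F 0 := by
    refine ContinuousAt.mul (tendsto_finsetProd _ fun j _ => ?_) ?_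
    · exact ContinuousAt.rpow_const (by fun_prop) (Or.inl (by simp))
    · refine ContinuousAt.rexp (ContinuousAt.neg (tendsto_finsetSum _ fun j _ => ?_))
      refine ContinuousAt.mul (ContinuousAt.div (by fun_prop) (by fun_prop) (by simp)) (by fun_prop)
  have hFH : ∀ τ, 0 < τ → laguerreHeatOp α (fun y => exp (-∑ j, p j * y j)) τ x = F τ := by
    intro τ hτ
    have h1 : 0 < 1 - exp (-τ) := by
      have := exp_lt_one_iff.2 (show -τ < 0 by linarith); linarith
    have hc : ∀ j, 0 ≤ 1 + p j * (1 - exp (-τ)) := fun j => by have := hp j; positivity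
    rw [laguerreHeatOp, integral_eq_lintegral_of_nonneg_ae (ae_of_all _ fun y => (exp_pos _).le)
      hm.aestronglyMeasurable, lintegral_laguerreHeatKernel_exp hα hτ hx hp,
      ENNReal.toReal_ofReal]
    exact mul_nonneg (Finset.prod_nonneg fun j _ => rpow_nonneg (hc j) _) (exp_pos _).le
  have hL : Tendsto (fun τ => laguerreHeatOp α (fun y => exp (-∑ j, p j * y j)) τ x) (𝓝[>] 0)
      (𝓝 (exp (-∑ j, p j * x j))) := by
    rw [← hF0]
    refine (hFc.tendsto.mono_left nhdsWithin_le_nhds).congr' ?_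
    filter_upwards [self_mem_nhdsWithin] with τ hτ using (hFH τ hτ).symm
  refine (tendsto_integral_stableDensity_mul (measurable_laguerreHeatOp_time α hm x)
    (fun τ hτ => abs_laguerreHeatOp_le hα hN hτ hx) hL).congr' ?_
  filter_upwards [self_mem_nhdsWithin] with t ht using (plP_eq_integral hα hm hN ht hx).symm

lemma ae_eq_of_tendsto_plP {d : ℕ} {α : Fin d → ℝ} (hα : ∀ j, -1 < α j)
    {f g : (Fin d → ℝ) → ℝ} {M : ℝ} (hf : Measurable f) (hM : ∀ y ∈ posOrthant d, |f y| ≤ M)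
    (hg : ∀ x ∈ posOrthant d, Tendsto (fun t => plP d α t f x) (𝓝[>] 0) (𝓝 (g x))) :
    ∀ᵐ x ∂volume.restrict (posOrthant d), g x = f x := by
  have hfin := isFiniteMeasure_laguerreMeasure hα
  set ν := laguerreMeasure α with hν
  have hsupp : ∀ᵐ x ∂ν, x ∈ posOrthant d := ae_laguerreMeasure_mem α
  have hpos : ∀ᶠ t in 𝓝[>] (0 : ℝ), 0 < t := self_mem_nhdsWithin
  have hgM : ∀ x ∈ posOrthant d, |g x| ≤ M := fun x hx =>
    le_of_tendsto (hg x hx).abs (hpos.mono fun t ht => abs_plP_le hα hf hM ht.le hx)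
  have hsub : ∀ x ∈ posOrthant d, ∀ᶠ t in 𝓝[>] (0 : ℝ), plP d α t f x = subordinatedP α f t x :=
    fun x hx => hpos.mono fun t ht => plP_eq_subordinatedP hα hf hM ht.le hx
  have hsm : ∀ (f : (Fin d → ℝ) → ℝ), Measurable f → ∀ t, Measurable (subordinatedP α f t) :=
    fun f hf t => (measurable_subordinatedP α hf).comp measurable_prodMk_left
  have hgm : AEMeasurable g ν := aemeasurable_of_tendsto_metrizable_ae (𝓝[>] (0 : ℝ))
    (fun t => (hsm f hf t).aemeasurable)
    (hsupp.mono fun x hx => (hg x hx).congr' (hsub x hx))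
  have hpm : ∀ f : (Fin d → ℝ) → ℝ, Measurable f → (∀ N, (∀ y ∈ posOrthant d, |f y| ≤ N) →
      ∀ t, 0 < t → AEStronglyMeasurable (fun x => plP d α t f x) ν) := fun f hf N hN t ht =>
    (hsm f hf t).aestronglyMeasurable.congr
      (hsupp.mono fun x hx => (plP_eq_subordinatedP hα hf hN ht.le hx).symm)
  have key : ∀ p : Fin d → ℕ, ∫ x, exp (-∑ j, (p j : ℝ) * x j) * g x ∂ν =
      ∫ x, exp (-∑ j, (p j : ℝ) * x j) * f x ∂ν := by
    intro p
    set φ : (Fin d → ℝ) → ℝ := fun x => exp (-∑ j, (p j : ℝ) * x j) with hφ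
    have hφm : Measurable φ := by fun_prop
    have hφ1 : ∀ y ∈ posOrthant d, |φ y| ≤ 1 := fun y hy => by
      rw [abs_of_pos (exp_pos _), exp_le_one_iff, neg_nonpos]
      exact Finset.sum_nonneg fun j _ => mul_nonneg (Nat.cast_nonneg _)
        (le_of_lt (hy j (mem_univ j)))
    have h1 : Tendsto (fun t => ∫ x, φ x * plP d α t f x ∂ν) (𝓝[>] 0)
        (𝓝 (∫ x, φ x * g x ∂ν)) := by
      refine tendsto_integral_filter_of_dominated_convergence (fun _ => 1 * M) ?_ ?_
        (integrable_const _) (hsupp.mono fun x hx => (hg x hx).const_mul _)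
      · exact hpos.mono fun t ht => hφm.aestronglyMeasurable.mul (hpm f hf M hM t ht)
      · refine hpos.mono fun t ht => hsupp.mono fun x hx => ?_
        rw [norm_mul]
        exact mul_le_mul (hφ1 x hx) (abs_plP_le hα hf hM ht.le hx) (norm_nonneg _) zero_le_one
    have h2 : Tendsto (fun t => ∫ x, f x * plP d α t φ x ∂ν) (𝓝[>] 0)
        (𝓝 (∫ x, f x * φ x ∂ν)) := by
      refine tendsto_integral_filter_of_dominated_convergence (fun _ => M * 1) ?_ ?_
        (integrable_const _) (hsupp.mono fun x hx => (tendsto_plP_exp hα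
          (fun j => Nat.cast_nonneg (p j)) hφ1 hx).const_mul _)
      · exact hpos.mono fun t ht => hf.aestronglyMeasurable.mul (hpm φ hφm 1 hφ1 t ht)
      · refine hpos.mono fun t ht => hsupp.mono fun x hx => ?_
        rw [norm_mul]
        exact mul_le_mul (hM x hx) (abs_plP_le hα hφm hφ1 ht.le hx) (norm_nonneg _)
          ((abs_nonneg _).trans (hM x hx))
    have h3 := tendsto_nhds_unique (h1.congr' (hpos.mono fun t ht =>
      integral_mul_plP_symm hα hf hM hφm hφ1 ht)) h2
    rw [h3]
    exact integral_congr_ae (ae_of_all _ fun x => mul_comm _ _)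
  have hlap : ∀ h : (Fin d → ℝ) → ℝ, AEMeasurable h ν → (∀ x ∈ posOrthant d, |h x| ≤ M) →
      ∀ p : Fin d → ℕ, ∫ x, exp (-∑ j, (p j : ℝ) * x j)
          ∂ν.withDensity (fun x => ENNReal.ofReal (h x + M)) =
        ∫ x, exp (-∑ j, (p j : ℝ) * x j) * h x ∂ν + ∫ x, exp (-∑ j, (p j : ℝ) * x j) * M ∂ν := by
    intro h hh hhM p
    have hφm : Measurable fun x : Fin d → ℝ => exp (-∑ j, (p j : ℝ) * x j) := by fun_prop
    have hφi : Integrable (fun x : Fin d → ℝ => exp (-∑ j, (p j : ℝ) * x j)) ν := by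
      refine Integrable.of_bound hφm.aestronglyMeasurable 1 (hsupp.mono fun y hy => ?_)
      rw [Real.norm_eq_abs, abs_of_pos (exp_pos _), exp_le_one_iff, neg_nonpos]
      exact Finset.sum_nonneg fun j _ => mul_nonneg (Nat.cast_nonneg _)
        (le_of_lt (hy j (mem_univ j)))
    rw [integral_withDensity_eq_integral_toReal_smul₀ (hh.add_const M).ennreal_ofReal
      (ae_of_all _ fun _ => ENNReal.ofReal_lt_top), ← integral_add]
    · refine integral_congr_ae (hsupp.mono fun x hx => ?_)
      have := (abs_le.1 (hhM x hx)).1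
      simp only [smul_eq_mul]
      rw [ENNReal.toReal_ofReal (by linarith)]
      ring
    · exact hφi.mul_bdd (c := M) hh.aestronglyMeasurable (hsupp.mono hhM)
    · exact hφi.mul_const M
  have hfi : ∀ h : (Fin d → ℝ) → ℝ, (∀ x ∈ posOrthant d, |h x| ≤ M) →
      ∫⁻ x, ENNReal.ofReal (h x + M) ∂ν ≠ ⊤ := fun h hhM => by
    refine ne_top_of_le_ne_top (b := ∫⁻ _, ENNReal.ofReal (M + M) ∂ν) ?_ ?_
    · rw [lintegral_const]
      exact ENNReal.mul_ne_top ENNReal.ofReal_ne_top (measure_ne_top _ _)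
    · exact lintegral_mono_ae (hsupp.mono fun x hx => ENNReal.ofReal_le_ofReal
        (by have := (abs_le.1 (hhM x hx)).2; linarith))
  have := isFiniteMeasure_withDensity (hfi f hM)
  have := isFiniteMeasure_withDensity (hfi g hgM)
  have heq : ν.withDensity (fun x => ENNReal.ofReal (g x + M)) =
      ν.withDensity (fun x => ENNReal.ofReal (f x + M)) := by
    refine measure_eq_of_laplace_eq ((withDensity_absolutelyContinuous _ _).ae_le hsupp)
      ((withDensity_absolutelyContinuous _ _).ae_le hsupp) fun p => ?_
    rw [hlap g hgm hgM, hlap f hf.aemeasurable hM, key p]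
  have hae := (withDensity_eq_iff (hgm.add_const M).ennreal_ofReal
    (hf.add_const M).ennreal_ofReal.aemeasurable (hfi g hgM)).1 heq
  rw [hν, laguerreMeasure, Filter.EventuallyEq,
    ae_withDensity_iff (measurable_laguerreWeight α)] at hae
  filter_upwards [hae, ae_restrict_mem (measurableSet_posOrthant d)] with x hx hxo
  have hne : (∏ j, ENNReal.ofReal (x j ^ α j * exp (-x j))) ≠ 0 := by
    refine Finset.prod_ne_zero_iff.2 fun j _ => ?_
    have : 0 < x j := hxo j (mem_univ j)
    exact (ENNReal.ofReal_pos.2 (by positivity)).ne'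
  have h1 := (abs_le.1 (hgM x hxo)).1
  have h2 := (abs_le.1 (hM x hxo)).1
  have := (ENNReal.ofReal_eq_ofReal_iff (by linarith) (by linarith)).1 (hx hne)
  linarith

lemma abs_integral_mul_le {X : Type*} [MeasurableSpace X] {ρ : Measure X} [IsFiniteMeasure ρ]
    {w g : X → ℝ} {B : ℝ} (hw : ∀ q, |w q| ≤ 1) (hg : ∀ᵐ q ∂ρ, |g q| ≤ B) :
    |∫ q, w q * g q ∂ρ| ≤ B * ρ.real univ := by
  have h : ∀ᵐ q ∂ρ, ‖w q * g q‖ ≤ B := hg.mono fun q hq => by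
    rw [norm_mul, Real.norm_eq_abs, Real.norm_eq_abs]
    exact (mul_le_mul (hw q) hq (abs_nonneg _) zero_le_one).trans_eq (one_mul B)
  exact norm_integral_le_of_norm_le_const h

lemma exists_abs_iteratedDeriv_plP_le {d : ℕ} {α : Fin d → ℝ} (hα : ∀ j, -1 < α j) (i : ℕ) :
    ∃ C ≥ 0, ∀ (f : (Fin d → ℝ) → ℝ) (M : ℝ), Measurable f → (∀ y ∈ posOrthant d, |f y| ≤ M) →
      ∀ x ∈ posOrthant d, ∀ t, 0 < t →
        |iteratedDeriv i (fun t => plP d α t f x) t| ≤ C * M * t ^ (-(i : ℝ)) := by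
  obtain ⟨C, hC, h⟩ := exists_measure_iteratedDeriv_plP hα i
  refine ⟨C, hC, fun f M hf hM x hx t ht => ?_⟩
  obtain ⟨ρ, w, hρ, hmass, -, hw1, hac, hrep⟩ := h t ht x hx
  have hM0 : 0 ≤ M := (abs_nonneg _).trans (hM x hx)
  have hsupp := hac _ (measurableSet_posOrthant d) (ae_restrict_mem (measurableSet_posOrthant d))
  rw [hrep f M hf hM]
  calc |∫ q, w q * f q.2 ∂ρ| ≤ M * ρ.real univ := abs_integral_mul_le hw1 (hsupp.mono fun q hq => hM _ hq)
    _ ≤ M * (C * t ^ (-(i : ℝ))) := by gcongr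
    _ = C * M * t ^ (-(i : ℝ)) := by ring

lemma integral_integral_laguerreHeatOp_swap {d : ℕ} {α : Fin d → ℝ} (hα : ∀ j, -1 < α j)
    {f : (Fin d → ℝ) → ℝ} {M : ℝ} (hf : Measurable f) (hM : ∀ y ∈ posOrthant d, |f y| ≤ M)
    {ρ : Measure (ℝ × (Fin d → ℝ))} [IsFiniteMeasure ρ] {w : ℝ × (Fin d → ℝ) → ℝ}
    (hw : Measurable w) (hw1 : ∀ q, |w q| ≤ 1) (hρ : ∀ᵐ q ∂ρ, q.2 ∈ posOrthant d)
    {k : ℝ → ℝ} (hk : IntegrableOn k (Ioi 0)) :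
    ∫ q, w q * (∫ τ in Ioi 0, k τ * laguerreHeatOp α f τ q.2) ∂ρ =
      ∫ τ in Ioi 0, k τ * ∫ q, w q * laguerreHeatOp α f τ q.2 ∂ρ := by
  have hintg : Integrable (Function.uncurry fun (q : ℝ × (Fin d → ℝ)) (τ : ℝ) =>
      k τ * (w q * laguerreHeatOp α f τ q.2)) (ρ.prod (volume.restrict (Ioi 0))) := by
    refine Integrable.mul_bdd (c := M) (hk.comp_snd ρ) (Measurable.aestronglyMeasurable ?_) ?_
    · exact (hw.comp measurable_fst).mul ((measurable_laguerreHeatOp α hf).comp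
        (f := fun p : (ℝ × (Fin d → ℝ)) × ℝ => (p.2, p.1.2)) (by fun_prop))
    · have h1 : ∀ᵐ p ∂ρ.prod (volume.restrict (Ioi (0 : ℝ))), p.1.2 ∈ posOrthant d :=
        Measure.quasiMeasurePreserving_fst.ae hρ
      have h2 : ∀ᵐ p ∂ρ.prod (volume.restrict (Ioi (0 : ℝ))), p.2 ∈ Ioi (0 : ℝ) :=
        Measure.quasiMeasurePreserving_snd.ae (ae_restrict_mem measurableSet_Ioi)
      filter_upwards [h1, h2] with p hp1 hp2
      rw [norm_mul, Real.norm_eq_abs, Real.norm_eq_abs]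
      exact (mul_le_mul (hw1 _) (abs_laguerreHeatOp_le hα hM hp2 hp1) (abs_nonneg _)
        zero_le_one).trans_eq (one_mul M)
  calc _ = ∫ q, (∫ τ in Ioi 0, k τ * (w q * laguerreHeatOp α f τ q.2)) ∂ρ := by
        refine integral_congr_ae (ae_of_all _ fun q => ?_)
        simp only
        rw [← integral_const_mul]
        exact integral_congr_ae (ae_of_all _ fun τ => by ring)
    _ = _ := by
        rw [integral_integral_swap hintg]
        simp only [integral_const_mul]

lemma iteratedDeriv_integral_plP {d : ℕ} {α : Fin d → ℝ} (hα : ∀ j, -1 < α j)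
    {f : (Fin d → ℝ) → ℝ} {M : ℝ} (hf : Measurable f) (hM : ∀ y ∈ posOrthant d, |f y| ≤ M)
    {ρ : Measure (ℝ × (Fin d → ℝ))} [IsFiniteMeasure ρ] {w : ℝ × (Fin d → ℝ) → ℝ}
    (hw : Measurable w) (hw1 : ∀ q, |w q| ≤ 1) (hρ : ∀ᵐ q ∂ρ, q.2 ∈ posOrthant d)
    (n : ℕ) {t : ℝ} (ht : 0 < t) :
    iteratedDeriv n (fun t => ∫ q, w q * plP d α t f q.2 ∂ρ) t =
      ∫ q, w q * iteratedDeriv n (fun t => plP d α t f q.2) t ∂ρ := by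
  obtain ⟨K, C, -, hK, hrep⟩ := exists_kernel_iteratedDeriv_stable n
  set h : ℝ → ℝ := fun τ => ∫ q, w q * laguerreHeatOp α f τ q.2 ∂ρ with hh
  have hhm : Measurable h := by
    have : Measurable fun p : ℝ × (ℝ × (Fin d → ℝ)) => w p.2 * laguerreHeatOp α f p.1 p.2.2 :=
      (hw.comp measurable_snd).mul ((measurable_laguerreHeatOp α hf).comp
        (f := fun p : ℝ × (ℝ × (Fin d → ℝ)) => (p.1, p.2.2)) (by fun_prop))
    exact (this.stronglyMeasurable.integral_prod_right' (ν := ρ)).measurable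
  have hhM : ∀ τ, 0 < τ → |h τ| ≤ M * ρ.real univ := fun τ hτ =>
    abs_integral_mul_le hw1 (hρ.mono fun q hq => abs_laguerreHeatOp_le hα hM hτ hq)
  have hev : (fun t => ∫ q, w q * plP d α t f q.2 ∂ρ) =ᶠ[𝓝 t]
      fun t => ∫ τ in Ioi 0, stableDensity t τ * h τ := by
    filter_upwards [Ioi_mem_nhds ht] with s hs
    rw [← integral_integral_laguerreHeatOp_swap hα hf hM hw hw1 hρ (integrableOn_stableDensity hs)]
    refine integral_congr_ae (hρ.mono fun q hq => ?_)
    simp only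
    rw [plP_eq_integral hα hf hM hs hq]
  rw [hev.iteratedDeriv_eq, hrep h _ hhm hhM t ht,
    ← integral_integral_laguerreHeatOp_swap hα hf hM hw hw1 hρ (hK t ht).1]
  refine integral_congr_ae (hρ.mono fun q hq => ?_)
  simp only
  rw [(eventuallyEq_plP hα hf hM ht hq).iteratedDeriv_eq,
    hrep _ M (measurable_laguerreHeatOp_time α hf q.2)
      (fun τ hτ => abs_laguerreHeatOp_le hα hM hτ hq) t ht]

lemma iteratedDeriv_plP_subordinatedP {d : ℕ} {α : Fin d → ℝ} (hα : ∀ j, -1 < α j)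
    {f : (Fin d → ℝ) → ℝ} {M : ℝ} (hf : Measurable f) (hM : ∀ y ∈ posOrthant d, |f y| ≤ M)
    {s t : ℝ} (hs : 0 < s) (ht : 0 ≤ t) {x : Fin d → ℝ} (hx : x ∈ posOrthant d) (i : ℕ) :
    iteratedDeriv i (fun s => plP d α s (subordinatedP α f t) x) s =
      iteratedDeriv i (fun s => plP d α s f x) (s + t) := by
  have hev : (fun s => plP d α s (subordinatedP α f t) x) =ᶠ[𝓝 s]
      fun s => plP d α (s + t) f x := by
    filter_upwards [Ioi_mem_nhds hs] with r hr using plP_plP hα hf hM hr ht hx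
  rw [hev.iteratedDeriv_eq, iteratedDeriv_comp_add_const i (fun s => plP d α s f x)]

lemma exists_abs_iteratedDeriv_add_plP_le {d : ℕ} {α : Fin d → ℝ} (hα : ∀ j, -1 < α j) (n i : ℕ)
    (σ : ℝ) :
    ∃ K ≥ 0, ∀ (f : (Fin d → ℝ) → ℝ) (M A : ℝ), Measurable f →
      (∀ y ∈ posOrthant d, |f y| ≤ M) →
      (∀ t > 0, ∀ x ∈ posOrthant d, |iteratedDeriv n (fun t => plP d α t f x) t| ≤ A * t ^ σ) →
      ∀ x ∈ posOrthant d, ∀ r, 0 < r →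
        |iteratedDeriv (n + i) (fun t => plP d α t f x) r| ≤ K * A * r ^ (σ - i) := by
  obtain ⟨C, hC, h⟩ := exists_measure_iteratedDeriv_plP hα i
  refine ⟨C * (1 / 2) ^ (σ - i), by positivity, fun f M A hf hM hA x hx r hr => ?_⟩
  have hr2 : 0 < r / 2 := by positivity
  obtain ⟨ρ, w, hρ, hmass, hw, hw1, hac, hrep⟩ := h (r / 2) hr2 x hx
  have hsupp := hac _ (measurableSet_posOrthant d) (ae_restrict_mem (measurableSet_posOrthant d))
  have hA0 : 0 ≤ A := by
    have := (abs_nonneg _).trans (hA 1 one_pos x hx)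
    simpa using this
  set u : ℝ → ℝ := fun t => plP d α t f x with hu
  have hsubm : ∀ t, Measurable (subordinatedP α f t) := fun t =>
    (measurable_subordinatedP α hf).comp measurable_prodMk_left
  have hev : (fun t => iteratedDeriv i u (r / 2 + t)) =ᶠ[𝓝 (r / 2)]
      fun t => ∫ q, w q * plP d α t f q.2 ∂ρ := by
    filter_upwards [Ioi_mem_nhds hr2] with t ht
    have ht0 : 0 ≤ t := le_of_lt ht
    rw [← iteratedDeriv_plP_subordinatedP hα hf hM hr2 ht0 hx, hrep _ M (hsubm t) fun y hy => by
      rw [← plP_eq_subordinatedP hα hf hM ht0 hy]; exact abs_plP_le hα hf hM ht0 hy]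
    refine integral_congr_ae (hsupp.mono fun q hq => ?_)
    simp only
    rw [plP_eq_subordinatedP hα hf hM ht0 hq]
  have h1 : iteratedDeriv (n + i) u r =
      ∫ q, w q * iteratedDeriv n (fun t => plP d α t f q.2) (r / 2) ∂ρ := by
    rw [← iteratedDeriv_integral_plP hα hf hM hw hw1 hsupp n hr2, ← hev.iteratedDeriv_eq,
      iteratedDeriv_comp_const_add n (iteratedDeriv i u)]
    change _ = iteratedDeriv n (iteratedDeriv i u) (r / 2 + r / 2)
    rw [add_halves]
    simp only [iteratedDeriv_eq_iterate, Function.iterate_add_apply]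
  rw [h1]
  calc |∫ q, w q * iteratedDeriv n (fun t => plP d α t f q.2) (r / 2) ∂ρ|
      ≤ A * (r / 2) ^ σ * ρ.real univ :=
        abs_integral_mul_le hw1 (hsupp.mono fun q hq => hA _ hr2 _ hq)
    _ ≤ A * (r / 2) ^ σ * (C * (r / 2) ^ (-(i : ℝ))) := by gcongr
    _ = C * A * ((r / 2) ^ σ * (r / 2) ^ (-(i : ℝ))) := by ring
    _ = C * A * (r * (1 / 2)) ^ (σ - i) := by
        rw [← rpow_add hr2, ← sub_eq_add_neg, mul_one_div]
    _ = C * (1 / 2) ^ (σ - i) * A * r ^ (σ - i) := by rw [mul_rpow hr.le (by norm_num)]; ring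

/-- A two-sided power majorant with a break at `t`. -/
noncomputable def powerMajorant (t a p b q s : ℝ) : ℝ := if s ≤ t then a * s ^ p else b * s ^ q

lemma integrableOn_powerMajorant {t p q : ℝ} (a b : ℝ) (ht : 0 < t) (hp : -1 < p) (hq : q < -1) :
    IntegrableOn (powerMajorant t a p b q) (Ioi 0) ∧
      ∫ s in Ioi 0, powerMajorant t a p b q s =
        a * (t ^ (p + 1) / (p + 1)) + b * (t ^ (q + 1) / (-(q + 1))) := by
  have e1 : EqOn (fun s => a * s ^ p) (powerMajorant t a p b q) (Ioc 0 t) := fun s hs =>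
    (if_pos hs.2).symm
  have e2 : EqOn (fun s => b * s ^ q) (powerMajorant t a p b q) (Ioi t) := fun s hs =>
    (if_neg (not_le.2 hs)).symm
  have i1 : IntegrableOn (fun s => a * s ^ p) (Ioc 0 t) :=
    ((intervalIntegrable_iff_integrableOn_Ioc_of_le ht.le).1
      (intervalIntegral.intervalIntegrable_rpow' hp)).const_mul a
  have i2 : IntegrableOn (fun s => b * s ^ q) (Ioi t) :=
    (integrableOn_Ioi_rpow_of_lt hq ht).const_mul b
  have j1 := i1.congr_fun e1 measurableSet_Ioc
  have j2 := i2.congr_fun e2 measurableSet_Ioi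
  have hU : Ioc 0 t ∪ Ioi t = Ioi 0 := Ioc_union_Ioi_eq_Ioi ht.le
  refine ⟨hU ▸ j1.union j2, ?_⟩
  rw [← hU, setIntegral_union (by
    rw [Set.disjoint_left]; exact fun s hs hs' => (not_lt.2 hs.2) hs') measurableSet_Ioi j1 j2,
    ← setIntegral_congr_fun measurableSet_Ioc e1, ← setIntegral_congr_fun measurableSet_Ioi e2,
    integral_const_mul, integral_const_mul, ← intervalIntegral.integral_of_le ht.le,
    integral_rpow (Or.inl hp), integral_Ioi_rpow_of_lt hq ht, zero_rpow (by linarith), sub_zero,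
    neg_div, div_neg]

lemma abs_integral_le_of_abs_le_powerMajorant {t a p b q : ℝ} (ht : 0 < t) (hp : -1 < p)
    (hq : q < -1) {F : ℝ → ℝ} (hF : ∀ s, 0 < s → |F s| ≤ powerMajorant t a p b q s) :
    |∫ s in Ioi 0, F s| ≤ a * (t ^ (p + 1) / (p + 1)) + b * (t ^ (q + 1) / (-(q + 1))) := by
  obtain ⟨h1, h2⟩ := integrableOn_powerMajorant a b ht hp hq
  rw [← h2]
  exact norm_integral_le_of_norm_le (f := F) h1 ((ae_restrict_mem measurableSet_Ioi).mono fun s hs => hF s hs)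

lemma measurable_orbitDiff_subordinatedP {d : ℕ} (α : Fin d → ℝ) {f : (Fin d → ℝ) → ℝ}
    (hf : Measurable f) (k : ℕ) :
    Measurable fun p : ℝ × (Fin d → ℝ) => orbitDiff k (fun t => subordinatedP α f t p.2) p.1 := by
  unfold orbitDiff
  refine Finset.measurable_fun_sum _ fun j _ => Measurable.mul (by fun_prop) ?_
  exact (measurable_subordinatedP α hf).comp
    (f := fun p : ℝ × (Fin d → ℝ) => (((k - j : ℕ) : ℝ) * p.1, p.2)) (by fun_prop)

lemma orbitDiff_congr {k : ℕ} {u v : ℝ → ℝ} (h : ∀ t, 0 ≤ t → u t = v t) {s : ℝ} (hs : 0 ≤ s) :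
    orbitDiff k u s = orbitDiff k v s :=
  Finset.sum_congr rfl fun j _ => by rw [h _ (by positivity)]

lemma abs_rpow_mul_le_powerMajorant {F : ℝ → ℝ} {t a b p lam s : ℝ} (hs : 0 < s)
    (hsmall : s ≤ t → |F s| ≤ a * s ^ p) (hlarge : t < s → |F s| ≤ b) :
    |s ^ (-lam - 1) * F s| ≤ powerMajorant t a (p - lam - 1) b (-lam - 1) s := by
  have hpos : 0 ≤ s ^ (-lam - 1) := by positivity
  rw [abs_mul, abs_of_nonneg hpos, powerMajorant]
  split_ifs with h
  · calc s ^ (-lam - 1) * |F s| ≤ s ^ (-lam - 1) * (a * s ^ p) := by gcongr; exact hsmall h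
      _ = a * (s ^ p * s ^ (-lam - 1)) := by ring
      _ = a * s ^ (p - lam - 1) := by rw [← rpow_add hs]; ring_nf
  · calc s ^ (-lam - 1) * |F s| ≤ s ^ (-lam - 1) * b := by gcongr; exact hlarge (not_le.1 h)
      _ = b * s ^ (-lam - 1) := mul_comm _ _

/-- When `F` tends to a nonzero limit at `0` the integral diverges, and is `0` by convention. -/
lemma abs_integral_rpow_mul_le {F : ℝ → ℝ} {lam γ a b e : ℝ} (hlam : 0 < lam) (hγ : lam < γ)
    (hsmall : ∀ s, 0 < s → |F s + e| ≤ a * s ^ γ) (hlarge : ∀ s, 0 < s → |F s| ≤ b) :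
    |∫ s in Ioi 0, s ^ (-lam - 1) * F s| ≤ a / (γ - lam) + b / lam := by
  have hγlam : 0 < γ - lam := by linarith
  by_cases he : e = 0
  · subst he
    have h := abs_integral_le_of_abs_le_powerMajorant one_pos (p := γ - lam - 1) (q := -lam - 1)
      (by linarith) (by linarith) fun s hs => abs_rpow_mul_le_powerMajorant (F := F) (t := 1)
        (lam := lam) hs (fun _ => by simpa using hsmall s hs) (fun _ => hlarge s hs)
    simpa [div_eq_mul_inv] using h
  · have ha : 0 ≤ a := by simpa using (abs_nonneg _).trans (hsmall 1 one_pos)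
    have hb : 0 ≤ b := (abs_nonneg _).trans (hlarge 1 one_pos)
    rw [integral_undef, abs_zero]
    · positivity
    intro hintg
    have h1 : IntegrableOn (fun s => s ^ (-lam - 1) * F s) (Ioo 0 1) :=
      IntegrableOn.mono_set hintg Ioo_subset_Ioi_self
    have hmeas : AEStronglyMeasurable (fun s : ℝ => s ^ (-lam - 1) * e)
        (volume.restrict (Ioo 0 1)) := by
      exact Measurable.aestronglyMeasurable (by fun_prop)
    have h2 : IntegrableOn (fun s => s ^ (-lam - 1) * F s + s ^ (-lam - 1) * e) (Ioo 0 1) := by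
      have hpow : IntegrableOn (fun s : ℝ => a * s ^ (γ - lam - 1)) (Ioo 0 1) :=
        ((intervalIntegral.integrableOn_Ioo_rpow_iff one_pos).2 (by linarith)).const_mul a
      refine hpow.mono' (h1.aestronglyMeasurable.add hmeas) ?_
      refine (ae_restrict_mem measurableSet_Ioo).mono fun s hs => ?_
      have hpos : 0 ≤ s ^ (-lam - 1) := rpow_nonneg hs.1.le _
      rw [← mul_add, norm_mul, Real.norm_eq_abs, Real.norm_eq_abs, abs_of_nonneg hpos]
      calc s ^ (-lam - 1) * |F s + e| ≤ s ^ (-lam - 1) * (a * s ^ γ) := by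
            gcongr; exact hsmall s hs.1
        _ = a * (s ^ γ * s ^ (-lam - 1)) := by ring
        _ = a * s ^ (γ - lam - 1) := by rw [← rpow_add hs.1]; ring_nf
    have h3 : IntegrableOn (fun s : ℝ => s ^ (-lam - 1)) (Ioo 0 1) := by
      refine IntegrableOn.congr_fun ((h2.sub h1).mul_const e⁻¹) (fun s _ => ?_) measurableSet_Ioo
      simp only [Pi.sub_apply, add_sub_cancel_left]
      rw [mul_assoc, mul_inv_cancel₀ he, mul_one]
    have := (intervalIntegral.integrableOn_Ioo_rpow_iff one_pos).1 h3
    linarith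

lemma integral_mul_setIntegral_swap {X : Type*} [MeasurableSpace X] {ρ : Measure X}
    [IsFiniteMeasure ρ] {w : X → ℝ} {F : X × ℝ → ℝ} {Φ : ℝ → ℝ} (hw : Measurable w)
    (hw1 : ∀ q, |w q| ≤ 1) (hF : Measurable F) (hΦ : IntegrableOn Φ (Ioi 0))
    (hb : ∀ᵐ q ∂ρ, ∀ s, 0 < s → |F (q, s)| ≤ Φ s) :
    ∫ q, w q * (∫ s in Ioi 0, F (q, s)) ∂ρ = ∫ s in Ioi 0, ∫ q, w q * F (q, s) ∂ρ := by
  have hintg : Integrable (Function.uncurry fun (q : X) (s : ℝ) => w q * F (q, s))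
      (ρ.prod (volume.restrict (Ioi 0))) := by
    have hm : Measurable fun p : X × ℝ => w p.1 * F p := (hw.comp measurable_fst).mul hF
    refine (hΦ.comp_snd ρ).mono' hm.aestronglyMeasurable ?_
    have h1 : ∀ᵐ p ∂ρ.prod (volume.restrict (Ioi (0 : ℝ))), ∀ s, 0 < s → |F (p.1, s)| ≤ Φ s :=
      Measure.quasiMeasurePreserving_fst.ae hb
    have h2 : ∀ᵐ p ∂ρ.prod (volume.restrict (Ioi (0 : ℝ))), p.2 ∈ Ioi (0 : ℝ) :=
      Measure.quasiMeasurePreserving_snd.ae (ae_restrict_mem measurableSet_Ioi)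
    filter_upwards [h1, h2] with p hp1 hp2
    simp only [Function.uncurry, norm_mul, Real.norm_eq_abs]
    exact (mul_le_mul (hw1 _) (hp1 _ hp2) (abs_nonneg _) zero_le_one).trans_eq (one_mul _)
  rw [← integral_integral_swap hintg]
  simp only [integral_const_mul]

lemma integral_mul_orbitDiff_subordinatedP {d : ℕ} {α : Fin d → ℝ} (hα : ∀ j, -1 < α j)
    {f : (Fin d → ℝ) → ℝ} {M : ℝ} (hf : Measurable f) (hM : ∀ y ∈ posOrthant d, |f y| ≤ M)
    {ρ : Measure (ℝ × (Fin d → ℝ))} [IsFiniteMeasure ρ] {w : ℝ × (Fin d → ℝ) → ℝ}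
    (hw : Measurable w) (hw1 : ∀ q, |w q| ≤ 1) (hρ : ∀ᵐ q ∂ρ, q.2 ∈ posOrthant d)
    {n : ℕ} {t : ℝ} (ht : 0 < t) {x : Fin d → ℝ} (hx : x ∈ posOrthant d)
    (hrep : ∀ (g : (Fin d → ℝ) → ℝ) (M : ℝ), Measurable g → (∀ y ∈ posOrthant d, |g y| ≤ M) →
      iteratedDeriv n (fun t => plP d α t g x) t = ∫ q, w q * g q.2 ∂ρ)
    (k : ℕ) {s : ℝ} (hs : 0 ≤ s) :
    ∫ q, w q * orbitDiff k (fun t => subordinatedP α f t q.2) s ∂ρ =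
      orbitDiff k (fun r => iteratedDeriv n (fun t => plP d α t f x) (t + r)) s := by
  have hsubm : ∀ r, Measurable (subordinatedP α f r) := fun r =>
    (measurable_subordinatedP α hf).comp measurable_prodMk_left
  have hsubM : ∀ r, 0 ≤ r → ∀ y ∈ posOrthant d, |subordinatedP α f r y| ≤ M := fun r hr y hy => by
    rw [← plP_eq_subordinatedP hα hf hM hr hy]
    exact abs_plP_le hα hf hM hr hy
  have hintg : ∀ r, 0 ≤ r → Integrable (fun q => w q * subordinatedP α f r q.2) ρ := fun r hr =>
    Integrable.of_bound (hw.mul ((hsubm r).comp measurable_snd)).aestronglyMeasurable M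
      (hρ.mono fun q hq => by
        rw [norm_mul, Real.norm_eq_abs, Real.norm_eq_abs]
        exact (mul_le_mul (hw1 _) (hsubM r hr _ hq) (abs_nonneg _) zero_le_one).trans_eq
          (one_mul _))
  unfold orbitDiff
  calc _ = ∫ q, ∑ j ∈ Finset.range (k + 1), (k.choose j : ℝ) * (-1) ^ j *
          Real.exp (-(((k - j : ℕ) : ℝ) * s)) *
            (w q * subordinatedP α f (((k - j : ℕ) : ℝ) * s) q.2) ∂ρ := by
        refine integral_congr_ae (ae_of_all _ fun q => ?_)
        simp only
        rw [Finset.mul_sum]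
        exact Finset.sum_congr rfl fun j _ => by ring
    _ = _ := by
        rw [integral_finsetSum _ fun j _ => (hintg _ (by positivity)).const_mul _]
        refine Finset.sum_congr rfl fun j _ => ?_
        have h0 : 0 ≤ ((k - j : ℕ) : ℝ) * s := by positivity
        rw [integral_const_mul, ← hrep _ M (hsubm _) (hsubM _ h0),
          iteratedDeriv_plP_subordinatedP hα hf hM ht h0 hx]

/-- The pointwise condition for `f` to be bounded by `M` and `β`-Lipschitz of order `n` with
constant `A` along the Poisson–Laguerre semigroup. -/
structure PoissonLipschitz {d : ℕ} (α : Fin d → ℝ) (β : ℝ) (n : ℕ) (f : (Fin d → ℝ) → ℝ)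
    (M A : ℝ) : Prop where
  measurable : Measurable f
  bound : ∀ y ∈ posOrthant d, |f y| ≤ M
  lipschitz : ∀ t > 0, ∀ x ∈ posOrthant d,
    |iteratedDeriv n (fun t => plP d α t f x) t| ≤ A * t ^ (β - n)

namespace PoissonLipschitz

lemma nonneg_bound {d : ℕ} {α : Fin d → ℝ} {β : ℝ} {n : ℕ} {f : (Fin d → ℝ) → ℝ} {M A : ℝ}
    (h : PoissonLipschitz α β n f M A) : 0 ≤ M :=
  (abs_nonneg _).trans (h.bound (fun _ => 1) fun _ _ => mem_Ioi.2 one_pos)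

lemma nonneg_const {d : ℕ} {α : Fin d → ℝ} {β : ℝ} {n : ℕ} {f : (Fin d → ℝ) → ℝ} {M A : ℝ}
    (h : PoissonLipschitz α β n f M A) : 0 ≤ A := by
  simpa using (abs_nonneg _).trans (h.lipschitz 1 one_pos (fun _ => 1) fun _ _ => mem_Ioi.2 one_pos)

end PoissonLipschitz

lemma exists_abs_orbitDiff_plP_add_le {d : ℕ} {α : Fin d → ℝ} (hα : ∀ j, -1 < α j) {β γ : ℝ}
    {k n : ℕ} (hk : 1 ≤ k) (hkn : k ≤ n) (hγk : γ < k) (hkγ : (k : ℝ) - 1 < γ) (hγβ : γ ≤ β) :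
    ∃ C ≥ 0, ∀ (f : (Fin d → ℝ) → ℝ) (M A : ℝ), PoissonLipschitz α β n f M A →
      ∃ e : (Fin d → ℝ) → ℝ, (∀ x ∈ posOrthant d, ∀ s, 0 < s →
          |orbitDiff k (fun t => plP d α t f x) s + e x| ≤ C * (M + A) * s ^ γ) ∧
        ∀ᵐ x ∂volume.restrict (posOrthant d), e x = 0 := by
  choose c hc0 hc using fun i => exists_abs_iteratedDeriv_plP_le hα i
  obtain ⟨C, hC, h⟩ := LipschitzOrbit.exists_orbitDiff_le (c := c) hc0 hk hkn hγk hkγ hγβ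
  refine ⟨C, hC, fun f M A hf => ?_⟩
  have horb : ∀ x ∈ posOrthant d, LipschitzOrbit c β n (fun t => plP d α t f x) M A :=
    fun x hx =>
    { nonneg_bound := hf.nonneg_bound
      nonneg_const := hf.nonneg_const
      smooth := smoothOnPos_plP hα hf.measurable hf.bound hx
      deriv_bound := fun i t ht => hc i f M hf.measurable hf.bound x hx t ht
      lipschitz_bound := fun t ht => hf.lipschitz t ht x hx }
  choose! L hL hLs using fun x (hx : x ∈ posOrthant d) => h _ M A (horb x hx)
  refine ⟨fun x => (-1) ^ k * (L x - f x), fun x hx s hs => ?_, ?_⟩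
  · simpa only [plP_zero] using hLs x hx s hs
  · filter_upwards [ae_eq_of_tendsto_plP hα hf.measurable hf.bound hL] with x hx
    rw [hx, sub_self, mul_zero]

lemma abs_orbitDiff_plP_le {d : ℕ} {α : Fin d → ℝ} (hα : ∀ j, -1 < α j)
    {f : (Fin d → ℝ) → ℝ} {M : ℝ} (hf : Measurable f) (hM : ∀ y ∈ posOrthant d, |f y| ≤ M)
    (k : ℕ) {x : Fin d → ℝ} (hx : x ∈ posOrthant d) {s : ℝ} (hs : 0 ≤ s) :
    |orbitDiff k (fun t => plP d α t f x) s| ≤ 2 ^ k * M :=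
  abs_orbitDiff_le hs fun _ => abs_plP_le hα hf hM (by positivity) hx

lemma exists_abs_integral_orbitDiff_iteratedDeriv_le {d : ℕ} {α : Fin d → ℝ}
    (hα : ∀ j, -1 < α j) {lam β : ℝ} {k n : ℕ} (hlam : 0 < lam) (hlamk : lam < k) (hβ : β ≤ n) :
    ∃ C ≥ 0, ∀ (f : (Fin d → ℝ) → ℝ) (M A : ℝ), PoissonLipschitz α β n f M A →
      ∀ x ∈ posOrthant d, ∀ t, 0 < t → t ≤ 1 →
        |∫ s in Ioi 0, s ^ (-lam - 1) *
          orbitDiff k (fun r => iteratedDeriv n (fun t => plP d α t f x) (t + r)) s| ≤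
            C * A * t ^ (β - lam - n) := by
  choose K hK0 hK using fun i => exists_abs_iteratedDeriv_add_plP_le hα n i (β - n)
  set S := ∑ i ∈ Finset.range (k + 1), K i with hS
  have hS0 : 0 ≤ S := Finset.sum_nonneg fun i _ => hK0 i
  have hklam : 0 < k - lam := by linarith
  refine ⟨2 ^ k * (S / (k - lam) + 1 / lam), by positivity, fun f M A hf x hx t ht ht1 => ?_⟩
  have hA := hf.nonneg_const
  have hKS : ∀ i ≤ k, ∀ r, 0 < r → |iteratedDeriv (n + i) (fun t => plP d α t f x) r| ≤
      S * A * r ^ (β - n - i) := fun i hi r hr => by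
    refine (hK i f M A hf.measurable hf.bound hf.lipschitz x hx r hr).trans ?_
    gcongr
    exact Finset.single_le_sum (f := K) (fun i _ => hK0 i) (Finset.mem_range.2 (by omega))
  have h := abs_integral_le_of_abs_le_powerMajorant ht (p := (k : ℝ) - lam - 1) (q := -lam - 1)
    (by linarith) (by linarith) fun s hs => abs_rpow_mul_le_powerMajorant (t := t) (lam := lam)
      (F := orbitDiff k (fun r => iteratedDeriv n (fun t => plP d α t f x) (t + r))) hs
      (fun _ => by
        rw [rpow_natCast]
        exact abs_orbitDiff_iteratedDeriv_le (smoothOnPos_plP hα hf.measurable hf.bound hx) hA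
          hS0 (sub_nonpos.2 hβ) hKS hs ht ht1)
      (fun _ => abs_orbitDiff_le (B := A * t ^ (β - n)) hs.le fun j => by
        have hjs : 0 ≤ (j : ℝ) * s := by positivity
        refine (hf.lipschitz _ (by linarith) x hx).trans ?_
        exact mul_le_mul_of_nonneg_left
          (rpow_le_rpow_of_nonpos ht (by linarith) (sub_nonpos.2 hβ)) hA)
  refine h.trans_eq ?_
  have e1 : t ^ (β - n - k) * t ^ ((k : ℝ) - lam - 1 + 1) = t ^ (β - lam - n) := by
    rw [← rpow_add ht]; ring_nf
  have e2 : t ^ (β - n) * t ^ (-lam - 1 + 1) = t ^ (β - lam - n) := by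
    rw [← rpow_add ht]; ring_nf
  have e3 : -(-lam - 1 + 1) = lam := by ring
  calc _ = 2 ^ k * S * A * (t ^ (β - n - k) * t ^ ((k : ℝ) - lam - 1 + 1)) / (k - lam - 1 + 1) +
        2 ^ k * A * (t ^ (β - n) * t ^ (-lam - 1 + 1)) / -(-lam - 1 + 1) := by ring
    _ = _ := by rw [e1, e2, e3, sub_add_cancel]; ring

lemma iteratedDeriv_plP_besselLaguerreFracDerivK {d : ℕ} {α : Fin d → ℝ} (hα : ∀ j, -1 < α j)
    {f : (Fin d → ℝ) → ℝ} {lam γ a b B M : ℝ} {k : ℕ} (hlam : 0 < lam) (hγ : lam < γ)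
    (hf : Measurable f) (hM : ∀ y ∈ posOrthant d, |f y| ≤ M)
    (hB : ∀ x ∈ posOrthant d, |besselLaguerreFracDerivK d α lam k f x| ≤ B)
    (hsmall : ∀ᵐ x ∂volume.restrict (posOrthant d), ∀ s, 0 < s →
      |orbitDiff k (fun t => plP d α t f x) s| ≤ a * s ^ γ)
    (hlarge : ∀ x ∈ posOrthant d, ∀ s, 0 < s → |orbitDiff k (fun t => plP d α t f x) s| ≤ b)
    (n : ℕ) {t : ℝ} (ht : 0 < t) {x : Fin d → ℝ} (hx : x ∈ posOrthant d) :
    iteratedDeriv n (fun t => plP d α t (besselLaguerreFracDerivK d α lam k f) x) t =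
      (1 / ∫ u in Ioi (0 : ℝ), u ^ (-lam - 1) * (Real.exp (-u) - 1) ^ k) *
        ∫ s in Ioi 0, s ^ (-lam - 1) *
          orbitDiff k (fun r => iteratedDeriv n (fun t => plP d α t f x) (t + r)) s := by
  obtain ⟨_, -, h⟩ := exists_measure_iteratedDeriv_plP hα n
  obtain ⟨ρ, w, hρ, -, hw, hw1, hac, hrep⟩ := h t ht x hx
  have hsupp := hac _ (measurableSet_posOrthant d) (ae_restrict_mem (measurableSet_posOrthant d))
  obtain ⟨N, hN, hNm, hNs⟩ := hsmall.exists_measurable_mem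
  have hsuppN := hac N hNm hN
  set F : (ℝ × (Fin d → ℝ)) × ℝ → ℝ := fun p =>
    p.2 ^ (-lam - 1) * orbitDiff k (fun t => subordinatedP α f t p.1.2) p.2 with hF
  set c := 1 / ∫ u in Ioi (0 : ℝ), u ^ (-lam - 1) * (Real.exp (-u) - 1) ^ k with hc
  set g : (Fin d → ℝ) → ℝ := fun y =>
    c * ∫ s in Ioi 0, s ^ (-lam - 1) * orbitDiff k (fun t => subordinatedP α f t y) s with hg
  have heq : ∀ y ∈ posOrthant d, ∀ s, 0 < s →
      orbitDiff k (fun t => plP d α t f y) s = orbitDiff k (fun t => subordinatedP α f t y) s :=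
    fun y hy s hs => orbitDiff_congr (fun t ht => plP_eq_subordinatedP hα hf hM ht hy) hs.le
  have hDg : ∀ y ∈ posOrthant d, besselLaguerreFracDerivK d α lam k f y = g y := fun y hy => by
    have : ∫ s in Ioi 0, s ^ (-lam - 1) * orbitDiff k (fun t => plP d α t f y) s =
        ∫ s in Ioi 0, s ^ (-lam - 1) * orbitDiff k (fun t => subordinatedP α f t y) s :=
      setIntegral_congr_fun measurableSet_Ioi fun s hs => by
        simp only [heq y hy s hs]
    simp only [hg]
    rw [← this]
    rfl
  have hgm : Measurable g := by
    have hm : Measurable fun p : (Fin d → ℝ) × ℝ =>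
        p.2 ^ (-lam - 1) * orbitDiff k (fun t => subordinatedP α f t p.1) p.2 :=
      Measurable.mul (by fun_prop)
        ((measurable_orbitDiff_subordinatedP α hf k).comp measurable_swap)
    exact (hm.stronglyMeasurable.integral_prod_right'
      (ν := volume.restrict (Ioi 0))).measurable.const_mul c
  have hFm : Measurable F :=
    Measurable.mul (by fun_prop) ((measurable_orbitDiff_subordinatedP α hf k).comp
      (f := fun p : (ℝ × (Fin d → ℝ)) × ℝ => (p.2, p.1.2)) (by fun_prop))
  have hbound : ∀ᵐ q ∂ρ, ∀ s, 0 < s →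
      |F (q, s)| ≤ powerMajorant 1 a (γ - lam - 1) b (-lam - 1) s := by
    filter_upwards [hsupp, hsuppN] with q hq hqN s hs
    simp only [hF]
    rw [← heq q.2 hq s hs]
    exact abs_rpow_mul_le_powerMajorant hs (fun _ => hNs _ hqN s hs) fun _ => hlarge _ hq s hs
  have hev : (fun t => plP d α t (besselLaguerreFracDerivK d α lam k f) x) =ᶠ[𝓝 t]
      fun t => plP d α t g x :=
    Eventually.of_forall fun r => plP_congr hDg r hx
  rw [hev.iteratedDeriv_eq, hrep g B hgm fun y hy => by rw [← hDg y hy]; exact hB y hy]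
  calc ∫ q, w q * g q.2 ∂ρ = c * ∫ q, w q * (∫ s in Ioi 0, F (q, s)) ∂ρ := by
        rw [← integral_const_mul]
        exact integral_congr_ae (ae_of_all _ fun q => by simp only [hg, hF]; ring)
    _ = c * ∫ s in Ioi 0, ∫ q, w q * F (q, s) ∂ρ := by
        rw [integral_mul_setIntegral_swap hw hw1 hFm
          (integrableOn_powerMajorant a b one_pos (by linarith) (by linarith)).1 hbound]
    _ = _ := by
        congr 1
        refine setIntegral_congr_fun measurableSet_Ioi fun s hs => ?_
        rw [← integral_mul_orbitDiff_subordinatedP hα hf hM hw hw1 hsupp ht hx hrep k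
          (le_of_lt hs), ← integral_const_mul]
        exact integral_congr_ae (ae_of_all _ fun q => by simp only [hF]; ring)

theorem PoissonLipschitz.exists_besselLaguerreFracDerivK_le {d : ℕ} {α : Fin d → ℝ}
    (hα : ∀ j, -1 < α j) {lam β : ℝ} {k n : ℕ} (hlam : 0 < lam) (hlamβ : lam < β) (hk : 1 ≤ k)
    (hkn : k ≤ n) (hlamk : lam < k) (hklam : (k : ℝ) - 1 ≤ lam) (hβ : β ≤ n) :
    ∃ C > 0, ∀ (f : (Fin d → ℝ) → ℝ) (M A : ℝ), PoissonLipschitz α β n f M A →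
      (∀ x ∈ posOrthant d, |besselLaguerreFracDerivK d α lam k f x| ≤ C * (M + A)) ∧
      ∀ t : ℝ, 0 < t → t ≤ 1 → ∀ x ∈ posOrthant d,
        |iteratedDeriv n (fun u => plP d α u (besselLaguerreFracDerivK d α lam k f) x) t| ≤
          C * (M + A) * t ^ (β - lam - n) := by
  obtain ⟨γ, hγ1, hγ2⟩ := exists_between (lt_min hlamβ hlamk)
  have hγlam : 0 < γ - lam := by linarith
  obtain ⟨C₁, hC₁, h₁⟩ := exists_abs_orbitDiff_plP_add_le hα hk hkn
    (hγ2.trans_le (min_le_right _ _)) (by linarith) (hγ2.trans_le (min_le_left _ _)).le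
  obtain ⟨C₂, hC₂, h₂⟩ := exists_abs_integral_orbitDiff_iteratedDeriv_le hα hlam hlamk hβ
  set c := 1 / ∫ u in Ioi (0 : ℝ), u ^ (-lam - 1) * (Real.exp (-u) - 1) ^ k with hc
  set D₁ := |c| * (C₁ / (γ - lam) + 2 ^ k / lam) with hD₁
  have hD₁0 : 0 ≤ D₁ := by positivity
  refine ⟨D₁ + |c| * C₂ + 1, by positivity, fun f M A hf => ?_⟩
  have hM := hf.nonneg_bound
  have hA := hf.nonneg_const
  obtain ⟨e, he, he0⟩ := h₁ f M A hf
  have hlarge : ∀ x ∈ posOrthant d, ∀ s, 0 < s →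
      |orbitDiff k (fun t => plP d α t f x) s| ≤ 2 ^ k * M := fun x hx s hs =>
    abs_orbitDiff_plP_le hα hf.measurable hf.bound k hx hs.le
  have hbound : ∀ x ∈ posOrthant d,
      |besselLaguerreFracDerivK d α lam k f x| ≤ D₁ * (M + A) := fun x hx => by
    have h := abs_integral_rpow_mul_le hlam hγ1 (he x hx) (hlarge x hx)
    calc |besselLaguerreFracDerivK d α lam k f x|
        = |c| * |∫ s in Ioi 0, s ^ (-lam - 1) * orbitDiff k (fun t => plP d α t f x) s| :=
          abs_mul _ _
      _ ≤ |c| * (C₁ * (M + A) / (γ - lam) + 2 ^ k * (M + A) / lam) := by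
          refine mul_le_mul_of_nonneg_left (h.trans ?_) (abs_nonneg c)
          gcongr
          linarith
      _ = D₁ * (M + A) := by rw [hD₁]; ring
  refine ⟨fun x hx => (hbound x hx).trans ?_, fun t ht ht1 x hx => ?_⟩
  · have : 0 ≤ |c| * C₂ := by positivity
    gcongr
    linarith
  · have hsmall : ∀ᵐ x ∂volume.restrict (posOrthant d), ∀ s, 0 < s →
        |orbitDiff k (fun t => plP d α t f x) s| ≤ C₁ * (M + A) * s ^ γ := by
      filter_upwards [he0, ae_restrict_mem (measurableSet_posOrthant d)] with x hx hxp s hs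
      simpa [hx] using he x hxp s hs
    rw [iteratedDeriv_plP_besselLaguerreFracDerivK hα hlam hγ1 hf.measurable hf.bound hbound
      hsmall hlarge n ht hx, abs_mul]
    calc _ ≤ |c| * (C₂ * A * t ^ (β - lam - n)) :=
          mul_le_mul_of_nonneg_left (h₂ f M A hf x hx t ht ht1) (abs_nonneg c)
      _ = |c| * C₂ * A * t ^ (β - lam - n) := by ring
      _ ≤ (D₁ + |c| * C₂ + 1) * (M + A) * t ^ (β - lam - n) := by
          gcongr
          · linarith
          · linarith

end

theorem besselLaguerreFracDerivK_bounded_on_lipschitz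
    (d : ℕ) (hd : 1 ≤ d) (α : Fin d → ℝ) (hα : ∀ j, -(1 / 2 : ℝ) < α j)
    (lam β : ℝ) (hlam : 1 ≤ lam) (hlamβ : lam < β) :
    ∃ C > 0, ∀ (f : (Fin d → ℝ) → ℝ) (M A : ℝ), Measurable f → (∀ y, |f y| ≤ M) →
      (∀ t > (0 : ℝ), ∀ x ∈ posOrthant d,
        |iteratedDeriv (⌊β⌋₊ + 1) (fun u => plP d α u f x) t| ≤
          A * t ^ (β - ((⌊β⌋₊ : ℝ) + 1))) →
      (∀ x ∈ posOrthant d,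
        |besselLaguerreFracDerivK d α lam (⌊lam⌋₊ + 1) f x| ≤ C * (M + A)) ∧
      (∀ t : ℝ, 0 < t → t < 1 → ∀ x ∈ posOrthant d,
        |iteratedDeriv (⌊β⌋₊ + 1)
            (fun u => plP d α u (besselLaguerreFracDerivK d α lam (⌊lam⌋₊ + 1) f) x) t| ≤
          C * (M + A) * t ^ (β - lam - ((⌊β⌋₊ : ℝ) + 1))) := by
  have hα' : ∀ j, -1 < α j := fun j => by linarith [hα j]
  have hlam0 : 0 < lam := by linarith
  have hlamk : lam < ((⌊lam⌋₊ + 1 : ℕ) : ℝ) := by exact_mod_cast Nat.lt_floor_add_one lam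
  have hklam : ((⌊lam⌋₊ + 1 : ℕ) : ℝ) - 1 ≤ lam := by simpa using Nat.floor_le hlam0.le
  have hβn : β ≤ ((⌊β⌋₊ + 1 : ℕ) : ℝ) := by exact_mod_cast (Nat.lt_floor_add_one β).le
  have hkn : ⌊lam⌋₊ + 1 ≤ ⌊β⌋₊ + 1 := Nat.succ_le_succ (Nat.floor_le_floor hlamβ.le)
  obtain ⟨C, hC, h⟩ := PoissonLipschitz.exists_besselLaguerreFracDerivK_le hα' hlam0 hlamβ
    (Nat.le_add_left 1 _) hkn hlamk hklam hβn
  refine ⟨C, hC, fun f M A hf hM hA => ?_⟩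
  obtain ⟨h1, h2⟩ := h f M A ⟨hf, fun y _ => hM y, by push_cast; exact hA⟩
  push_cast at h2
  exact ⟨h1, fun t ht ht1 => h2 t ht ht1.le⟩
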